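/- arXiv:2003.03214 — 2 statements merged into one kernel-verified Lean document; each statement's English description precedes it below -/
import Mathlib

section
/- There exists β₀ > 2 such that for every β > β₀ there is a constant L = L(β) with the following property: for every m ∈ ℕ there exists an L-bi-Lipschitz homeomorphism F̂ : R_{m,13} → R_{m,13} such that (i) F̂(x) = x for every x ∈ ∂R_{m,13}; (ii) F̂(x₁,x₂,x₃,x₄) = (x₁,x₂,x₃,−x₄) for every x ∈ K_{B,m} ∩ ([−2m−3,2m+3]^3 × [−3,3]); (iii) F̂(x + n) = F̂(x) + n for every x ∈ Q(0,1) and every n = (2n₁,2n₂,2n₃,0) with n₁,n₂,n₃ ∈ {−m,…,m}; (iv) for every such n, D₄F̂(x + n) = −e₄ for almost every x ∈ U_2^3 × ([−3,3] \ [−1,1]), and D₁F̂(x + (0,2n₂,2n₃,0)) = e₁ for almost every x ∈ ([−2m−3,−2m−1] ∪ [2m+1,2m+3]) × U_1^3, with the analogous identities in the second and third coordinates. -/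
noncomputable section
open MeasureTheory Set Filter

/-- `ℝ⁴` as Euclidean space. -/
abbrev E4 : Type := EuclideanSpace ℝ (Fin 4)

/-- The open cube `Q(0,1) = (-1,1)⁴`. -/
def unitCubeO : Set E4 := {x | ∀ i, x i ∈ Set.Ioo (-1 : ℝ) 1}

/-- The box `R_{m,t} = [-2m-5, 2m+5]³ × [-1-t, 1+t]`. -/
def Rbox (m : ℕ) (t : ℝ) : Set E4 :=
  {x | |x 0| ≤ 2 * (m : ℝ) + 5 ∧ |x 1| ≤ 2 * (m : ℝ) + 5 ∧ |x 2| ≤ 2 * (m : ℝ) + 5 ∧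
    |x 3| ≤ 1 + t}

/-- The sequence `r_k = 2^{-k(β+1)}` defining the thin Cantor-type set `C_B`. -/
def rB (β : ℝ) (k : ℕ) : ℝ := (2 : ℝ) ^ (-(β + 1) * (k : ℝ))

/-- One-dimensional `k`-th generation `U_k^1 ⊆ ℝ` of the Cantor-type construction
for a sequence `s`. -/
def cantorU1 (s : ℕ → ℝ) (k : ℕ) : Set ℝ :=
  ⋃ (w : Fin k → ℝ) (_ : ∀ j, w j = 1 ∨ w j = -1),
    {t | |t - 2⁻¹ * ∑ j : Fin k, s j.1 * w j| < s k}

/-- One-dimensional Cantor-type set `C(1) ⊆ ℝ` for a sequence `s`. -/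
def cantorTypeSet1 (s : ℕ → ℝ) : Set ℝ :=
  ⋂ (k : ℕ) (_ : 1 ≤ k), cantorU1 s k

/-- The translation vector `(2n₁, 2n₂, 2n₃, 0)`. -/
def tr (n₁ n₂ n₃ : ℤ) : E4 :=
  (2 * (n₁ : ℝ)) • EuclideanSpace.single 0 (1 : ℝ) +
  (2 * (n₂ : ℝ)) • EuclideanSpace.single 1 (1 : ℝ) +
  (2 * (n₃ : ℝ)) • EuclideanSpace.single 2 (1 : ℝ)

/-- `K_{B,m}`: all lines parallel to the coordinate axes through the translated
copies of the Cantor set `C_B(4)` (the latter being the product of four copies of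
its one-dimensional version). -/
def KBm (β : ℝ) (m : ℕ) : Set E4 :=
  {x | ∃ n₁ n₂ n₃ : ℤ, |n₁| ≤ (m : ℤ) ∧ |n₂| ≤ (m : ℤ) ∧ |n₃| ≤ (m : ℤ) ∧
    ∃ (c : E4) (i : Fin 4) (t : ℝ),
      (∀ j, c j ∈ cantorTypeSet1 (rB β)) ∧
      x = c + tr n₁ n₂ n₃ + t • EuclideanSpace.single i (1 : ℝ)}

/-- The reflection `(x₁,x₂,x₃,x₄) ↦ (x₁,x₂,x₃,−x₄)`. -/
def reflect (x : E4) : E4 := x - (2 * x 3) • EuclideanSpace.single 3 (1 : ℝ)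

/-!
The lines of the grid point in only four directions, and two points of the Cantor set differ by
nearly a power of `q = 2 ^ (-(β + 1))`. Along a direction `(a, 1)` whose entries are not in such
ratios, two points of the grid therefore never project close together in `ℝ³` unless they are
close themselves: in the coordinates `p = x - t a` the grid lies on a Lipschitz graph `t = φ p`.
Subtracting `φ` from the height puts the grid at height `0`, the shear `p ↦ p - 2 t a` fixes the
points of height `0`, and subtracting `φ` again and shearing back turns the height `φ` into `-φ`
at the same horizontal position: this is the reflection on the grid. Bounding `φ` by a cutoff in
which it is `4/5`-Lipschitz in the height, and folding the lattice cells onto one cell, gives the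
boundary condition and periodicity. The graph is extended so that `φ` is affine along `a` above
the cubes of the second generation, where the composition then has vertical derivative `-e₄`.
-/

section VerticalShift

open scoped NNReal

variable {α : Type*}

/-- The map of `α × ℝ` lowering the height of `(p, t)` by `g p t`. -/
def verticalShift (g : α → ℝ → ℝ) (v : α × ℝ) : α × ℝ := (v.1, v.2 - g v.1 v.2)

variable {g : α → ℝ → ℝ} {M c : ℝ≥0}

lemma surjective_verticalShift (hc₁ : c < 1) (hc : ∀ p, LipschitzWith c (g p)) :
    Function.Surjective (verticalShift g) := by
  rintro ⟨p, s⟩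
  have hcontr : ContractingWith c fun t => s + g p t :=
    ⟨hc₁, by simpa using (LipschitzWith.const s).add (hc p)⟩
  have hfix := hcontr.fixedPoint_isFixedPt
  refine ⟨(p, hcontr.fixedPoint _), Prod.ext rfl ?_⟩
  exact sub_eq_iff_eq_add.2 hfix.symm

variable [PseudoMetricSpace α]

lemma lipschitzWith_verticalShift (hM : ∀ t, LipschitzWith M fun p => g p t)
    (hc : ∀ p, LipschitzWith c (g p)) :
    LipschitzWith (max 1 (1 + (M + c))) (verticalShift g) :=
  LipschitzWith.prod_fst.prodMk (LipschitzWith.prod_snd.sub (LipschitzWith.uncurry hM hc))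

lemma antilipschitzWith_verticalShift (hc₁ : c < 1) (hM : ∀ t, LipschitzWith M fun p => g p t)
    (hc : ∀ p, LipschitzWith c (g p)) :
    AntilipschitzWith ((1 + M) / (1 - c)) (verticalShift g) := by
  refine AntilipschitzWith.of_le_mul_dist fun v w => ?_
  set D := dist (verticalShift g v) (verticalShift g w)
  have hc_pos : 0 < 1 - (c : ℝ) := sub_pos.2 (by exact_mod_cast hc₁)
  have hD : 0 ≤ D := dist_nonneg
  have h_base : dist v.1 w.1 ≤ D := le_max_left _ _
  have h_height : |v.2 - g v.1 v.2 - (w.2 - g w.1 w.2)| ≤ D := le_max_right _ _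
  have h_M : |g v.1 v.2 - g w.1 v.2| ≤ M * dist v.1 w.1 := (hM v.2).dist_le_mul _ _
  have h_c : |g w.1 v.2 - g w.1 w.2| ≤ c * |v.2 - w.2| := (hc w.1).dist_le_mul _ _
  rw [NNReal.coe_div, NNReal.coe_sub hc₁.le, NNReal.coe_add, NNReal.coe_one, div_mul_eq_mul_div,
    le_div_iff₀ hc_pos, Prod.dist_eq, max_mul_of_nonneg _ _ hc_pos.le]
  refine max_le ?_ ?_
  · nlinarith [c.2, M.2]
  · have h_snd : |v.2 - w.2| ≤ D + M * D + c * |v.2 - w.2| := by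
      calc |v.2 - w.2| = |(v.2 - g v.1 v.2 - (w.2 - g w.1 w.2)) + (g v.1 v.2 - g w.1 v.2)
            + (g w.1 v.2 - g w.1 w.2)| := by congr 1; ring
        _ ≤ D + M * D + c * |v.2 - w.2| := by
          refine (abs_add_three _ _ _).trans ?_
          gcongr
          exact h_M.trans (by gcongr)
    rw [Real.dist_eq]
    linarith

end VerticalShift

section SkewReflection

open scoped NNReal

variable {E : Type*} [NormedAddCommGroup E] [NormedSpace ℝ E]

/-- The shear `(p, t) ↦ (p - t • a, t)` of `E × ℝ`, which makes the direction `(a, 1)` vertical. -/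
def shear (a : E) : (E × ℝ) ≃L[ℝ] E × ℝ :=
  ContinuousLinearEquiv.equivOfInverse
    ((ContinuousLinearMap.fst ℝ E ℝ - (ContinuousLinearMap.snd ℝ E ℝ).smulRight a).prod
      (ContinuousLinearMap.snd ℝ E ℝ))
    ((ContinuousLinearMap.fst ℝ E ℝ + (ContinuousLinearMap.snd ℝ E ℝ).smulRight a).prod
      (ContinuousLinearMap.snd ℝ E ℝ))
    (fun v => by simp) (fun v => by simp)

@[simp]
lemma shear_apply (a : E) (v : E × ℝ) : shear a v = (v.1 - v.2 • a, v.2) := rfl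

/-- If the graph of `φ` over the hyperplane of height `0`, seen along the direction `(a, 1)`, is
`G`, then for `g p t = φ p` this map reflects `G` in that hyperplane: the first vertical shift
flattens `G`, the shear by `-2 • a` leaves the flattened `G` fixed, and the second vertical shift
unfolds it on the other side. -/
def skewReflection (a : E) (g : E → ℝ → ℝ) : E × ℝ → E × ℝ :=
  shear a ∘ verticalShift g ∘ shear (-(2 : ℝ) • a) ∘ verticalShift g ∘ shear a

variable {a : E} {g : E → ℝ → ℝ}

lemma skewReflection_apply (v : E × ℝ) {p₁ p₂ : E} {t₁ t₂ : ℝ} (hp₁ : p₁ = v.1 - v.2 • a)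
    (ht₁ : t₁ = v.2 - g p₁ v.2) (hp₂ : p₂ = p₁ + (2 * t₁) • a) (ht₂ : t₂ = t₁ - g p₂ t₁) :
    skewReflection a g v = (p₂ - t₂ • a, t₂) := by
  subst hp₁
  have hp : v.1 - v.2 • a - t₁ • (-(2 : ℝ) • a) = p₂ := by rw [hp₂]; module
  simp only [skewReflection, Function.comp_apply, shear_apply, verticalShift, ← ht₁, hp, ← ht₂]

lemma skewReflection_of_affine {x : E} {t h : ℝ} (h₁ : g (x - t • a) t = h + t)
    (h₂ : g (x - (t + 2 * h) • a) (-h) = h + (t + 2 * h)) :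
    skewReflection a g (x, t) = (x + (2 * h) • a, -t - 4 * h) := by
  have hp : x - (t + 2 * h) • a = x - t • a + (2 * -h) • a := by module
  rw [skewReflection_apply (x, t) rfl (t₁ := -h) (by rw [h₁]; ring) hp rfl, h₂]
  congr 1
  · module
  · ring

lemma skewReflection_eq_self {v : E × ℝ} (h₁ : g (v.1 - v.2 • a) v.2 = 0)
    (h₂ : g (v.1 + v.2 • a) v.2 = 0) : skewReflection a g v = v := by
  rw [skewReflection_apply v rfl (by rw [h₁, sub_zero]) (p₂ := v.1 + v.2 • a) (by module)
    (by rw [h₂, sub_zero]), add_sub_cancel_right]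

lemma skewReflection_add_of_periodic {v : E × ℝ} {w : E} {B : ℝ} (hB : ∀ p t, |g p t| ≤ B)
    (hw : ∀ p t, ‖p - v.1‖ ≤ (3 * |v.2| + 2 * B) * ‖a‖ → |t| ≤ |v.2| + B → g (p + w) t = g p t) :
    skewReflection a g (v + (w, 0)) = skewReflection a g v + (w, 0) := by
  have hB₀ : 0 ≤ B := (abs_nonneg _).trans (hB 0 0)
  set p₁ := v.1 - v.2 • a with hp₁
  set t₁ := v.2 - g p₁ v.2 with ht₁
  set p₂ := p₁ + (2 * t₁) • a with hp₂
  have ht₁_le : |t₁| ≤ |v.2| + B := (abs_sub _ _).trans (by gcongr; exact hB _ _)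
  have g_first : g (p₁ + w) v.2 = g p₁ v.2 := by
    refine hw _ _ ?_ (by linarith)
    rw [hp₁, sub_sub_cancel_left, norm_neg, norm_smul, Real.norm_eq_abs]
    gcongr
    linarith [abs_nonneg v.2]
  have g_second : g (p₂ + w) t₁ = g p₂ t₁ := by
    refine hw _ _ ?_ ht₁_le
    rw [show p₂ - v.1 = (2 * t₁ - v.2) • a by rw [hp₂, hp₁]; module, norm_smul, Real.norm_eq_abs]
    gcongr
    have : |2 * t₁| = 2 * |t₁| := by rw [abs_mul, abs_two]
    linarith [abs_sub (2 * t₁) v.2]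
  rw [skewReflection_apply v hp₁ ht₁ hp₂ rfl,
    skewReflection_apply (v + (w, 0)) (p₁ := p₁ + w) (t₁ := t₁) (p₂ := p₂ + w)
      (t₂ := t₁ - g p₂ t₁)
      (by rw [hp₁, Prod.fst_add, Prod.snd_add, add_zero]; abel)
      (by rw [Prod.snd_add, add_zero, g_first]) (by rw [hp₂]; abel) (by rw [g_second])]
  ext1
  · simp only [Prod.fst_add]; abel
  · simp only [Prod.snd_add, add_zero]

lemma surjective_skewReflection {c : ℝ≥0} (hc₁ : c < 1) (hc : ∀ p, LipschitzWith c (g p)) :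
    Function.Surjective (skewReflection a g) :=
  have hs := surjective_verticalShift hc₁ hc
  (shear a).surjective.comp (hs.comp ((shear _).surjective.comp (hs.comp (shear a).surjective)))

lemma exists_lipschitzWith_skewReflection (a : E) (M c : ℝ≥0) :
    ∃ K : ℝ≥0, ∀ g : E → ℝ → ℝ, (∀ t, LipschitzWith M fun p => g p t) →
      (∀ p, LipschitzWith c (g p)) → LipschitzWith K (skewReflection a g) :=
  ⟨_, fun _ hM hc =>
    have hl := lipschitzWith_verticalShift hM hc
    (shear a).lipschitz.comp (hl.comp ((shear _).lipschitz.comp (hl.comp (shear a).lipschitz)))⟩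

lemma exists_antilipschitzWith_skewReflection (a : E) (M : ℝ≥0) {c : ℝ≥0} (hc₁ : c < 1) :
    ∃ K : ℝ≥0, ∀ g : E → ℝ → ℝ, (∀ t, LipschitzWith M fun p => g p t) →
      (∀ p, LipschitzWith c (g p)) → AntilipschitzWith K (skewReflection a g) :=
  ⟨_, fun _ hM hc =>
    have hl := antilipschitzWith_verticalShift hc₁ hM hc
    (shear a).antilipschitz.comp
      (hl.comp ((shear _).antilipschitz.comp (hl.comp (shear a).antilipschitz)))⟩

end SkewReflection

section GeometricCantor

/-- The Cantor-type set with ratio `q`, that is, corresponding to the sequence `q ^ k`. -/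
def geomCantor (q : ℝ) : Set ℝ := cantorTypeSet1 (fun k => q ^ k)

lemma rB_eq_pow (β : ℝ) : rB β = fun k => ((2 : ℝ) ^ (-(β + 1))) ^ k := by
  ext k
  rw [rB, Real.rpow_mul two_pos.le, Real.rpow_natCast]

variable {q x y : ℝ} {N : ℕ}

lemma mem_cantorU1_zero (s : ℕ → ℝ) : x ∈ cantorU1 s 0 ↔ |x| < s 0 := by
  simp [cantorU1]

lemma mem_cantorU1_pow_succ (hq : 0 < q) : x ∈ cantorU1 (fun k => q ^ k) (N + 1) ↔
    ∃ ε : ℝ, (ε = 1 ∨ ε = -1) ∧ ∃ y ∈ cantorU1 (fun k => q ^ k) N, x = ε / 2 + q * y := by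
  have rescale (ε σ : ℝ) : |x - 2⁻¹ * (ε + q * σ)| < q ^ (N + 1) ↔
      |(x - ε / 2) / q - 2⁻¹ * σ| < q ^ N := by
    rw [show x - 2⁻¹ * (ε + q * σ) = q * ((x - ε / 2) / q - 2⁻¹ * σ) by field_simp; ring,
      abs_mul, abs_of_pos hq, pow_succ', mul_lt_mul_iff_right₀ hq]
  have sum_succ (w : Fin (N + 1) → ℝ) : ∑ j : Fin (N + 1), q ^ (j : ℕ) * w j =
      w 0 + q * ∑ j : Fin N, q ^ (j : ℕ) * w j.succ := by
    simp [Fin.sum_univ_succ, Finset.mul_sum, pow_succ', mul_assoc]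
  simp only [cantorU1, mem_iUnion, mem_ofPred_eq, exists_prop, sum_succ, rescale]
  constructor
  · rintro ⟨w, hw, h⟩
    exact ⟨w 0, hw 0, _, ⟨fun j => w j.succ, fun j => hw _, h⟩, by field_simp; ring⟩
  · rintro ⟨ε, hε, y, ⟨w, hw, h⟩, rfl⟩
    refine ⟨Fin.cons ε w, Fin.cases hε hw, ?_⟩
    simpa [hq.ne'] using h

lemma abs_lt_one_of_mem_cantorU1_pow (hq : 0 < q) (hq' : q < 1 / 2)
    (hx : x ∈ cantorU1 (fun k => q ^ k) N) : |x| < 1 := by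
  induction N generalizing x with
  | zero => simpa using (mem_cantorU1_zero _).1 hx
  | succ N ih =>
    obtain ⟨ε, hε, y, hy, rfl⟩ := (mem_cantorU1_pow_succ hq).1 hx
    have := abs_lt.1 (ih hy)
    rw [abs_lt]
    rcases hε with rfl | rfl <;> constructor <;> nlinarith

lemma abs_le_of_mem_cantorU1_pow_succ (hq : 0 < q) (hq' : q < 1 / 2)
    (hx : x ∈ cantorU1 (fun k => q ^ k) (N + 1)) : |x| ≤ 1 / 2 + q := by
  obtain ⟨ε, hε, y, hy, rfl⟩ := (mem_cantorU1_pow_succ hq).1 hx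
  have := abs_lt.1 (abs_lt_one_of_mem_cantorU1_pow hq hq' hy)
  rw [abs_le]
  rcases hε with rfl | rfl <;> constructor <;> nlinarith

lemma mem_geomCantor (hq : 0 < q) (hq' : q < 1 / 2) :
    x ∈ geomCantor q ↔ ∀ k, x ∈ cantorU1 (fun k => q ^ k) k := by
  simp only [geomCantor, cantorTypeSet1, mem_iInter]
  refine ⟨fun h k => ?_, fun h k _ => h k⟩
  rcases k with _ | k
  · rw [mem_cantorU1_zero, pow_zero]
    exact abs_lt_one_of_mem_cantorU1_pow hq hq' (h 1 le_rfl)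
  · exact h _ k.succ_pos

lemma mem_geomCantor_iff_exists (hq : 0 < q) (hq' : q < 1 / 2) : x ∈ geomCantor q ↔
    ∃ ε : ℝ, (ε = 1 ∨ ε = -1) ∧ ∃ y ∈ geomCantor q, x = ε / 2 + q * y := by
  simp only [mem_geomCantor hq hq']
  constructor
  · intro hx
    obtain ⟨ε, hε, y, hy, rfl⟩ := (mem_cantorU1_pow_succ hq).1 (hx 1)
    refine ⟨ε, hε, y, fun k => ?_, rfl⟩
    obtain ⟨δ, hδ, z, hz, h⟩ := (mem_cantorU1_pow_succ hq).1 (hx (k + 1))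
    have hy := abs_lt.1 (abs_lt_one_of_mem_cantorU1_pow hq hq' hy)
    have hz' := abs_lt.1 (abs_lt_one_of_mem_cantorU1_pow hq hq' hz)
    obtain rfl : ε = δ := by
      rcases hε with rfl | rfl <;> rcases hδ with rfl | rfl <;> first | rfl | nlinarith
    rwa [mul_left_cancel₀ hq.ne' (add_left_cancel h)]
  · rintro ⟨ε, hε, y, hy, rfl⟩ (_ | k)
    · rw [mem_cantorU1_zero, pow_zero]
      exact abs_lt_one_of_mem_cantorU1_pow hq hq'
        ((mem_cantorU1_pow_succ hq).2 ⟨ε, hε, y, hy 0, rfl⟩)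
    · exact (mem_cantorU1_pow_succ hq).2 ⟨ε, hε, y, hy k, rfl⟩

lemma abs_le_of_mem_geomCantor (hq : 0 < q) (hq' : q < 1 / 2) (hx : x ∈ geomCantor q) :
    |x| ≤ 1 / 2 + q :=
  abs_le_of_mem_cantorU1_pow_succ hq hq' ((mem_geomCantor hq hq').1 hx 1)

lemma geomCantor_nonempty (hq : 0 < q) (hq' : q < 1 / 2) : (geomCantor q).Nonempty := by
  set c := 1 / (2 * (1 - q)) with hc
  have hfix : c = 1 / 2 + q * c := by
    have : 1 - q ≠ 0 := by linarith
    rw [hc]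
    field_simp
    ring
  refine ⟨c, (mem_geomCantor hq hq').2 fun k => ?_⟩
  induction k with
  | zero => rw [mem_cantorU1_zero, pow_zero, abs_lt]; constructor <;> nlinarith
  | succ k ih => exact (mem_cantorU1_pow_succ hq).2 ⟨1, Or.inl rfl, c, ih, hfix⟩

lemma exists_mem_geomCantor_abs_sub_le (hq : 0 < q) (hq' : q < 1 / 2)
    (hx : x ∈ cantorU1 (fun k => q ^ k) N) : ∃ c ∈ geomCantor q, |x - c| ≤ 2 * q ^ N := by
  induction N generalizing x with
  | zero =>
    obtain ⟨c, hc⟩ := geomCantor_nonempty hq hq'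
    have h₁ := abs_lt_one_of_mem_cantorU1_pow hq hq' hx
    have h₂ := abs_lt_one_of_mem_cantorU1_pow hq hq' ((mem_geomCantor hq hq').1 hc 0)
    exact ⟨c, hc, by linarith [abs_sub x c, pow_zero q]⟩
  | succ N ih =>
    obtain ⟨ε, hε, y, hy, rfl⟩ := (mem_cantorU1_pow_succ hq).1 hx
    obtain ⟨c, hc, hyc⟩ := ih hy
    refine ⟨ε / 2 + q * c, (mem_geomCantor_iff_exists hq hq').2 ⟨ε, hε, c, hc, rfl⟩, ?_⟩
    rw [add_sub_add_left_eq_sub, ← mul_sub, abs_mul, abs_of_pos hq, pow_succ']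
    nlinarith

lemma exists_abs_abs_sub_sub_pow_le (hq : 0 < q) (hq' : q < 1 / 2) (hx : x ∈ geomCantor q)
    (hy : y ∈ geomCantor q) (hxy : x ≠ y) : ∃ k : ℕ, |(|x - y| - q ^ k)| ≤ 2 * q ^ (k + 1) := by
  obtain ⟨N, hN⟩ := exists_pow_lt_of_lt_one (half_pos (abs_pos.2 (sub_ne_zero.2 hxy)))
    (show q < 1 by linarith)
  clear hxy
  have bound {z : ℝ} (hz : z ∈ geomCantor q) : |z| < 1 :=
    abs_lt_one_of_mem_cantorU1_pow hq hq' ((mem_geomCantor hq hq').1 hz 0)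
  induction N generalizing x y with
  | zero => linarith [abs_sub x y, bound hx, bound hy, pow_zero q]
  | succ N ih =>
    obtain ⟨ε, hε, u, hu, rfl⟩ := (mem_geomCantor_iff_exists hq hq').1 hx
    obtain ⟨δ, hδ, v, hv, rfl⟩ := (mem_geomCantor_iff_exists hq hq').1 hy
    by_cases h : ε = δ
    · have hsub : |ε / 2 + q * u - (δ / 2 + q * v)| = q * |u - v| := by
        rw [h, add_sub_add_left_eq_sub, ← mul_sub, abs_mul, abs_of_pos hq]
      rw [hsub, pow_succ', mul_div_assoc, mul_lt_mul_iff_right₀ hq] at hN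
      obtain ⟨k, hk⟩ := ih hu hv hN
      refine ⟨k + 1, ?_⟩
      rw [hsub, pow_succ', ← mul_sub, abs_mul, abs_of_pos hq, pow_succ', mul_left_comm]
      exact mul_le_mul_of_nonneg_left hk hq.le
    · have hu := abs_lt.1 (bound hu)
      have hv := abs_lt.1 (bound hv)
      refine ⟨0, ?_⟩
      rw [zero_add, pow_zero, pow_one]
      rcases hε with rfl | rfl <;> rcases hδ with rfl | rfl
      · exact absurd rfl h
      · rw [abs_of_nonneg (a := 1 / 2 + q * u - (-1 / 2 + q * v)) (by nlinarith), abs_le]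
        constructor <;> nlinarith
      · rw [abs_of_nonpos (a := -1 / 2 + q * u - (1 / 2 + q * v)) (by nlinarith), abs_le]
        constructor <;> nlinarith
      · exact absurd rfl h

lemma abs_sub_le_or_le_abs_sub_of_mem_geomCantor (hq : 0 < q) (hq' : q ≤ 1 / 16) {x' y' : ℝ}
    (hx : x ∈ geomCantor q) (hy : y ∈ geomCantor q)
    (hx' : x' ∈ geomCantor q) (hy' : y' ∈ geomCantor q) :
    |x - y| ≤ 2 * q * |x' - y'| ∨ 3 / 4 * |x' - y'| ≤ |x - y| := by
  rcases eq_or_ne x y with rfl | hxy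
  · left; simp only [sub_self, abs_zero]; positivity
  rcases eq_or_ne x' y' with rfl | hxy'
  · right; simp
  obtain ⟨k, hk⟩ := exists_abs_abs_sub_sub_pow_le hq (by linarith) hx hy hxy
  obtain ⟨l, hl⟩ := exists_abs_abs_sub_sub_pow_le hq (by linarith) hx' hy' hxy'
  rw [pow_succ', abs_le] at hk hl
  have hqk : 0 < q ^ k := pow_pos hq k
  rcases le_or_gt k l with h | h
  · have : q ^ l ≤ q ^ k := pow_le_pow_of_le_one hq.le (by linarith) h
    right; nlinarith
  · have : q ^ k ≤ q * q ^ l := pow_succ' q l ▸ pow_le_pow_of_le_one hq.le (by linarith) h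
    left; nlinarith

end GeometricCantor

section HeightExtension

open scoped NNReal

variable {α : Type*} [PseudoMetricSpace α] {M : ℝ≥0} {K : Set (α × ℝ)} {z : α × ℝ}

/-- The set `K` is the graph of an `M`-Lipschitz function on its projection to `α`. -/
def IsLipschitzGraph (M : ℝ≥0) (K : Set (α × ℝ)) : Prop :=
  ∀ z ∈ K, ∀ w ∈ K, |z.2 - w.2| ≤ M * dist z.1 w.1

/-- A McShane extension of the function with graph `K`. Its slope `2 * M`, rather than `M`, ensures
that the infimum is not affected by the points of `K` far away from `p`. -/
def heightExtension (M : ℝ≥0) (K : Set (α × ℝ)) (p : α) : ℝ :=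
  ⨅ z : K, (z.1.2 + 2 * M * dist p z.1.1)

namespace IsLipschitzGraph

lemma sub_le (hK : IsLipschitzGraph M K) (hz : z ∈ K) {w : α × ℝ} (hw : w ∈ K) (p : α) :
    z.2 - 2 * M * dist p z.1 ≤ w.2 + 2 * M * dist p w.1 := by
  have h₁ := (le_abs_self _).trans (hK z hz w hw)
  have h₂ : M * dist z.1 w.1 ≤ M * (dist p z.1 + dist p w.1) := by
    gcongr
    exact dist_triangle_left _ _ _
  have h₃ : 0 ≤ M * dist p z.1 := by positivity
  have h₄ : 0 ≤ M * dist p w.1 := by positivity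
  linarith

lemma heightExtension_le (hK : IsLipschitzGraph M K) (hz : z ∈ K) (p : α) :
    heightExtension M K p ≤ z.2 + 2 * M * dist p z.1 :=
  ciInf_le (f := fun w : K => w.1.2 + 2 * M * dist p w.1.1)
    ⟨_, forall_mem_range.2 fun w => hK.sub_le hz w.2 p⟩ ⟨z, hz⟩

lemma heightExtension_eq (hK : IsLipschitzGraph M K) (hz : z ∈ K) :
    heightExtension M K z.1 = z.2 := by
  have : Nonempty K := ⟨⟨z, hz⟩⟩
  refine le_antisymm ?_ (le_ciInf fun w => ?_)
  · simpa using hK.heightExtension_le hz z.1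
  · simpa using hK.sub_le hz w.2 z.1

lemma lipschitzWith_heightExtension (hK : IsLipschitzGraph M K) (hne : K.Nonempty) :
    LipschitzWith (2 * M) (heightExtension M K) := by
  have := hne.to_subtype
  refine LipschitzWith.of_le_add_mul _ fun p r => sub_le_iff_le_add.1 (le_ciInf fun z => ?_)
  have := hK.heightExtension_le z.2 p
  have : 2 * M * dist p z.1.1 ≤ 2 * M * (dist p r + dist r z.1.1) := by
    gcongr
    exact dist_triangle _ _ _
  push_cast
  linarith

variable {E : Type*} [NormedAddCommGroup E] [NormedSpace ℝ E] {K : Set (E × ℝ)} {a p c : E}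
  {η η' : ℝ}

lemma abs_heightExtension_sub_smul_sub_le (hK : IsLipschitzGraph M K)
    (hc : ∀ τ : ℝ, (c - τ • a, τ) ∈ K) (τ : ℝ) :
    |heightExtension M K (p - τ • a) - τ| ≤ 2 * M * ‖p - c‖ := by
  have h := (hK.lipschitzWith_heightExtension ⟨_, hc 0⟩).dist_le_mul (p - τ • a) (c - τ • a)
  rw [hK.heightExtension_eq (hc τ), dist_sub_right, dist_eq_norm p] at h
  simpa only [NNReal.coe_mul, NNReal.coe_ofNat, Real.dist_eq] using h

lemma heightExtension_sub_smul_sub_le (hK : IsLipschitzGraph M K)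
    (hline : ∀ z ∈ K, η < |z.2| → ∀ τ : ℝ, (z.1 - τ • a, z.2 + τ) ∈ K)
    (hc : ∀ τ : ℝ, (c - τ • a, τ) ∈ K) (hη : 4 * M * ‖p - c‖ ≤ η' - η) (τ : ℝ) {σ : ℝ}
    (hσ : η' ≤ |σ|) :
    heightExtension M K (p - τ • a) - τ ≤ heightExtension M K (p - σ • a) - σ := by
  have : Nonempty K := ⟨⟨_, hc 0⟩⟩
  rw [le_sub_iff_add_le]
  refine le_ciInf fun ⟨z, hz⟩ => ?_
  rcases lt_or_ge η |z.2| with h | h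
  · have := hK.heightExtension_le (hline z hz h (τ - σ)) (p - τ • a)
    rw [dist_eq_norm, show p - τ • a - (z.1 - (τ - σ) • a) = p - σ • a - z.1 by module,
      ← dist_eq_norm] at this
    linarith
  · have h_up := (abs_le.1 (hK.abs_heightExtension_sub_smul_sub_le (p := p) hc τ)).2
    have h_dist : 0 ≤ M * dist (p - σ • a) z.1 := by positivity
    rcases le_abs'.1 hσ with hneg | hpos
    · have : 0 ≤ M * ‖p - c‖ := by positivity
      linarith [(abs_le.1 h).1]
    · have h_far := (le_abs_self _).trans (hK _ (hc σ) z hz)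
      have h_tri : M * dist (c - σ • a) z.1 ≤ M * (‖p - c‖ + dist (p - σ • a) z.1) := by
        gcongr
        rw [← dist_eq_norm, ← dist_sub_right p c (σ • a)]
        exact dist_triangle_left _ _ _
      linarith [(abs_le.1 h).2]

lemma exists_heightExtension_sub_smul_eq (hK : IsLipschitzGraph M K)
    (hline : ∀ z ∈ K, η < |z.2| → ∀ τ : ℝ, (z.1 - τ • a, z.2 + τ) ∈ K)
    (hc : ∀ τ : ℝ, (c - τ • a, τ) ∈ K) (hη : 4 * M * ‖p - c‖ ≤ η' - η) :
    ∃ h : ℝ, |h| ≤ 2 * M * ‖p - c‖ ∧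
      ∀ τ : ℝ, η' ≤ |τ| → heightExtension M K (p - τ • a) = h + τ := by
  refine ⟨_, hK.abs_heightExtension_sub_smul_sub_le hc η', fun τ hτ => ?_⟩
  have h₁ := hK.heightExtension_sub_smul_sub_le hline hc hη τ (le_abs_self η')
  have h₂ := hK.heightExtension_sub_smul_sub_le hline hc hη η' hτ
  linarith

end IsLipschitzGraph

end HeightExtension

section CantorGrid

variable {q : ℝ}

/-- The direction in which the grid of lines is projected. Its entries are spread so that no ratio
of two of them is close to a ratio of differences of points of the Cantor set. -/
def slopes : Fin 4 → ℝ := ![1 / 1024, 1 / 512, 1 / 256, 1]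

/-- The horizontal part of `slopes`, whose vertical entry is `1`. -/
def skewDirection : Fin 3 → ℝ := Fin.init slopes

lemma norm_skewDirection_le : ‖skewDirection‖ ≤ 1 / 256 := by
  refine (pi_norm_le_iff_of_nonneg (by norm_num)).2 fun j => ?_
  fin_cases j <;> simp [skewDirection, slopes, Fin.init] <;> norm_num

lemma abs_mul_skewDirection_le (t : ℝ) (j : Fin 3) : |t * skewDirection j| ≤ |t| / 256 := by
  rw [abs_mul, div_eq_mul_one_div]
  gcongr
  exact (norm_le_pi_norm skewDirection j).trans norm_skewDirection_le

lemma slopes_mem_Icc (k : Fin 4) : slopes k ∈ Icc (1 / 1024) 1 := by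
  fin_cases k <;> norm_num [slopes]

lemma slopes_le_half {k l : Fin 4} (h : k < l) : slopes k ≤ slopes l / 2 := by
  fin_cases k <;> fin_cases l <;> first | (exact absurd h (by decide)) | norm_num [slopes]

/-- The lines parallel to the coordinate axes of `ℝ³ × ℝ` through the points all of whose
coordinates are in `geomCantor q`, after the shear which makes `(skewDirection, 1)` vertical. -/
def shearedGrid (q : ℝ) : Set ((Fin 3 → ℝ) × ℝ) :=
  {v | ∃ i, ∀ j ≠ i,
    (Fin.snoc (v.1 + v.2 • skewDirection) v.2 : Fin 4 → ℝ) j ∈ geomCantor q}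

lemma shearedGrid_line {c : Fin 3 → ℝ} (hc : ∀ j, c j ∈ geomCantor q) (τ : ℝ) :
    (c - τ • skewDirection, τ) ∈ shearedGrid q := by
  refine ⟨Fin.last 3, fun j => ?_⟩
  refine Fin.lastCases (fun h => absurd rfl h) (fun j _ => ?_) j
  simpa using hc j

lemma eq_zero_of_two_coordinates (hq : 0 < q) (hq' : q ≤ 1 / 2 ^ 12) {A B x y x' y' s : ℝ}
    (hx : x ∈ geomCantor q) (hy : y ∈ geomCantor q)
    (hx' : x' ∈ geomCantor q) (hy' : y' ∈ geomCantor q)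
    (hA : 1 / 1024 ≤ A) (hAB : A ≤ B / 2) (hB : B ≤ 1)
    (h : |x - y - A * s| ≤ |s| / 2 ^ 14) (h' : |x' - y' - B * s| ≤ |s| / 2 ^ 14) : s = 0 := by
  have approx {d D : ℝ} (hD : 1 / 1024 ≤ D) (h : |d - D * s| ≤ |s| / 2 ^ 14) :
      15 / 16 * (D * |s|) ≤ |d| ∧ |d| ≤ 17 / 16 * (D * |s|) := by
    have h_abs : |D * s| = D * |s| := by rw [abs_mul, abs_of_pos (by linarith)]
    have h_le : 1 / 1024 * |s| ≤ D * |s| := by gcongr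
    have := abs_le.1 ((abs_abs_sub_abs_le_abs_sub d (D * s)).trans h)
    rw [h_abs] at this
    constructor <;> linarith
  obtain ⟨h₁, h₂⟩ := approx hA h
  obtain ⟨h₁', h₂'⟩ := approx (by linarith) h'
  have hAs : 1 / 1024 * |s| ≤ A * |s| := by gcongr
  have hABs : A * |s| ≤ B / 2 * |s| := by gcongr
  have hBs : B * |s| ≤ 1 * |s| := by gcongr
  rw [← abs_nonpos_iff]
  rcases abs_sub_le_or_le_abs_sub_of_mem_geomCantor hq (by linarith) hx hy hx' hy' with hle | hle
  · have : 2 * q * |x' - y'| ≤ 2 * (1 / 2 ^ 12) * |x' - y'| := by gcongr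
    linarith
  · linarith

lemma abs_snoc_sub_snoc_sub_le (v w : (Fin 3 → ℝ) × ℝ) (j : Fin 4) :
    |(Fin.snoc (v.1 + v.2 • skewDirection) v.2 : Fin 4 → ℝ) j -
      (Fin.snoc (w.1 + w.2 • skewDirection) w.2 : Fin 4 → ℝ) j -
      slopes j * (v.2 - w.2)| ≤ dist v.1 w.1 := by
  refine Fin.lastCases ?_ (fun j => ?_) j
  · have h_last : slopes (Fin.last 3) = 1 := rfl
    simp only [Fin.snoc_last, h_last, one_mul, sub_self, abs_zero, dist_nonneg]
  · have hj : (v.1 + v.2 • skewDirection) j - (w.1 + w.2 • skewDirection) j -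
        slopes j.castSucc * (v.2 - w.2) = v.1 j - w.1 j := by
      simp only [Pi.add_apply, Pi.smul_apply, smul_eq_mul, skewDirection, Fin.init]
      ring
    simp only [Fin.snoc_castSucc, hj]
    exact dist_le_pi_dist v.1 w.1 j

lemma isLipschitzGraph_shearedGrid (hq : 0 < q) (hq' : q ≤ 1 / 2 ^ 12) :
    IsLipschitzGraph (2 ^ 14) (shearedGrid q) := by
  rintro v ⟨i, hv⟩ w ⟨i', hw⟩
  by_contra! hlt
  push_cast at hlt
  have near (j : Fin 4) := (abs_snoc_sub_snoc_sub_le v w j).trans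
    ((lt_div_iff₀' (by norm_num : (0 : ℝ) < 2 ^ 14)).2 hlt).le
  obtain ⟨k, l, hkl, hki, hki', hli, hli'⟩ :
      ∃ k l : Fin 4, k < l ∧ k ≠ i ∧ k ≠ i' ∧ l ≠ i ∧ l ≠ i' := by
    clear * -
    decide +revert
  have h_zero : v.2 - w.2 = 0 := eq_zero_of_two_coordinates hq hq' (hv k hki) (hw k hki')
    (hv l hli) (hw l hli') (slopes_mem_Icc k).1 (slopes_le_half hkl)
    (slopes_mem_Icc l).2 (near k) (near l)
  rw [h_zero, abs_zero] at hlt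
  exact hlt.not_ge (by positivity)

lemma shearedGrid_nonempty (hq : 0 < q) (hq' : q < 1 / 2) : (shearedGrid q).Nonempty :=
  have ⟨_, hc⟩ := geomCantor_nonempty hq hq'
  ⟨_, shearedGrid_line (c := fun _ => _) (fun _ => hc) 0⟩

lemma shearedGrid_line_of_lt_abs (hq : 0 < q) (hq' : q < 1 / 2) {v : (Fin 3 → ℝ) × ℝ}
    (hv : v ∈ shearedGrid q) (hlt : 1 / 2 + q < |v.2|) (τ : ℝ) :
    (v.1 - τ • skewDirection, v.2 + τ) ∈ shearedGrid q := by
  obtain ⟨i, hi⟩ := hv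
  have hi_last : Fin.last 3 = i := by
    by_contra hne
    have := hi _ hne
    rw [Fin.snoc_last] at this
    exact hlt.not_ge (abs_le_of_mem_geomCantor hq hq' this)
  have hc (j : Fin 3) : (v.1 + v.2 • skewDirection) j ∈ geomCantor q := by
    simpa using hi j.castSucc (hi_last ▸ (Fin.castSucc_lt_last j).ne)
  convert shearedGrid_line hc (v.2 + τ) using 2
  module

/-- The function of which the sheared grid of lines is (part of) the graph. -/
def gridHeight (q : ℝ) : (Fin 3 → ℝ) → ℝ := heightExtension (2 ^ 14) (shearedGrid q)

lemma lipschitzWith_gridHeight (hq : 0 < q) (hq' : q ≤ 1 / 2 ^ 12) :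
    LipschitzWith (2 ^ 15) (gridHeight q) :=
  ((isLipschitzGraph_shearedGrid hq hq').lipschitzWith_heightExtension
    (shearedGrid_nonempty hq (by linarith))).weaken (by norm_num)

lemma gridHeight_eq (hq : 0 < q) (hq' : q ≤ 1 / 2 ^ 12) {v : (Fin 3 → ℝ) × ℝ}
    (hv : v ∈ shearedGrid q) : gridHeight q v.1 = v.2 :=
  (isLipschitzGraph_shearedGrid hq hq').heightExtension_eq hv

lemma exists_gridHeight_sub_smul_eq (hq : 0 < q) (hq' : q ≤ 1 / 2 ^ 12) {p : Fin 3 → ℝ}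
    (hp : ∀ j, p j ∈ cantorU1 (fun k => q ^ k) 2) :
    ∃ h : ℝ, |h| ≤ 1 / 100 ∧ ∀ τ : ℝ, 9 / 10 ≤ |τ| →
      gridHeight q (p - τ • skewDirection) = h + τ := by
  choose c hc hpc using fun j => exists_mem_geomCantor_abs_sub_le hq (by linarith) (hp j)
  have h_near : 2 ^ 14 * ‖p - c‖ ≤ 1 / 2 ^ 9 := by
    have hq₂ : q ^ 2 ≤ (1 / 2 ^ 12) ^ 2 := by gcongr
    have : ‖p - c‖ ≤ 2 * q ^ 2 := (pi_norm_le_iff_of_nonneg (by positivity)).2 hpc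
    linarith
  obtain ⟨h, hh, htube⟩ := (isLipschitzGraph_shearedGrid hq hq').exists_heightExtension_sub_smul_eq
    (p := p) (η' := 9 / 10) (fun v hv => shearedGrid_line_of_lt_abs hq (by linarith) hv)
    (shearedGrid_line hc) (by push_cast; linarith)
  exact ⟨h, hh.trans (by push_cast; linarith), htube⟩

end CantorGrid

section Folding

open scoped NNReal

variable {E : Type*} {b u x t : ℝ} {m : ℕ} {n : ℤ}

/-- The point of `[-b, b]` nearest to `x`, for `0 ≤ b`. -/
def clamp (b x : ℝ) : ℝ := max (-b) (min b x)

lemma abs_clamp_le (hb : 0 ≤ b) : |clamp b x| ≤ b :=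
  abs_le.2 ⟨le_max_left _ _, max_le (by linarith) (min_le_left _ _)⟩

lemma clamp_of_abs_le (h : |x| ≤ b) : clamp b x = x := by
  rw [clamp, min_eq_right (abs_le.1 h).2, max_eq_right (abs_le.1 h).1]

lemma clamp_zero_left (x : ℝ) : clamp 0 x = 0 :=
  abs_nonpos_iff.1 (abs_clamp_le le_rfl)

lemma lipschitzWith_clamp [PseudoMetricSpace E] {K K' : ℝ≥0} {f g : E → ℝ}
    (hf : LipschitzWith K f) (hg : LipschitzWith K' g) :
    LipschitzWith (max K K') fun p => clamp (f p) (g p) := by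
  have h := hf.neg.max (hf.min hg)
  rwa [max_eq_right (le_max_left K K')] at h

/-- A Lipschitz truncation of the identity, supported in the interior of the cell `[-1, 1]`. -/
def bump (u : ℝ) : ℝ := clamp (max 0 (9 / 5 - 2 * |u|)) u

lemma bump_of_abs_le (h : |u| ≤ 6 / 10) : bump u = u :=
  clamp_of_abs_le (le_max_of_le_right (by linarith))

lemma bump_eq_zero (h : 9 / 10 ≤ |u|) : bump u = 0 := by
  rw [bump, max_eq_left (by linarith), clamp_zero_left]

lemma lipschitzWith_const_mul_sub_norm [SeminormedAddCommGroup E] (C : ℝ≥0) (r : ℝ) :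
    LipschitzWith C fun p : E => C * (r - ‖p‖) := by
  refine LipschitzWith.of_le_add_mul C fun p p' => ?_
  rw [← sub_le_iff_le_add', ← mul_sub, sub_sub_sub_cancel_left]
  gcongr
  exact (norm_sub_norm_le p' p).trans_eq (by rw [← dist_eq_norm, dist_comm])

lemma lipschitzWith_bump : LipschitzWith 2 bump := by
  have h : LipschitzWith 2 fun u : ℝ => max 0 (9 / 5 - 2 * |u|) := by
    have h_eq (u : ℝ) : 9 / 5 - 2 * |u| = (2 : ℝ≥0) * (9 / 10 - ‖u‖) := by
      rw [NNReal.coe_ofNat, Real.norm_eq_abs]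
      ring
    simp_rw [h_eq]
    exact (lipschitzWith_const_mul_sub_norm 2 _).const_max 0
  exact (lipschitzWith_clamp h LipschitzWith.id).weaken (by norm_num)

lemma lipschitzWith_sum_of_pairwise_disjoint [PseudoMetricSpace E] {ι : Type*} {s : Finset ι}
    {f : ι → E → ℝ} {K : ℝ≥0} (hf : ∀ i ∈ s, LipschitzWith K (f i))
    (hd : ∀ p, ∀ i ∈ s, ∀ j ∈ s, f i p ≠ 0 → f j p ≠ 0 → i = j) :
    LipschitzWith (2 * K) fun p => ∑ i ∈ s, f i p := by
  classical
  refine LipschitzWith.of_dist_le_mul fun p p' => ?_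
  let S (p : E) : Finset ι := s.filter fun i => f i p ≠ 0
  have hS (p : E) : (S p).card ≤ 1 := Finset.card_le_one.2 fun i hi j hj =>
    hd p i (Finset.mem_filter.1 hi).1 j (Finset.mem_filter.1 hj).1 (Finset.mem_filter.1 hi).2
      (Finset.mem_filter.1 hj).2
  have h_zero : ∀ i ∈ s, i ∉ S p ∪ S p' → dist (f i p) (f i p') = 0 := by
    intro i hi hi'
    simp only [S, Finset.mem_union, Finset.mem_filter, hi, true_and, not_or, not_not] at hi'
    rw [hi'.1, hi'.2, dist_self]
  have h_sub : S p ∪ S p' ⊆ s :=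
    Finset.union_subset (Finset.filter_subset _ _) (Finset.filter_subset _ _)
  have h_card : ((S p ∪ S p').card : ℝ) ≤ 2 := by
    exact_mod_cast (Finset.card_union_le _ _).trans (add_le_add (hS p) (hS p'))
  calc dist (∑ i ∈ s, f i p) (∑ i ∈ s, f i p')
      ≤ ∑ i ∈ s, dist (f i p) (f i p') := dist_sum_sum_le _ _ _
    _ = ∑ i ∈ S p ∪ S p', dist (f i p) (f i p') := (Finset.sum_subset h_sub h_zero).symm
    _ ≤ (S p ∪ S p').card • (K * dist p p') :=
      Finset.sum_le_card_nsmul _ _ _ fun i hi => (hf i (h_sub hi)).dist_le_mul p p'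
    _ ≤ (2 * K : ℝ≥0) * dist p p' := by
      rw [nsmul_eq_mul, NNReal.coe_mul, NNReal.coe_ofNat, mul_assoc]
      gcongr

/-- The map folding the `2 * m + 1` cells `[2k - 1, 2k + 1]`, `|k| ≤ m`, onto the cell `[-1, 1]`,
and everything else to `0`. -/
def fold (m : ℕ) (t : ℝ) : ℝ := ∑ k ∈ Finset.Icc (-(m : ℤ)) m, bump (t - 2 * k)

lemma lipschitzWith_fold (m : ℕ) : LipschitzWith 4 (fold m) := by
  have h_two : (4 : ℝ≥0) = 2 * (2 * 1) := by norm_num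
  rw [h_two]
  refine lipschitzWith_sum_of_pairwise_disjoint (fun k _ => ?_) fun t k _ l _ hk hl => ?_
  · exact lipschitzWith_bump.comp (LipschitzWith.of_dist_le_mul fun t t' => by simp)
  · have hk' := lt_of_not_ge (mt bump_eq_zero hk)
    have hl' := lt_of_not_ge (mt bump_eq_zero hl)
    rw [abs_lt] at hk' hl'
    have h₁ : (k : ℝ) < l + 1 := by linarith
    have h₂ : (l : ℝ) < k + 1 := by linarith
    norm_cast at h₁ h₂
    omega

lemma fold_add_two_mul (hu : |u| ≤ 11 / 10) (hn : |n| ≤ m) : fold m (u + 2 * n) = bump u := by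
  rw [fold, Finset.sum_eq_single_of_mem n (Finset.mem_Icc.2 (abs_le.1 hn)), add_sub_cancel_right]
  intro k _ hk
  have hle : (1 : ℝ) ≤ |(n : ℝ) - k| := by exact_mod_cast Int.one_le_abs (sub_ne_zero.2 hk.symm)
  have h_tri := abs_sub_abs_le_abs_sub (2 * ((n : ℝ) - k)) (-u)
  rw [abs_mul, abs_two, abs_neg, sub_neg_eq_add] at h_tri
  refine bump_eq_zero ?_
  rw [show u + 2 * n - 2 * k = 2 * ((n : ℝ) - k) + u by ring]
  linarith

lemma fold_of_abs_le (hu : |u| ≤ 6 / 10) : fold m u = u := by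
  have h := fold_add_two_mul (m := m) (n := 0) (hu.trans (by norm_num)) (by simp)
  rwa [Int.cast_zero, mul_zero, add_zero, bump_of_abs_le hu] at h

lemma fold_eq_zero (ht : 2 * m + 9 / 10 ≤ |t|) : fold m t = 0 := by
  refine Finset.sum_eq_zero fun k hk => bump_eq_zero ?_
  have hk' : |(k : ℝ)| ≤ m := by exact_mod_cast abs_le.2 (Finset.mem_Icc.1 hk)
  have := abs_sub_abs_le_abs_sub t (2 * k)
  rw [abs_mul, abs_two] at this
  linarith

variable [SeminormedAddCommGroup E] {p : E}

/-- A cutoff function of value `4` near `[-2m-3, 2m+3]³ × [-8, 8]`, vanishing near the boundary of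
`R_{m,13}`. Its Lipschitz constant in `t` is less than `1`. -/
def cutoff (m : ℕ) (p : E) (t : ℝ) : ℝ :=
  max 0 (min 4 (min (4 / 5 * (13 - |t|)) (4 * (2 * m + 9 / 2 - ‖p‖))))

lemma cutoff_nonneg (m : ℕ) (p : E) (t : ℝ) : 0 ≤ cutoff m p t := le_max_left _ _

lemma cutoff_le (m : ℕ) (p : E) (t : ℝ) : cutoff m p t ≤ 4 :=
  max_le (by norm_num) (min_le_left _ _)

lemma cutoff_eq_four (ht : |t| ≤ 8) (hp : ‖p‖ ≤ 2 * m + 7 / 2) : cutoff m p t = 4 := by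
  rw [cutoff, min_eq_left (le_min (by linarith) (by linarith)), max_eq_right (by norm_num)]

lemma cutoff_eq_zero_of_le_abs (ht : 13 ≤ |t|) : cutoff m p t = 0 :=
  max_eq_left (min_le_of_right_le (min_le_of_left_le (by linarith)))

lemma cutoff_eq_zero_of_le_norm (hp : 2 * m + 9 / 2 ≤ ‖p‖) : cutoff m p t = 0 :=
  max_eq_left (min_le_of_right_le (min_le_of_right_le (by linarith)))

lemma lipschitzWith_cutoff_left (m : ℕ) (t : ℝ) : LipschitzWith 4 fun p : E => cutoff m p t :=
  (((lipschitzWith_const_mul_sub_norm 4 (2 * m + 9 / 2)).const_min _).const_min 4).const_max 0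

lemma lipschitzWith_cutoff_right (m : ℕ) (p : E) : LipschitzWith (4 / 5) (cutoff m p) := by
  have h : LipschitzWith (4 / 5) fun t : ℝ => 4 / 5 * (13 - |t|) := by
    simpa using lipschitzWith_const_mul_sub_norm (E := ℝ) (4 / 5) 13
  exact ((h.min_const _).const_min 4).const_max 0

end Folding

section GridReflection

open scoped NNReal

variable {q t : ℝ} {m : ℕ} {p : Fin 3 → ℝ} {v : (Fin 3 → ℝ) × ℝ}

/-- The height of the grid of lines repeated in the `(2 * m + 1)³` lattice cells, cut off so that
its reflection moves no point near the boundary of `R_{m,13}`. -/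
def foldedHeight (q : ℝ) (m : ℕ) (p : Fin 3 → ℝ) (t : ℝ) : ℝ :=
  clamp (cutoff m p t) (gridHeight q fun j => fold m (p j))

lemma abs_foldedHeight_le (q : ℝ) (m : ℕ) (p : Fin 3 → ℝ) (t : ℝ) : |foldedHeight q m p t| ≤ 4 :=
  (abs_clamp_le (cutoff_nonneg m p t)).trans (cutoff_le m p t)

lemma foldedHeight_eq_zero_of_le_abs (ht : 13 ≤ |t|) : foldedHeight q m p t = 0 := by
  rw [foldedHeight, cutoff_eq_zero_of_le_abs ht, clamp_zero_left]

lemma foldedHeight_eq_zero_of_le_norm (hp : 2 * m + 9 / 2 ≤ ‖p‖) : foldedHeight q m p t = 0 := by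
  rw [foldedHeight, cutoff_eq_zero_of_le_norm hp, clamp_zero_left]

lemma foldedHeight_eq_clamp (ht : |t| ≤ 8) (hp : ‖p‖ ≤ 2 * m + 7 / 2) :
    foldedHeight q m p t = clamp 4 (gridHeight q fun j => fold m (p j)) := by
  rw [foldedHeight, cutoff_eq_four ht hp]

lemma norm_two_mul_intCast_le {n : Fin 3 → ℤ} (hn : ∀ j, |n j| ≤ m) :
    ‖fun j => 2 * (n j : ℝ)‖ ≤ 2 * m := by
  refine (pi_norm_le_iff_of_nonneg (by positivity)).2 fun j => ?_
  have hnj : |(n j : ℝ)| ≤ m := by exact_mod_cast hn j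
  rw [Real.norm_eq_abs, abs_mul, abs_two]
  gcongr

lemma foldedHeight_add_two_mul {n : Fin 3 → ℤ} (hn : ∀ j, |n j| ≤ m) (ht : |t| ≤ 8)
    (hp : ‖p‖ ≤ 11 / 10) :
    foldedHeight q m (p + fun j => 2 * (n j : ℝ)) t = foldedHeight q m p t := by
  have hp_coord (j : Fin 3) : |p j| ≤ 11 / 10 := (norm_le_pi_norm p j).trans hp
  have h_fold (j : Fin 3) : fold m ((p + fun j => 2 * (n j : ℝ)) j) = fold m (p j) := by
    have h_zero := fold_add_two_mul (m := m) (n := 0) (hp_coord j) (by simp)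
    rw [Int.cast_zero, mul_zero, add_zero] at h_zero
    rw [h_zero, Pi.add_apply, fold_add_two_mul (hp_coord j) (hn j)]
  have h_norm : ‖p + fun j => 2 * (n j : ℝ)‖ ≤ 2 * m + 7 / 2 :=
    (norm_add_le _ _).trans (by linarith [norm_two_mul_intCast_le hn])
  rw [foldedHeight_eq_clamp ht h_norm, foldedHeight_eq_clamp ht (by linarith)]
  simp_rw [h_fold]

lemma foldedHeight_add_single {i : Fin 3} {s : ℝ} (ht : |t| ≤ 8) (hp : ‖p‖ ≤ 2 * m + 7 / 2)
    (hps : ‖p + Pi.single i s‖ ≤ 2 * m + 7 / 2) (hi : 2 * m + 9 / 10 ≤ |p i|)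
    (his : 2 * m + 9 / 10 ≤ |p i + s|) :
    foldedHeight q m (p + Pi.single i s) t = foldedHeight q m p t := by
  have h_fold (j : Fin 3) : fold m ((p + Pi.single i s : Fin 3 → ℝ) j) = fold m (p j) := by
    rcases eq_or_ne j i with rfl | hj
    · rw [Pi.add_apply, Pi.single_eq_same, fold_eq_zero hi, fold_eq_zero his]
    · rw [Pi.add_apply, Pi.single_eq_of_ne hj, add_zero]
  rw [foldedHeight_eq_clamp ht hps, foldedHeight_eq_clamp ht hp]
  simp_rw [h_fold]

lemma lipschitzWith_foldedHeight_right (q : ℝ) (m : ℕ) (p : Fin 3 → ℝ) :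
    LipschitzWith (4 / 5) (foldedHeight q m p) := by
  have h := lipschitzWith_clamp (lipschitzWith_cutoff_right m p)
    (LipschitzWith.const (gridHeight q fun j => fold m (p j)))
  rwa [max_eq_left zero_le] at h

lemma lipschitzWith_foldedHeight_left (hq : 0 < q) (hq' : q ≤ 1 / 2 ^ 12) (m : ℕ) (t : ℝ) :
    LipschitzWith (2 ^ 17) fun p => foldedHeight q m p t := by
  have h_fold : LipschitzWith 4 fun (p : Fin 3 → ℝ) j => fold m (p j) :=
    LipschitzWith.of_dist_le_mul fun p p' => (dist_pi_le_iff (by positivity)).2 fun j =>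
      ((lipschitzWith_fold m).dist_le_mul _ _).trans (by gcongr; exact dist_le_pi_dist p p' j)
  exact (lipschitzWith_clamp (lipschitzWith_cutoff_left m t)
    ((lipschitzWith_gridHeight hq hq').comp h_fold)).weaken (by norm_num)

/-- The map `F̂_{β,m}` in the coordinates of `ℝ³ × ℝ`, where `q = 2 ^ (-(β + 1))`. -/
def gridReflection (q : ℝ) (m : ℕ) : (Fin 3 → ℝ) × ℝ → (Fin 3 → ℝ) × ℝ :=
  skewReflection skewDirection (foldedHeight q m)

lemma norm_smul_skewDirection_le (t : ℝ) : ‖t • skewDirection‖ ≤ |t| / 256 := by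
  rw [norm_smul, Real.norm_eq_abs, div_eq_mul_one_div]
  gcongr
  exact norm_skewDirection_le

lemma gridReflection_eq_self (hv : 2 * m + 5 ≤ ‖v.1‖ ∨ 14 ≤ |v.2|) : gridReflection q m v = v := by
  suffices h_zero : ∀ p, ‖p - v.1‖ ≤ |v.2| / 256 → foldedHeight q m p v.2 = 0 from
    skewReflection_eq_self
      (h_zero _ (by rw [sub_sub_cancel_left, norm_neg]; exact norm_smul_skewDirection_le _))
      (h_zero _ (by rw [add_sub_cancel_left]; exact norm_smul_skewDirection_le _))
  intro p hp
  rcases le_or_gt 13 |v.2| with h₂ | h₂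
  · exact foldedHeight_eq_zero_of_le_abs h₂
  · have h₁ := hv.resolve_right (by linarith)
    refine foldedHeight_eq_zero_of_le_norm ?_
    linarith [norm_sub_norm_le v.1 p, norm_sub_rev v.1 p]

lemma gridReflection_eq_of_mem_shearedGrid (hq : 0 < q) (hq' : q ≤ 1 / 2 ^ 12)
    (h₁ : ‖v.1‖ ≤ 2 * m + 3) (h₂ : |v.2| ≤ 3)
    (hv : ((fun j => fold m ((v.1 - v.2 • skewDirection) j), v.2) : (Fin 3 → ℝ) × ℝ) ∈
      shearedGrid q) :
    gridReflection q m v = (v.1, -v.2) := by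
  have hp : ‖v.1 - v.2 • skewDirection‖ ≤ 2 * m + 7 / 2 := by
    linarith [norm_sub_le v.1 (v.2 • skewDirection), norm_smul_skewDirection_le v.2]
  have h_height {t : ℝ} (ht : |t| ≤ 8) :
      foldedHeight q m (v.1 - v.2 • skewDirection) t = v.2 := by
    rw [foldedHeight_eq_clamp ht hp, gridHeight_eq hq hq' hv, clamp_of_abs_le (by linarith)]
  have h := skewReflection_of_affine (x := v.1) (t := v.2) (h := 0)
    (by rw [zero_add]; exact h_height (by linarith))
    (by rw [mul_zero, add_zero, zero_add]; exact h_height (by norm_num))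
  rwa [mul_zero, zero_smul, add_zero, mul_zero, sub_zero] at h

lemma gridReflection_add_two_mul {n : Fin 3 → ℤ} (hn : ∀ j, |n j| ≤ m) (h₁ : ‖v.1‖ ≤ 1)
    (h₂ : |v.2| ≤ 4) :
    gridReflection q m (v + (fun j => 2 * (n j : ℝ), 0)) =
      gridReflection q m v + (fun j => 2 * (n j : ℝ), 0) := by
  refine skewReflection_add_of_periodic (abs_foldedHeight_le q m) fun p t hp ht =>
    foldedHeight_add_two_mul hn (by linarith) ?_
  have : (3 * |v.2| + 2 * 4) * ‖skewDirection‖ ≤ (3 * 4 + 2 * 4) * (1 / 256) := by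
    gcongr
    exact norm_skewDirection_le
  linarith [norm_sub_norm_le p v.1]

lemma gridReflection_add_single {i : Fin 3} {s : ℝ} (h₁ : ‖v.1‖ ≤ 2 * m + 3) (h₂ : |v.2| ≤ 1)
    (hi : 2 * m + 1 ≤ |v.1 i|) (hs : |s| ≤ 1 / 100) :
    gridReflection q m (v + (Pi.single i s, 0)) = gridReflection q m v + (Pi.single i s, 0) := by
  refine skewReflection_add_of_periodic (abs_foldedHeight_le q m) fun p t hp ht => ?_
  have h_radius : (3 * |v.2| + 2 * 4) * ‖skewDirection‖ ≤ (3 * 1 + 2 * 4) * (1 / 256) := by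
    gcongr
    exact norm_skewDirection_le
  have h_norm := norm_sub_norm_le p v.1
  have h_coord : |v.1 i| - |p i| ≤ ‖p - v.1‖ :=
    (abs_sub_abs_le_abs_sub _ _).trans
      (by rw [abs_sub_comm]; exact norm_le_pi_norm (p - v.1) i)
  have h_add := norm_add_le p (Pi.single i s)
  rw [Pi.norm_single, Real.norm_eq_abs] at h_add
  have h_add_coord := abs_sub_abs_le_abs_add (p i) s
  exact foldedHeight_add_single (by linarith) (by linarith) (by linarith) (by linarith)
    (by linarith)

lemma exists_gridReflection_eq_of_mem_cantorU1 (hq : 0 < q) (hq' : q ≤ 1 / 2 ^ 12) (m : ℕ)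
    {x : Fin 3 → ℝ} (hx : ∀ j, x j ∈ cantorU1 (fun k => q ^ k) 2) :
    ∃ h : ℝ, ∀ τ : ℝ, |τ| ∈ Ioo (95 / 100) (305 / 100) →
      gridReflection q m (x, τ) = (x + (2 * h) • skewDirection, -τ - 4 * h) := by
  obtain ⟨h, hh, h_affine⟩ := exists_gridHeight_sub_smul_eq hq hq' hx
  have hx_norm : ‖x‖ ≤ 1 / 2 + q := (pi_norm_le_iff_of_nonneg (by positivity)).2 fun j =>
    abs_le_of_mem_cantorU1_pow_succ hq (by linarith) (hx j)
  have h_height {σ t : ℝ} (hσ : 9 / 10 ≤ |σ|) (hσ' : |σ| ≤ 31 / 10) (ht : |t| ≤ 8) :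
      foldedHeight q m (x - σ • skewDirection) t = h + σ := by
    have hp : ‖x - σ • skewDirection‖ ≤ 6 / 10 := by
      linarith [norm_sub_le x (σ • skewDirection), norm_smul_skewDirection_le σ]
    have h_fold (j : Fin 3) : fold m ((x - σ • skewDirection) j) = (x - σ • skewDirection) j :=
      fold_of_abs_le ((norm_le_pi_norm _ j).trans hp)
    have hp' : ‖x - σ • skewDirection‖ ≤ 2 * m + 7 / 2 := by linarith
    simp_rw [foldedHeight_eq_clamp ht hp', h_fold, h_affine σ hσ]
    exact clamp_of_abs_le (by linarith [abs_add_le h σ])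
  refine ⟨h, fun τ hτ => ?_⟩
  have h_two : |2 * h| ≤ 2 / 100 := by rw [abs_mul, abs_two]; linarith
  exact skewReflection_of_affine (h_height (by linarith [hτ.1]) (by linarith [hτ.2])
      (by linarith [hτ.2]))
    (h_height (by linarith [abs_sub_abs_le_abs_add τ (2 * h), hτ.1])
      (by linarith [abs_add_le τ (2 * h), hτ.2]) (by rw [abs_neg]; linarith))

end GridReflection

section ReflectionMap

open scoped NNReal

variable {β q : ℝ} {m : ℕ} {x : E4} {n : Fin 3 → ℤ}

/-- The splitting of `ℝ⁴` into its horizontal and vertical parts. -/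
def splitCoords : E4 ≃L[ℝ] (Fin 3 → ℝ) × ℝ :=
  LinearEquiv.toContinuousLinearEquiv
    { toFun := fun x => (Fin.init x.ofLp, x (Fin.last 3))
      invFun := fun v => WithLp.toLp 2 (Fin.snoc v.1 v.2)
      map_add' := fun _ _ => rfl
      map_smul' := fun _ _ => rfl
      left_inv := fun x => congrArg (WithLp.toLp 2) (Fin.snoc_init_self x.ofLp)
      right_inv := fun v => Prod.ext (Fin.init_snoc (α := fun _ => ℝ) v.2 v.1)
        (Fin.snoc_last (α := fun _ => ℝ) v.2 v.1) }

lemma splitCoords_apply (x : E4) : splitCoords x = (fun j => x j.castSucc, x 3) := rfl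

lemma splitCoords_single_castSucc (i : Fin 3) (s : ℝ) :
    splitCoords (s • EuclideanSpace.single i.castSucc 1) = (Pi.single i s, 0) := by
  rw [splitCoords_apply]
  refine Prod.ext (funext fun j => ?_) ?_
  · rcases eq_or_ne j i with rfl | hj <;> simp [*]
  · fin_cases i <;> simp

lemma splitCoords_single_last (s : ℝ) :
    splitCoords (s • EuclideanSpace.single 3 1) = (0, s) := by
  rw [splitCoords_apply]
  refine Prod.ext (funext fun j => ?_) (by simp)
  fin_cases j <;> simp

lemma splitCoords_tr (n : Fin 3 → ℤ) :
    splitCoords (tr (n 0) (n 1) (n 2)) = (fun j => 2 * (n j : ℝ), 0) := by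
  rw [splitCoords_apply]
  refine Prod.ext (funext fun j => ?_) (by simp [tr])
  fin_cases j <;> simp [tr]

lemma splitCoords_reflect (x : E4) :
    splitCoords (reflect x) = ((splitCoords x).1, -(splitCoords x).2) := by
  rw [reflect, map_sub, splitCoords_single_last]
  refine Prod.ext (sub_zero _) ?_
  simp only [splitCoords_apply, Prod.snd_sub]
  ring

lemma Rbox_eq_preimage (m : ℕ) (t : ℝ) : Rbox m t =
    splitCoords ⁻¹' (Metric.closedBall 0 (2 * m + 5) ×ˢ Metric.closedBall 0 (1 + t)) := by
  ext x
  have hm : (0 : ℝ) ≤ 2 * m + 5 := by positivity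
  simp only [Rbox, mem_ofPred_eq, mem_preimage, mem_prod, mem_closedBall_zero_iff,
    pi_norm_le_iff_of_nonneg hm, Fin.forall_fin_succ, splitCoords_apply, Real.norm_eq_abs]
  simp [and_assoc]

lemma interior_Rbox (m : ℕ) (t : ℝ) : interior (Rbox m t) =
    splitCoords ⁻¹' (Metric.ball 0 (2 * m + 5) ×ˢ Metric.ball 0 (1 + t)) := by
  have h := splitCoords.toHomeomorph.preimage_interior
    (Metric.closedBall (0 : Fin 3 → ℝ) (2 * m + 5) ×ˢ Metric.closedBall (0 : ℝ) (1 + t))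
  rw [interior_prod_eq, interior_closedBall', interior_closedBall'] at h
  rw [Rbox_eq_preimage]
  exact h.symm

/-- The map `F̂_{β,m}`, where `q = 2 ^ (-(β + 1))`. -/
def reflectionMap (q : ℝ) (m : ℕ) : E4 → E4 :=
  splitCoords.symm ∘ gridReflection q m ∘ splitCoords

lemma splitCoords_reflectionMap (q : ℝ) (m : ℕ) (x : E4) :
    splitCoords (reflectionMap q m x) = gridReflection q m (splitCoords x) :=
  splitCoords.apply_symm_apply _

lemma bijective_reflectionMap (hq : 0 < q) (hq' : q ≤ 1 / 2 ^ 12) (m : ℕ) :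
    Function.Bijective (reflectionMap q m) := by
  have hc : (4 / 5 : ℝ≥0) < 1 := by rw [div_lt_one] <;> norm_num
  obtain ⟨_, hK⟩ := exists_antilipschitzWith_skewReflection skewDirection (2 ^ 17) hc
  have h_inj := (hK _ (lipschitzWith_foldedHeight_left hq hq' m)
    (lipschitzWith_foldedHeight_right q m)).injective
  have h_surj := surjective_skewReflection (a := skewDirection) hc
    (lipschitzWith_foldedHeight_right q m)
  exact splitCoords.symm.bijective.comp
    (Function.Bijective.comp ⟨h_inj, h_surj⟩ splitCoords.bijective)

lemma exists_bilipschitz_reflectionMap : ∃ L : ℝ, 1 ≤ L ∧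
    ∀ q, 0 < q → q ≤ 1 / 2 ^ 12 → ∀ m x y,
      L⁻¹ * dist x y ≤ dist (reflectionMap q m x) (reflectionMap q m y) ∧
        dist (reflectionMap q m x) (reflectionMap q m y) ≤ L * dist x y := by
  obtain ⟨K, hK⟩ := exists_lipschitzWith_skewReflection skewDirection (2 ^ 17) (4 / 5)
  obtain ⟨K', hK'⟩ := exists_antilipschitzWith_skewReflection skewDirection (2 ^ 17)
    (c := 4 / 5) (by rw [div_lt_one] <;> norm_num)
  have lipschitz {q : ℝ} (hq : 0 < q) (hq' : q ≤ 1 / 2 ^ 12) (m : ℕ) :=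
    splitCoords.symm.lipschitz.comp ((hK _ (lipschitzWith_foldedHeight_left hq hq' m)
      (lipschitzWith_foldedHeight_right q m)).comp splitCoords.lipschitz)
  have antilipschitz {q : ℝ} (hq : 0 < q) (hq' : q ≤ 1 / 2 ^ 12) (m : ℕ) :=
    splitCoords.symm.antilipschitz.comp ((hK' _ (lipschitzWith_foldedHeight_left hq hq' m)
      (lipschitzWith_foldedHeight_right q m)).comp splitCoords.antilipschitz)
  obtain ⟨M, hM⟩ : ∃ M, ∀ q, 0 < q → q ≤ 1 / 2 ^ 12 → ∀ m, LipschitzWith M (reflectionMap q m) :=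
    ⟨_, fun _ => lipschitz⟩
  obtain ⟨M', hM'⟩ : ∃ M, ∀ q, 0 < q → q ≤ 1 / 2 ^ 12 → ∀ m,
      AntilipschitzWith M (reflectionMap q m) := ⟨_, fun _ => antilipschitz⟩
  refine ⟨max 1 (max M M'), le_max_left _ _, fun q hq hq' m x y => ⟨?_, ?_⟩⟩
  · rw [inv_mul_le_iff₀ (by positivity)]
    refine ((hM' q hq hq' m).le_mul_dist x y).trans ?_
    gcongr
    exact le_max_of_le_right (le_max_right _ _)
  · refine ((hM q hq hq' m).dist_le_mul x y).trans ?_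
    gcongr
    exact le_max_of_le_right (le_max_left _ _)

lemma reflectionMap_eq_self (q : ℝ) (hx : x ∉ interior (Rbox m 13)) : reflectionMap q m x = x := by
  refine splitCoords.injective ?_
  rw [splitCoords_reflectionMap, gridReflection_eq_self]
  rw [interior_Rbox, mem_preimage, mem_prod, mem_ball_zero_iff, mem_ball_zero_iff, not_and_or,
    not_lt, not_lt, Real.norm_eq_abs] at hx
  norm_num at hx
  exact hx

lemma bijOn_reflectionMap (hq : 0 < q) (hq' : q ≤ 1 / 2 ^ 12) (m : ℕ) :
    BijOn (reflectionMap q m) (Rbox m 13) (Rbox m 13) := by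
  have h_compl : EqOn (reflectionMap q m) id (Rbox m 13)ᶜ := fun x hx =>
    reflectionMap_eq_self q fun h => hx (interior_subset h)
  simpa only [compl_compl] using
    (h_compl.bijOn_iff.2 (bijOn_id _)).compl (bijective_reflectionMap hq hq' m)

lemma exists_sub_tr_mem_geomCantor (hx : x ∈ KBm β m) :
    ∃ n : Fin 3 → ℤ, (∀ j, |n j| ≤ m) ∧
      ∃ i, ∀ j ≠ i, (x - tr (n 0) (n 1) (n 2)) j ∈ geomCantor ((2 : ℝ) ^ (-(β + 1))) := by
  obtain ⟨n₁, n₂, n₃, hn₁, hn₂, hn₃, c, i, t, hc, rfl⟩ := hx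
  refine ⟨![n₁, n₂, n₃], by simp [Fin.forall_fin_succ, hn₁, hn₂, hn₃], i, fun j hj => ?_⟩
  have h_eq : (c + tr n₁ n₂ n₃ + t • EuclideanSpace.single i 1 - tr n₁ n₂ n₃ : E4) j = c j := by
    simp [hj]
  rw [rB_eq_pow] at hc
  exact h_eq ▸ hc j

lemma fold_mem_shearedGrid (hq : 0 < q) (hq' : q ≤ 1 / 2 ^ 12) (hn : ∀ j, |n j| ≤ m)
    (hx₃ : |x 3| ≤ 3) (hx : ∃ i, ∀ j ≠ i, (x - tr (n 0) (n 1) (n 2)) j ∈ geomCantor q) :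
    ((fun j => fold m (((splitCoords x).1 - (splitCoords x).2 • skewDirection) j),
      (splitCoords x).2) : (Fin 3 → ℝ) × ℝ) ∈ shearedGrid q := by
  obtain ⟨i, hi⟩ := hx
  have h_tr := Prod.ext_iff.1 (splitCoords_tr n)
  refine ⟨i, fun j hj => ?_⟩
  have h_mem := hi j hj
  induction j using Fin.lastCases with
  | last =>
    have h_last : (tr (n 0) (n 1) (n 2)) 3 = 0 := h_tr.2
    rw [Fin.snoc_last]
    convert h_mem using 1
    exact ((congrArg (x 3 - ·) h_last).trans (sub_zero _)).symm
  | cast j =>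
    have h_cast : (tr (n 0) (n 1) (n 2)) j.castSucc = 2 * (n j : ℝ) := congrFun h_tr.1 j
    have h_abs := abs_le_of_mem_geomCantor hq (by linarith) h_mem
    rw [PiLp.sub_apply, h_cast] at h_mem h_abs
    set u := x j.castSucc - 2 * n j - x 3 * skewDirection j with hu
    have h_u : |u| ≤ 6 / 10 := by
      linarith [abs_sub (x j.castSucc - 2 * n j) (x 3 * skewDirection j),
        abs_mul_skewDirection_le (x 3) j]
    have h_arg : x j.castSucc - x 3 * skewDirection j = u + 2 * n j := by rw [hu]; ring
    have h_fold : fold m (x j.castSucc - x 3 * skewDirection j) = u := by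
      rw [h_arg, fold_add_two_mul (by linarith) (hn j), bump_of_abs_le h_u]
    rw [Fin.snoc_castSucc]
    convert h_mem using 1
    exact (congrArg (· + x 3 * skewDirection j) h_fold).trans (sub_add_cancel _ _)

lemma norm_fst_splitCoords_le {r : ℝ} (hr : 0 ≤ r) (hx : ∀ j : Fin 3, |x j.castSucc| ≤ r) :
    ‖(splitCoords x).1‖ ≤ r :=
  (pi_norm_le_iff_of_nonneg hr).2 hx

lemma reflectionMap_eq_reflect (hβ : (2 : ℝ) ^ (-(β + 1)) ≤ 1 / 2 ^ 12) (hx : x ∈ KBm β m)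
    (hx₁ : ∀ j : Fin 3, |x j.castSucc| ≤ 2 * m + 3) (hx₃ : |x 3| ≤ 3) :
    reflectionMap (2 ^ (-(β + 1))) m x = reflect x := by
  have hq : (0 : ℝ) < 2 ^ (-(β + 1)) := by positivity
  obtain ⟨n, hn, h_mem⟩ := exists_sub_tr_mem_geomCantor hx
  refine splitCoords.injective ?_
  rw [splitCoords_reflectionMap, splitCoords_reflect]
  exact gridReflection_eq_of_mem_shearedGrid hq hβ (norm_fst_splitCoords_le (by positivity) hx₁)
    hx₃ (fold_mem_shearedGrid hq hβ hn hx₃ h_mem)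

lemma reflectionMap_add_tr (hn : ∀ j, |n j| ≤ m) (hx₁ : ∀ j : Fin 3, |x j.castSucc| ≤ 1)
    (hx₃ : |x 3| ≤ 4) : reflectionMap q m (x + tr (n 0) (n 1) (n 2)) =
      reflectionMap q m x + tr (n 0) (n 1) (n 2) := by
  refine splitCoords.injective ?_
  rw [splitCoords_reflectionMap, map_add, map_add, splitCoords_reflectionMap, splitCoords_tr]
  exact gridReflection_add_two_mul hn (norm_fst_splitCoords_le zero_le_one hx₁) hx₃

lemma hasLineDerivAt_of_eventually_eq {E F : Type*} [AddCommGroup E] [Module ℝ E]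
    [NormedAddCommGroup F] [NormedSpace ℝ F] {f : E → F} {y v : E} {w : F}
    (h : ∀ᶠ s : ℝ in nhds 0, f (y + s • v) = f y + s • w) : HasLineDerivAt ℝ f w y v := by
  have h_affine : HasDerivAt (fun s : ℝ => f y + s • w) w 0 := by
    simpa only [id_eq, one_smul] using ((hasDerivAt_id (0 : ℝ)).smul_const w).const_add (f y)
  exact h_affine.congr_of_eventuallyEq h

lemma eventually_abs_le_nhds_zero {ε : ℝ} (hε : 0 < ε) : ∀ᶠ s : ℝ in nhds 0, |s| ≤ ε := by
  filter_upwards [Metric.closedBall_mem_nhds (0 : ℝ) hε] with s hs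
  rwa [mem_closedBall_zero_iff] at hs

lemma hasLineDerivAt_reflectionMap_single_last (hq : 0 < q) (hq' : q ≤ 1 / 2 ^ 12)
    (hn : ∀ j, |n j| ≤ m) (hx : ∀ j : Fin 3, x j.castSucc ∈ cantorU1 (fun k => q ^ k) 2)
    (hx₃ : |x 3| ∈ Ioc 1 3) :
    HasLineDerivAt ℝ (reflectionMap q m) (-EuclideanSpace.single 3 1)
      (x + tr (n 0) (n 1) (n 2)) (EuclideanSpace.single 3 1) := by
  obtain ⟨h, h_affine⟩ := exists_gridReflection_eq_of_mem_cantorU1 hq hq' m hx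
  have h_cube (j : Fin 3) : |x j.castSucc| ≤ 1 := by
    linarith [abs_le_of_mem_cantorU1_pow_succ hq (by linarith) (hx j)]
  have h_split (s : ℝ) : splitCoords (x + s • EuclideanSpace.single 3 1) =
      (fun j => x j.castSucc, x 3 + s) := by
    rw [map_add, splitCoords_single_last, splitCoords_apply, Prod.mk_add_mk, add_zero]
  have h_line {s : ℝ} (hs : |s| ≤ 1 / 100) :
      splitCoords (reflectionMap q m (x + s • EuclideanSpace.single 3 1)) =
        ((fun j => x j.castSucc) + (2 * h) • skewDirection, -(x 3 + s) - 4 * h) := by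
    rw [splitCoords_reflectionMap, h_split]
    exact h_affine _ ⟨by linarith [hx₃.1, abs_sub_abs_le_abs_add (x 3) s],
      by linarith [hx₃.2, abs_add_le (x 3) s]⟩
  have h_tr {s : ℝ} (hs : |s| ≤ 1 / 100) :
      reflectionMap q m (x + s • EuclideanSpace.single 3 1 + tr (n 0) (n 1) (n 2)) =
        reflectionMap q m (x + s • EuclideanSpace.single 3 1) + tr (n 0) (n 1) (n 2) := by
    have h_coords := Prod.ext_iff.1 (h_split s)
    refine reflectionMap_add_tr hn (fun j => (congrArg abs (congrFun h_coords.1 j)).trans_le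
      (h_cube j)) ((congrArg abs h_coords.2).trans_le ?_)
    linarith [hx₃.2, abs_add_le (x 3) s]
  have h_zero := h_tr (s := 0) (by norm_num)
  have h_line_zero := h_line (s := 0) (by norm_num)
  rw [zero_smul, add_zero] at h_zero h_line_zero
  refine hasLineDerivAt_of_eventually_eq ?_
  filter_upwards [eventually_abs_le_nhds_zero (ε := 1 / 100) (by norm_num)] with s hs
  rw [add_right_comm, h_tr hs, h_zero, add_right_comm]
  congr 1
  refine splitCoords.injective ?_
  rw [h_line hs, map_add, h_line_zero, smul_neg, map_neg, splitCoords_single_last]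
  refine Prod.ext (by simp) ?_
  simp only [Prod.snd_add, Prod.snd_neg]
  ring

lemma hasLineDerivAt_reflectionMap_single_castSucc {i : Fin 3} (hq : 0 < q)
    (hq' : q ≤ 1 / 2 ^ 12) (hn : ∀ j, |n j| ≤ m) (hni : n i = 0)
    (hi : |x i.castSucc| ∈ Icc (2 * m + 1 : ℝ) (2 * m + 3))
    (hx : ∀ j ≠ i.castSucc, x j ∈ cantorU1 (fun k => q ^ k) 1) :
    HasLineDerivAt ℝ (reflectionMap q m) (EuclideanSpace.single i.castSucc 1)
      (x + tr (n 0) (n 1) (n 2)) (EuclideanSpace.single i.castSucc 1) := by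
  have h_abs (j : Fin 4) (hj : j ≠ i.castSucc) : |x j| ≤ 1 := by
    linarith [abs_le_of_mem_cantorU1_pow_succ hq (by linarith) (hx j hj)]
  have h_split : splitCoords (x + tr (n 0) (n 1) (n 2)) =
      (fun j => x j.castSucc + 2 * (n j : ℝ), x 3) := by
    rw [map_add, splitCoords_tr, splitCoords_apply, Prod.mk_add_mk, add_zero]
    rfl
  have h_i : x i.castSucc + 2 * (n i : ℝ) = x i.castSucc := by simp [hni]
  have h_norm : ‖fun j => x j.castSucc + 2 * (n j : ℝ)‖ ≤ 2 * m + 3 := by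
    refine (pi_norm_le_iff_of_nonneg (by positivity)).2 fun j => ?_
    rcases eq_or_ne j i with rfl | hj
    · exact (congrArg abs h_i).trans_le hi.2
    · have h_shift := (norm_le_pi_norm _ j).trans (norm_two_mul_intCast_le hn)
      linarith [norm_add_le (x j.castSucc) (2 * (n j : ℝ)), Real.norm_eq_abs (x j.castSucc),
        h_abs _ ((Fin.castSucc_injective 3).ne hj)]
  refine hasLineDerivAt_of_eventually_eq ?_
  filter_upwards [eventually_abs_le_nhds_zero (ε := 1 / 100) (by norm_num)] with s hs
  refine splitCoords.injective ?_
  rw [splitCoords_reflectionMap, map_add _ _ (s • _), map_add _ (reflectionMap q m _),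
    splitCoords_single_castSucc, splitCoords_reflectionMap, h_split]
  exact gridReflection_add_single h_norm (h_abs 3 (Fin.castSucc_ne_last i).symm)
    (hi.1.trans_eq (congrArg abs h_i.symm)) hs

lemma two_rpow_neg_add_one_le (hβ : 11 ≤ β) : (2 : ℝ) ^ (-(β + 1)) ≤ 1 / 2 ^ 12 := by
  calc (2 : ℝ) ^ (-(β + 1)) ≤ 2 ^ (-12 : ℝ) :=
        Real.rpow_le_rpow_of_exponent_le one_le_two (by linarith)
    _ = 1 / 2 ^ 12 := by rw [Real.rpow_neg two_pos.le, one_div]; norm_cast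

end ReflectionMap

/-- Theorem 4.2: existence of the bi-Lipschitz map `F̂_{β,m}` of `R_{m,13}` onto
itself which is the identity on `∂R_{m,13}`, equals the reflection on the lines
through the Cantor plates, is periodic, and has the directional derivative
identities (4.6)–(4.9) almost everywhere. -/
theorem exists_reflection_map :
    ∃ β₀ : ℝ, 2 < β₀ ∧ ∀ β : ℝ, β₀ < β → ∃ L : ℝ, 1 ≤ L ∧ ∀ m : ℕ,
      ∃ Fh : E4 → E4,
        Set.BijOn Fh (Rbox m 13) (Rbox m 13) ∧
        (∀ x ∈ Rbox m 13, ∀ y ∈ Rbox m 13,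
          L⁻¹ * dist x y ≤ dist (Fh x) (Fh y) ∧ dist (Fh x) (Fh y) ≤ L * dist x y) ∧
        (∀ x ∈ Rbox m 13 \ interior (Rbox m 13), Fh x = x) ∧
        (∀ x ∈ KBm β m,
          |x 0| ≤ 2 * (m : ℝ) + 3 → |x 1| ≤ 2 * (m : ℝ) + 3 → |x 2| ≤ 2 * (m : ℝ) + 3 →
          |x 3| ≤ 3 → Fh x = reflect x) ∧
        (∀ n₁ n₂ n₃ : ℤ, |n₁| ≤ (m : ℤ) → |n₂| ≤ (m : ℤ) → |n₃| ≤ (m : ℤ) →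
          (∀ x ∈ unitCubeO, Fh (x + tr n₁ n₂ n₃) = Fh x + tr n₁ n₂ n₃) ∧
          (∀ᵐ x : E4,
            (x 0 ∈ cantorU1 (rB β) 2 ∧ x 1 ∈ cantorU1 (rB β) 2 ∧
              x 2 ∈ cantorU1 (rB β) 2 ∧ |x 3| ∈ Set.Ioc (1 : ℝ) 3) →
            HasLineDerivAt ℝ Fh (-(EuclideanSpace.single 3 (1 : ℝ)))
              (x + tr n₁ n₂ n₃) (EuclideanSpace.single 3 (1 : ℝ))) ∧
          (∀ᵐ x : E4,
            (|x 0| ∈ Set.Icc (2 * (m : ℝ) + 1) (2 * (m : ℝ) + 3) ∧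
              x 1 ∈ cantorU1 (rB β) 1 ∧ x 2 ∈ cantorU1 (rB β) 1 ∧
              x 3 ∈ cantorU1 (rB β) 1) →
            HasLineDerivAt ℝ Fh (EuclideanSpace.single 0 (1 : ℝ))
              (x + tr 0 n₂ n₃) (EuclideanSpace.single 0 (1 : ℝ))) ∧
          (∀ᵐ x : E4,
            (x 0 ∈ cantorU1 (rB β) 1 ∧
              |x 1| ∈ Set.Icc (2 * (m : ℝ) + 1) (2 * (m : ℝ) + 3) ∧
              x 2 ∈ cantorU1 (rB β) 1 ∧ x 3 ∈ cantorU1 (rB β) 1) →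
            HasLineDerivAt ℝ Fh (EuclideanSpace.single 1 (1 : ℝ))
              (x + tr n₁ 0 n₃) (EuclideanSpace.single 1 (1 : ℝ))) ∧
          (∀ᵐ x : E4,
            (x 0 ∈ cantorU1 (rB β) 1 ∧ x 1 ∈ cantorU1 (rB β) 1 ∧
              |x 2| ∈ Set.Icc (2 * (m : ℝ) + 1) (2 * (m : ℝ) + 3) ∧
              x 3 ∈ cantorU1 (rB β) 1) →
            HasLineDerivAt ℝ Fh (EuclideanSpace.single 2 (1 : ℝ))
              (x + tr n₁ n₂ 0) (EuclideanSpace.single 2 (1 : ℝ)))) := by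
  refine ⟨11, by norm_num, fun β hβ => ?_⟩
  have hq : (0 : ℝ) < 2 ^ (-(β + 1)) := by positivity
  have hq' := two_rpow_neg_add_one_le hβ.le
  obtain ⟨L, hL, h_bilipschitz⟩ := exists_bilipschitz_reflectionMap
  refine ⟨L, hL, fun m => ⟨reflectionMap (2 ^ (-(β + 1))) m, bijOn_reflectionMap hq hq' m,
    fun x _ y _ => h_bilipschitz _ hq hq' m x y, fun x hx => reflectionMap_eq_self _ hx.2,
    fun x hx h₀ h₁ h₂ h₃ => ?_, fun n₁ n₂ n₃ hn₁ hn₂ hn₃ => ?_⟩⟩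
  · exact reflectionMap_eq_reflect hq' hx (by simp [Fin.forall_fin_succ, h₀, h₁, h₂]) h₃
  · rw [rB_eq_pow]
    generalize (2 : ℝ) ^ (-(β + 1)) = q at hq hq' ⊢
    refine ⟨fun x hx => ?_, ae_of_all _ fun x ⟨h₀, h₁, h₂, h₃⟩ => ?_,
      ae_of_all _ fun x ⟨h₀, h₁, h₂, h₃⟩ => ?_, ae_of_all _ fun x ⟨h₀, h₁, h₂, h₃⟩ => ?_,
      ae_of_all _ fun x ⟨h₀, h₁, h₂, h₃⟩ => ?_⟩
    · have hx' (j : Fin 4) : |x j| ≤ 1 := abs_le.2 ⟨(hx j).1.le, (hx j).2.le⟩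
      exact reflectionMap_add_tr (n := ![n₁, n₂, n₃])
        (by simp [Fin.forall_fin_succ, hn₁, hn₂, hn₃]) (fun j => hx' _) (by linarith [hx' 3])
    · exact hasLineDerivAt_reflectionMap_single_last (n := ![n₁, n₂, n₃]) hq hq'
        (by simp [Fin.forall_fin_succ, hn₁, hn₂, hn₃])
        (by simp [Fin.forall_fin_succ, h₀, h₁, h₂]) h₃
    · exact hasLineDerivAt_reflectionMap_single_castSucc (i := 0) (n := ![0, n₂, n₃]) hq hq'
        (by simp [Fin.forall_fin_succ, hn₂, hn₃]) rfl h₀ (by simp [Fin.forall_fin_succ, h₁, h₂, h₃])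
    · exact hasLineDerivAt_reflectionMap_single_castSucc (i := 1) (n := ![n₁, 0, n₃]) hq hq'
        (by simp [Fin.forall_fin_succ, hn₁, hn₃]) rfl h₁ (by simp [Fin.forall_fin_succ, h₀, h₂, h₃])
    · exact hasLineDerivAt_reflectionMap_single_castSucc (i := 2) (n := ![n₁, n₂, 0]) hq hq'
        (by simp [Fin.forall_fin_succ, hn₁, hn₂]) rfl h₂ (by simp [Fin.forall_fin_succ, h₀, h₁, h₃])
end
end

section
/- There exists β₀ > 2 such that for every β > β₀ the following holds: for every α > 0, all K, N, m ∈ ℕ and every η > 0 there exist homeomorphisms G̃ : R_{m,η} → R_{m,13} and G : R_{m,13} → R_{m,η} such that (i) G̃(C_{A,K,m}) = C_{B,m} and G(C_{B,m}) = C_{A,K,m}; (ii) G(G̃(x)) = x for every x ∈ ∂R_{m,η} and for every x ∈ C_{A,K,m}; (iii) G̃ is locally bi-Lipschitz on R_{m,η} \ C_{A,K,m} and G is locally bi-Lipschitz on R_{m,13} \ C_{B,m}; (iv) G̃ is Lipschitz on R_{m,η}, with Lipschitz constant depending only on K, α and η (in particular independent of N, m and β); (v) at every point x ∈ C_{A,K,m}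 the classical differential of G̃ exists and equals 0. -/
noncomputable section
open MeasureTheory Set Filter
open scoped NNReal

/-- The sequence `r̃_k(K)` defining the fat Cantor-type set `C_{A,K}`. -/
def rA (α : ℝ) (K : ℕ) (k : ℕ) : ℝ :=
  ((2 : ℝ) ^ k)⁻¹ * (1 + ((K : ℝ) + k + 1) ^ (-α)) / (1 + ((K : ℝ) + 1) ^ (-α))

/-- The `m`-Cantor plate `⋃_{|nᵢ| ≤ m} (C(4) + (2n₁,2n₂,2n₃,0))` built from the
Cantor-type set associated to a sequence `s` (the four-dimensional Cantor set
being the fourfold product of the one-dimensional one). -/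
def cantorPlate (s : ℕ → ℝ) (m : ℕ) : Set E4 :=
  {x | ∃ n₁ n₂ n₃ : ℤ, |n₁| ≤ (m : ℤ) ∧ |n₂| ≤ (m : ℤ) ∧ |n₃| ≤ (m : ℤ) ∧
    ∀ j, (x - tr n₁ n₂ n₃) j ∈ cantorTypeSet1 s}

/-- `f` is locally bi-Lipschitz on `S`. -/
def LocallyBiLipschitzOn (f : E4 → E4) (S : Set E4) : Prop :=
  ∀ x ∈ S, ∃ U : Set E4, IsOpen U ∧ x ∈ U ∧ ∃ L : ℝ, 0 < L ∧
    ∀ y ∈ U ∩ S, ∀ z ∈ U ∩ S,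
      L⁻¹ * dist y z ≤ dist (f y) (f z) ∧ dist (f y) (f z) ≤ L * dist y z

/-!
Cells of the two Cantor-type constructions with the same address are matched. A homothety takes a
cell of level `k` to its partner, and a radial correction inside the cells of level `k + 1` changes
it into a map that takes these cells to their partners by homotheties as well. The sum of all the
corrections is the map between the two Cantor-type sets, and exchanging the two scales gives its
inverse. The correction at level `k` has a Lipschitz constant of the order of `rB β k` divided by
the gap `rA α K k - 2 * rA α K (k + 1)`; relative to `2⁻ᵏ` the gap is only polynomially small, while
`rB β k` is geometrically small, so these constants are summable, uniformly in `β` bounded below by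
a positive number. At a point of the Cantor-type set the ratios `rB β k / rA α K k` of the
homotheties tend to `0`, hence so do the difference quotients; away from this set only finitely many
corrections are active locally. Finally the fourth coordinate is stretched by the factor `13 / η`
outside `[-1, 1]`, where the two boxes differ.
-/

/-! ### Scales -/

/-- A sequence of side lengths of a Cantor-type construction: normalised at level `0`, with the two
halves of a cell leaving a gap between the cells of the next level. -/
structure IsCantorScale (s : ℕ → ℝ) : Prop where
  pos : ∀ k, 0 < s k
  zero_eq_one : s 0 = 1
  two_mul_succ_lt : ∀ k, 2 * s (k + 1) < s k

namespace IsCantorScale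

variable {s : ℕ → ℝ}

lemma succ_lt_half (hs : IsCantorScale s) (k : ℕ) : s (k + 1) < s k / 2 := by
  linarith [hs.two_mul_succ_lt k]

lemma half_pos (hs : IsCantorScale s) (k : ℕ) : 0 < s k / 2 :=
  _root_.half_pos (hs.pos k)

lemma le_half_pow (hs : IsCantorScale s) (k : ℕ) : s k ≤ (1 / 2 : ℝ) ^ k := by
  induction k with
  | zero => simp [hs.zero_eq_one]
  | succ k ih => rw [pow_succ]; linarith [hs.two_mul_succ_lt k]

lemma tendsto_zero (hs : IsCantorScale s) : Tendsto s atTop (nhds 0) :=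
  squeeze_zero (fun k => (hs.pos k).le) hs.le_half_pow
    (tendsto_pow_atTop_nhds_zero_of_lt_one (by norm_num) (by norm_num))

end IsCantorScale

/-! ### Radial maps of shells -/

section Shell

/-- The affine map of radii taking the shell `[r, R]` to the shell `[r', R']`. -/
def shellRadius (R r R' r' ρ : ℝ) : ℝ := r' + (R' - r') / (R - r) * (ρ - r)

/-- The factor by which a vector of norm `ρ` is scaled by the radial map that takes the shell
`r ≤ ‖y‖ ≤ R` affinely onto `r' ≤ ‖y‖ ≤ R'` and is homogeneous on either side of the shell. -/
def shellFactor (R r R' r' ρ : ℝ) : ℝ :=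
  shellRadius R r R' r' (max r (min ρ R)) / max r (min ρ R)

/-- The Lipschitz constant of the difference between the radial map with factor `shellFactor` and
its outer part `y ↦ (R' / R) • y`. -/
def shellDistortion (R r R' r' : ℝ) : ℝ := |(r' * R - R' * r) / (R - r)| * (2 / r)

variable {R r R' r' ρ : ℝ}

lemma shellRadius_inner : shellRadius R r R' r' r = r' := by simp [shellRadius]

lemma shellRadius_outer (h : r < R) : shellRadius R r R' r' R = R' := by
  have : R - r ≠ 0 := (sub_pos.2 h).ne'
  simp [shellRadius, this]

lemma shellRadius_strictMono (h : r < R) (h' : r' < R') : StrictMono (shellRadius R r R' r') := by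
  intro ρ₁ ρ₂ hρ
  have : 0 < (R' - r') / (R - r) := div_pos (sub_pos.2 h') (sub_pos.2 h)
  unfold shellRadius
  gcongr

lemma shellRadius_swap (h : r < R) (h' : r' < R') :
    shellRadius R' r' R r (shellRadius R r R' r' ρ) = ρ := by
  have : R - r ≠ 0 := (sub_pos.2 h).ne'
  have : R' - r' ≠ 0 := (sub_pos.2 h').ne'
  unfold shellRadius
  field_simp
  ring

lemma shellRadius_mem_Icc (h : r < R) (h' : r' < R') (hρ : ρ ∈ Icc r R) :
    shellRadius R r R' r' ρ ∈ Icc r' R' := by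
  have hmono := (shellRadius_strictMono h h').monotone
  exact ⟨shellRadius_inner.symm.le.trans (hmono hρ.1),
    (hmono hρ.2).trans (shellRadius_outer h).le⟩

lemma shellFactor_of_le (h : r < R) (hρ : ρ ≤ r) : shellFactor R r R' r' ρ = r' / r := by
  rw [shellFactor, min_eq_left (hρ.trans h.le), max_eq_left hρ, shellRadius_inner]

lemma shellFactor_of_ge (h : r < R) (hρ : R ≤ ρ) : shellFactor R r R' r' ρ = R' / R := by
  rw [shellFactor, min_eq_right hρ, max_eq_right h.le, shellRadius_outer h]

lemma shellFactor_mul_of_mem (hr : 0 < r) (hρ : ρ ∈ Icc r R) :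
    shellFactor R r R' r' ρ * ρ = shellRadius R r R' r' ρ := by
  rw [shellFactor, min_eq_left hρ.2, max_eq_right hρ.1,
    div_mul_cancel₀ _ (hr.trans_le hρ.1).ne']

lemma shellFactor_swap_mul (hr : 0 < r) (h : r < R) (hr' : 0 < r') (h' : r' < R')
    (hρ : ρ ∈ Icc r R) :
    shellFactor R' r' R r (shellRadius R r R' r' ρ) * shellFactor R r R' r' ρ = 1 := by
  refine mul_right_cancel₀ (hr.trans_le hρ.1).ne' ?_
  rw [mul_assoc, shellFactor_mul_of_mem hr hρ,
    shellFactor_mul_of_mem hr' (shellRadius_mem_Icc h h' hρ), shellRadius_swap h h', one_mul]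

lemma shellFactor_mul_mem_Icc (hr : 0 < r) (h : r < R) (hr' : 0 < r') (h' : r' < R')
    (hρ : ρ ∈ Icc 0 R) : shellFactor R r R' r' ρ * ρ ∈ Icc 0 R' := by
  rcases le_total ρ r with hle | hle
  · rw [shellFactor_of_le h hle, div_mul_eq_mul_div, mul_div_assoc]
    have hquot : ρ / r ≤ 1 := (div_le_one hr).2 hle
    have hquot0 : 0 ≤ ρ / r := div_nonneg hρ.1 hr.le
    exact ⟨by positivity, by nlinarith⟩
  · rw [shellFactor_mul_of_mem hr ⟨hle, hρ.2⟩]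
    exact Icc_subset_Icc_left hr'.le (shellRadius_mem_Icc h h' ⟨hle, hρ.2⟩)

lemma shellFactor_sub (hr : 0 < r) (h : r < R) :
    shellFactor R r R' r' ρ - R' / R =
      (r' * R - R' * r) / (R - r) * ((max r (min ρ R))⁻¹ - R⁻¹) := by
  have : max r (min ρ R) ≠ 0 := (hr.trans_le (le_max_left _ _)).ne'
  have : R - r ≠ 0 := (sub_pos.2 h).ne'
  have : R ≠ 0 := (hr.trans h).ne'
  unfold shellFactor shellRadius
  field_simp
  ring

lemma shellDistortion_nonneg (hr : 0 < r) : 0 ≤ shellDistortion R r R' r' := by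
  unfold shellDistortion
  positivity

lemma shellDistortion_le (hr : 0 < r) (h : r < R) (hR : R ≤ 2 * r) (hr' : 0 < r') (h' : r' < R') :
    shellDistortion R r R' r' ≤ 4 * R' / (R - r) := by
  have hgap : 0 < R - r := sub_pos.2 h
  have hR0 : 0 < R := hr.trans h
  have hR'0 : 0 < R' := hr'.trans h'
  have hbound : |r' * R - R' * r| ≤ R' * R :=
    abs_sub_le_of_nonneg_of_le (by positivity) (by nlinarith) (by nlinarith) (by nlinarith)
  have hquot : R * (2 / r) ≤ 4 := by
    rw [mul_div_assoc', div_le_iff₀ hr]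
    linarith
  calc shellDistortion R r R' r' = |r' * R - R' * r| / (R - r) * (2 / r) := by
        rw [shellDistortion, abs_div, abs_of_pos hgap]
    _ ≤ R' * R / (R - r) * (2 / r) := by gcongr
    _ = R' / (R - r) * (R * (2 / r)) := by ring
    _ ≤ R' / (R - r) * 4 := by gcongr
    _ = 4 * R' / (R - r) := by ring

variable {E : Type*} [NormedAddCommGroup E] [NormedSpace ℝ E]

/-- The deviation of the radial map with factor `shellFactor` from its outer part
`y ↦ (R' / R) • y`; it vanishes outside the ball of radius `R`. -/
def shellCorrection (R r R' r' : ℝ) (y : E) : E := (shellFactor R r R' r' ‖y‖ - R' / R) • y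

lemma shellCorrection_eq_zero (h : r < R) {y : E} (hy : R ≤ ‖y‖) :
    shellCorrection R r R' r' y = 0 := by
  rw [shellCorrection, shellFactor_of_ge h hy, sub_self, zero_smul]

lemma norm_shellCorrection_le_radius (hr : 0 < r) (h : r < R) (hr' : 0 < r') (h' : r' < R')
    (y : E) : ‖shellCorrection R r R' r' y‖ ≤ R' := by
  have hR' : 0 < R' := hr'.trans h'
  rcases le_total R ‖y‖ with hy | hy
  · simpa [shellCorrection_eq_zero h hy] using hR'.le
  have hfactor := shellFactor_mul_mem_Icc hr h hr' h' ⟨norm_nonneg y, hy⟩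
  have houter : R' / R * ‖y‖ ≤ R' := by
    rw [div_mul_eq_mul_div, div_le_iff₀ (hr.trans h)]
    gcongr
  calc ‖shellCorrection R r R' r' y‖
      = |shellFactor R r R' r' ‖y‖ * ‖y‖ - R' / R * ‖y‖| := by
        rw [shellCorrection, norm_smul, Real.norm_eq_abs, ← sub_mul, abs_mul, abs_norm]
    _ ≤ R' := abs_sub_le_of_nonneg_of_le hfactor.1 hfactor.2
        (by have := hr.trans h; positivity) houter

lemma norm_inv_clamp_sub_smul_sub_le (hr : 0 < r) (h : r < R) (y : E) {z : E} (hz : ‖z‖ ≤ R) :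
    ‖((max r (min ‖y‖ R))⁻¹ - R⁻¹) • y - ((max r (min ‖z‖ R))⁻¹ - R⁻¹) • z‖
      ≤ 2 / r * ‖y - z‖ := by
  set c := max r (min ‖y‖ R)
  set d := max r (min ‖z‖ R)
  have hcr : r ≤ c := le_max_left _ _
  have hc : 0 < c := hr.trans_le hcr
  have hd : 0 < d := hr.trans_le (le_max_left _ _)
  have hzd : ‖z‖ ≤ d := (le_min le_rfl hz).trans (le_max_right _ _)
  have hcd : |d - c| ≤ ‖y - z‖ := by
    have hclamp : |c - d| ≤ |‖y‖ - ‖z‖| := by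
      simpa [Real.dist_eq] using
        ((LipschitzWith.id.min_const R).const_max r).dist_le_mul ‖y‖ ‖z‖
    rw [abs_sub_comm]
    exact hclamp.trans (abs_norm_sub_norm_le y z)
  have hinv : |c⁻¹ - R⁻¹| ≤ r⁻¹ :=
    abs_sub_le_of_nonneg_of_le (by positivity) (inv_anti₀ hr hcr)
      (inv_nonneg.2 (hr.trans h).le) (inv_anti₀ hr h.le)
  have hdiff : |c⁻¹ - d⁻¹| * ‖z‖ ≤ r⁻¹ * ‖y - z‖ := by
    rw [inv_sub_inv hc.ne' hd.ne', abs_div, abs_of_pos (mul_pos hc hd)]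
    calc |d - c| / (c * d) * ‖z‖ = |d - c| * c⁻¹ * (‖z‖ / d) := by field_simp
      _ ≤ ‖y - z‖ * r⁻¹ * 1 := by
        gcongr
        exact (div_le_one hd).2 hzd
      _ = r⁻¹ * ‖y - z‖ := by ring
  calc ‖(c⁻¹ - R⁻¹) • y - (d⁻¹ - R⁻¹) • z‖
      = ‖(c⁻¹ - R⁻¹) • (y - z) + (c⁻¹ - d⁻¹) • z‖ := by congr 1; module
    _ ≤ |c⁻¹ - R⁻¹| * ‖y - z‖ + |c⁻¹ - d⁻¹| * ‖z‖ := by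
        simpa only [norm_smul, Real.norm_eq_abs] using
          norm_add_le ((c⁻¹ - R⁻¹) • (y - z)) ((c⁻¹ - d⁻¹) • z)
    _ ≤ r⁻¹ * ‖y - z‖ + r⁻¹ * ‖y - z‖ := by gcongr
    _ = 2 / r * ‖y - z‖ := by ring

lemma norm_shellCorrection_sub_le (hr : 0 < r) (h : r < R) (y z : E) :
    ‖shellCorrection R r R' r' y - shellCorrection R r R' r' z‖ ≤
      shellDistortion R r R' r' * ‖y - z‖ := by
  wlog hz : ‖z‖ ≤ R generalizing y z with hwlog
  · rcases le_total ‖y‖ R with hy | hy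
    · simpa only [norm_sub_rev] using hwlog z y hy
    · rw [shellCorrection_eq_zero h hy, shellCorrection_eq_zero h (not_le.1 hz).le, sub_zero,
        norm_zero]
      exact mul_nonneg (shellDistortion_nonneg hr) (norm_nonneg _)
  rw [shellCorrection, shellCorrection, shellFactor_sub hr h, shellFactor_sub hr h, mul_smul,
    mul_smul, ← smul_sub, norm_smul, Real.norm_eq_abs, shellDistortion, mul_assoc]
  gcongr
  exact norm_inv_clamp_sub_smul_sub_le hr h y hz

lemma lipschitzWith_shellCorrection (hr : 0 < r) (h : r < R) :
    LipschitzWith (shellDistortion R r R' r').toNNReal (shellCorrection R r R' r' : E → E) :=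
  LipschitzWith.of_dist_le' fun y z => by
    simpa only [dist_eq_norm] using norm_shellCorrection_sub_le hr h y z

lemma continuous_shellFactor_norm_smul (hr : 0 < r) (h : r < R) :
    Continuous fun y : E => shellFactor R r R' r' ‖y‖ • y := by
  have hcont : Continuous fun y : E => shellCorrection R r R' r' y + (R' / R) • y :=
    (lipschitzWith_shellCorrection hr h).continuous.add (continuous_const_smul _)
  simpa only [shellCorrection, ← add_smul, sub_add_cancel] using hcont

lemma norm_shellCorrection_le (hr : 0 < r) (h : r < R) (y : E) :
    ‖shellCorrection R r R' r' y‖ ≤ shellDistortion R r R' r' * max (R - ‖y‖) 0 := by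
  have hnonneg := shellDistortion_nonneg (R := R) (R' := R') (r' := r') hr
  rcases le_total R ‖y‖ with hy | hy
  · rw [shellCorrection_eq_zero h hy, norm_zero]
    positivity
  rcases eq_or_ne y 0 with rfl | hy0
  · rw [shellCorrection, smul_zero, norm_zero]
    positivity
  have hpos : 0 < ‖y‖ := norm_pos_iff.2 hy0
  have hR : 0 < R := hr.trans h
  set z : E := (R / ‖y‖) • y
  have hz : ‖z‖ = R := by
    rw [norm_smul, Real.norm_of_nonneg (by positivity), div_mul_cancel₀ _ hpos.ne']
  have hyz : ‖y - z‖ = R - ‖y‖ := by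
    have hsub : z - y = (R / ‖y‖ - 1) • y := by rw [sub_smul, one_smul]
    rw [norm_sub_rev, hsub, norm_smul,
      Real.norm_of_nonneg (sub_nonneg.2 ((one_le_div hpos).2 hy)), sub_mul,
      div_mul_cancel₀ _ hpos.ne', one_mul]
  simpa only [shellCorrection_eq_zero h hz.ge, sub_zero, hyz, max_eq_left (sub_nonneg.2 hy)] using
    norm_shellCorrection_sub_le (R' := R') (r' := r') hr h y z

lemma norm_shellFactor_smul (hr : 0 < r) (h : r < R) (hr' : 0 < r') (h' : r' < R') {y : E}
    (hy : ‖y‖ ∈ Icc r R) : ‖shellFactor R r R' r' ‖y‖ • y‖ = shellRadius R r R' r' ‖y‖ := by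
  rw [← shellFactor_mul_of_mem hr hy, norm_smul, Real.norm_eq_abs, ← abs_norm y, ← abs_mul,
    abs_norm]
  exact abs_of_nonneg (shellFactor_mul_mem_Icc hr h hr' h' ⟨norm_nonneg y, hy.2⟩).1

lemma eqOn_closedBall_of_eqOn_ball {F : Type*} [TopologicalSpace F] [T2Space F] {f g : E → F}
    (hf : Continuous f) (hg : Continuous g) {c : E} (hr : r ≠ 0) (h : EqOn f g (Metric.ball c r)) :
    EqOn f g (Metric.closedBall c r) := by
  rw [← closure_ball c hr]
  exact h.closure hf hg

end Shell

/-! ### Addresses of cells -/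

section AddressCenter

/-- The centre of the level-`k` cell with address `(p, σ)`: one starts at the node `p` and moves, at
each level `j < k`, by half the side length `s j` in the direction `σ j`. -/
def addressCenter {E : Type*} [AddCommGroup E] [Module ℝ E] (s : ℕ → ℝ) (p : E) (σ : ℕ → E)
    (k : ℕ) : E :=
  p + ∑ j ∈ Finset.range k, (s j / 2) • σ j

variable {E : Type*} {s : ℕ → ℝ} {p : E} {σ : ℕ → E}

@[simp]
lemma addressCenter_zero [AddCommGroup E] [Module ℝ E] : addressCenter s p σ 0 = p := by
  simp [addressCenter]

lemma addressCenter_succ [AddCommGroup E] [Module ℝ E] (k : ℕ) :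
    addressCenter s p σ (k + 1) = addressCenter s p σ k + (s k / 2) • σ k := by
  rw [addressCenter, Finset.sum_range_succ, ← add_assoc, addressCenter]

variable [NormedAddCommGroup E] [NormedSpace ℝ E]

lemma norm_addressCenter_succ_sub_le (hs : IsCantorScale s) (hσ : ∀ j, ‖σ j‖ ≤ 1) (k : ℕ) :
    ‖addressCenter s p σ (k + 1) - addressCenter s p σ k‖ ≤ s k / 2 := by
  rw [addressCenter_succ, add_sub_cancel_left, norm_smul, Real.norm_of_nonneg (hs.half_pos k).le]
  exact mul_le_of_le_one_right (hs.half_pos k).le (hσ k)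

lemma norm_addressCenter_add_sub_le (hs : IsCantorScale s) (hσ : ∀ j, ‖σ j‖ ≤ 1) (k n : ℕ) :
    ‖addressCenter s p σ (k + n) - addressCenter s p σ k‖ ≤ s k - s (k + n) := by
  induction n with
  | zero => simp
  | succ n ih =>
    have htri := norm_sub_le_norm_sub_add_norm_sub (addressCenter s p σ (k + n + 1))
      (addressCenter s p σ (k + n)) (addressCenter s p σ k)
    rw [← add_assoc]
    linarith [norm_addressCenter_succ_sub_le (p := p) hs hσ (k + n), hs.succ_lt_half (k + n)]

lemma norm_sub_addressCenter_lt_of_succ (hs : IsCantorScale s) (hσ : ∀ j, ‖σ j‖ ≤ 1) {k : ℕ}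
    {x : E} (hx : ‖x - addressCenter s p σ (k + 1)‖ < s k / 2) :
    ‖x - addressCenter s p σ k‖ < s k := by
  linarith [norm_sub_le_norm_sub_add_norm_sub x (addressCenter s p σ (k + 1))
    (addressCenter s p σ k), norm_addressCenter_succ_sub_le (p := p) hs hσ k]

end AddressCenter

/-! ### Greedy addresses on the line -/

/-- A nearest-point map onto a `2`-separated set of reals, so that the open intervals of radius `1`
around its values are disjoint. -/
structure IsNearestNodeMap (b : ℝ → ℝ) : Prop where
  two_le_abs_sub : ∀ t u, b t ≠ b u → 2 ≤ |b t - b u|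
  abs_sub_le_abs_sub : ∀ t u, |t - b t| ≤ |t - b u|

lemma IsNearestNodeMap.eq_of_abs_sub_lt_one {b : ℝ → ℝ} (hb : IsNearestNodeMap b) {p t : ℝ}
    (hp : p ∈ range b) (h : |t - p| < 1) : b t = p := by
  obtain ⟨u, rfl⟩ := hp
  by_contra hne
  have hsep := hb.two_le_abs_sub t u hne
  have htri := abs_sub_le (b t) t (b u)
  rw [abs_sub_comm (b t) t] at htri
  linarith [hb.abs_sub_le_abs_sub t u]

/-- The sign of a real number, with the value `1` at `0`. -/
def nonnegSign (t : ℝ) : ℝ := if 0 ≤ t then 1 else -1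

lemma abs_nonnegSign (t : ℝ) : |nonnegSign t| = 1 := by
  unfold nonnegSign
  split_ifs <;> simp

lemma abs_sub_mul_nonnegSign (t a : ℝ) : |t - a * nonnegSign t| = |(|t| - a)| := by
  unfold nonnegSign
  split_ifs with h
  · rw [abs_of_nonneg h, mul_one]
  · rw [abs_of_neg (not_le.1 h), ← abs_neg]
    ring_nf

lemma nonnegSign_eq_of_abs_sub_mul_lt {t a σ : ℝ} (hσ : |σ| = 1) (h : |t - a * σ| < a) :
    nonnegSign t = σ := by
  obtain ⟨hlow, hupp⟩ := abs_lt.1 h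
  rcases eq_or_eq_neg_of_abs_eq hσ with rfl | rfl
  · exact if_pos (by linarith)
  · exact if_neg (by linarith)

/-- The position of `t` relative to the centre of the level-`k` cell chosen greedily: one starts at
the node `b t` and moves, at each level, towards `t`. -/
def greedyResidual (b : ℝ → ℝ) (s : ℕ → ℝ) (t : ℝ) : ℕ → ℝ
  | 0 => t - b t
  | k + 1 => greedyResidual b s t k - s k / 2 * nonnegSign (greedyResidual b s t k)

section GreedyResidual

variable {b : ℝ → ℝ} {s : ℕ → ℝ} {t : ℝ} {k : ℕ}

lemma greedyResidual_eq_sub_addressCenter (b : ℝ → ℝ) (s : ℕ → ℝ) (t : ℝ) (k : ℕ) :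
    greedyResidual b s t k =
      t - addressCenter s (b t) (fun j => nonnegSign (greedyResidual b s t j)) k := by
  induction k with
  | zero => simp [greedyResidual]
  | succ k ih => rw [greedyResidual, addressCenter_succ, ← sub_sub, ← ih, smul_eq_mul]

lemma abs_greedyResidual_succ (b : ℝ → ℝ) (s : ℕ → ℝ) (t : ℝ) (k : ℕ) :
    |greedyResidual b s t (k + 1)| = |(|greedyResidual b s t k| - s k / 2)| :=
  abs_sub_mul_nonnegSign _ _

lemma abs_abs_greedyResidual_sub_le (hb : IsNearestNodeMap b) (s : ℕ → ℝ) (t u : ℝ) (k : ℕ) :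
    |(|greedyResidual b s t k| - |greedyResidual b s u k|)| ≤ |t - u| := by
  induction k with
  | zero =>
    have htu := abs_sub_le t u (b u)
    have hut := abs_sub_le u t (b t)
    rw [abs_sub_comm u t] at hut
    rw [greedyResidual, greedyResidual, abs_le]
    constructor <;> linarith [hb.abs_sub_le_abs_sub t u, hb.abs_sub_le_abs_sub u t]
  | succ k ih =>
    rw [abs_greedyResidual_succ, abs_greedyResidual_succ]
    refine (abs_abs_sub_abs_le_abs_sub _ _).trans ?_
    rwa [sub_sub_sub_cancel_right]

lemma abs_greedyResidual_lt_of_succ (h : |greedyResidual b s t (k + 1)| < s k / 2) :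
    |greedyResidual b s t k| < s k := by
  rw [abs_greedyResidual_succ] at h
  linarith [(abs_lt.1 h).2]

lemma abs_greedyResidual_succ_le (h : |greedyResidual b s t k| ≤ s k) :
    |greedyResidual b s t (k + 1)| ≤ s k / 2 := by
  rw [abs_greedyResidual_succ, abs_le]
  constructor <;> linarith [abs_nonneg (greedyResidual b s t k)]

variable {p : ℝ} {σ : ℕ → ℝ}

lemma greedyResidual_succ_eq (hσ : |σ k| = 1)
    (hres : greedyResidual b s t k = t - addressCenter s p σ k)
    (h : |t - addressCenter s p σ (k + 1)| < s k / 2) :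
    greedyResidual b s t (k + 1) = t - addressCenter s p σ (k + 1) := by
  rw [addressCenter_succ, smul_eq_mul, ← sub_sub] at h ⊢
  rw [greedyResidual, hres, nonnegSign_eq_of_abs_sub_mul_lt hσ h]

lemma greedyResidual_eq (hb : IsNearestNodeMap b) (hs : IsCantorScale s) (hp : p ∈ range b)
    (hσ : ∀ j, |σ j| = 1) (h : |t - addressCenter s p σ k| < s k) :
    greedyResidual b s t k = t - addressCenter s p σ k := by
  induction k with
  | zero =>
    rw [addressCenter_zero, hs.zero_eq_one] at h
    rw [greedyResidual, hb.eq_of_abs_sub_lt_one hp h, addressCenter_zero]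
  | succ k ih =>
    have hlt := h.trans (hs.succ_lt_half k)
    have hlt' : |t - addressCenter s p σ k| < s k :=
      norm_sub_addressCenter_lt_of_succ (E := ℝ) hs (fun j => (hσ j).le) hlt
    exact greedyResidual_succ_eq (hσ k) (ih hlt') hlt

end GreedyResidual

/-! ### Greedy addresses of vectors -/

section PiGreedyResidual

variable {ι : Type*}

/-- `(p, σ)` is the address of a cell of the Cantor-type construction based at the nodes
`∏ i, range (b i)`: `p` is a node and the entries of `σ` are signs. -/
structure IsAddress (b : ι → ℝ → ℝ) (p : ι → ℝ) (σ : ℕ → ι → ℝ) : Prop where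
  mem_range : ∀ i, p i ∈ range (b i)
  abs_eq_one : ∀ j i, |σ j i| = 1

/-- The vector of the coordinatewise residuals `greedyResidual`. -/
def piGreedyResidual (b : ι → ℝ → ℝ) (s : ℕ → ℝ) (x : ι → ℝ) (k : ℕ) : ι → ℝ :=
  fun i => greedyResidual (b i) s (x i) k

variable {b : ι → ℝ → ℝ} {s : ℕ → ℝ}

lemma addressCenter_apply (p : ι → ℝ) (σ : ℕ → ι → ℝ) (k : ℕ) (i : ι) :
    addressCenter s p σ k i = addressCenter s (p i) (fun j => σ j i) k := by
  simp [addressCenter]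

lemma exists_isAddress_piGreedyResidual (b : ι → ℝ → ℝ) (s : ℕ → ℝ) (x : ι → ℝ) :
    ∃ p σ, IsAddress b p σ ∧ ∀ k, piGreedyResidual b s x k = x - addressCenter s p σ k := by
  refine ⟨fun i => b i (x i), fun j i => nonnegSign (piGreedyResidual b s x j i),
    ⟨fun i => mem_range_self _, fun _ _ => abs_nonnegSign _⟩, fun k => funext fun i => ?_⟩
  rw [Pi.sub_apply, addressCenter_apply]
  exact greedyResidual_eq_sub_addressCenter _ _ _ _

variable [Fintype ι] {x : ι → ℝ} {k : ℕ}

lemma IsAddress.norm_le_one {p : ι → ℝ} {σ : ℕ → ι → ℝ} (h : IsAddress b p σ) (j : ℕ) :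
    ‖σ j‖ ≤ 1 :=
  (pi_norm_le_iff_of_nonneg zero_le_one).2 fun i => (h.abs_eq_one j i).le

lemma norm_piGreedyResidual_le_add (hb : ∀ i, IsNearestNodeMap (b i)) (s : ℕ → ℝ)
    (x y : ι → ℝ) (k : ℕ) :
    ‖piGreedyResidual b s x k‖ ≤ ‖piGreedyResidual b s y k‖ + ‖x - y‖ := by
  refine (pi_norm_le_iff_of_nonneg (by positivity)).2 fun i => ?_
  have hi : ‖piGreedyResidual b s x k i‖ - ‖piGreedyResidual b s y k i‖ ≤ ‖(x - y) i‖ :=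
    (le_abs_self _).trans (abs_abs_greedyResidual_sub_le (hb i) s (x i) (y i) k)
  linarith [norm_le_pi_norm (piGreedyResidual b s y k) i, norm_le_pi_norm (x - y) i]

lemma continuous_norm_piGreedyResidual (hb : ∀ i, IsNearestNodeMap (b i)) (s : ℕ → ℝ) (k : ℕ) :
    Continuous fun x => ‖piGreedyResidual b s x k‖ := by
  refine (LipschitzWith.of_le_add fun x y => ?_).continuous
  simpa only [dist_eq_norm] using norm_piGreedyResidual_le_add hb s x y k

lemma norm_piGreedyResidual_lt_of_succ (hs : IsCantorScale s)
    (h : ‖piGreedyResidual b s x (k + 1)‖ < s k / 2) : ‖piGreedyResidual b s x k‖ < s k := by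
  rw [pi_norm_lt_iff (hs.half_pos k)] at h
  exact (pi_norm_lt_iff (hs.pos k)).2 fun i => abs_greedyResidual_lt_of_succ (h i)

lemma norm_piGreedyResidual_succ_le (hs : IsCantorScale s)
    (h : ‖piGreedyResidual b s x k‖ ≤ s k) : ‖piGreedyResidual b s x (k + 1)‖ ≤ s k / 2 := by
  rw [pi_norm_le_iff_of_nonneg (hs.pos k).le] at h
  exact (pi_norm_le_iff_of_nonneg (hs.half_pos k).le).2 fun i => abs_greedyResidual_succ_le (h i)

lemma le_norm_piGreedyResidual_of_le (hs : IsCantorScale s)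
    (h : s k ≤ ‖piGreedyResidual b s x k‖) {n : ℕ} (hkn : k ≤ n) :
    s n ≤ ‖piGreedyResidual b s x n‖ := by
  induction n, hkn using Nat.le_induction with
  | base => exact h
  | succ n _ ih =>
    by_contra! hlt
    exact ih.not_gt (norm_piGreedyResidual_lt_of_succ hs (hlt.trans (hs.succ_lt_half n)))

variable {p : ι → ℝ} {σ : ℕ → ι → ℝ}

lemma IsAddress.piGreedyResidual_eq (h : IsAddress b p σ) (hb : ∀ i, IsNearestNodeMap (b i))
    (hs : IsCantorScale s) (hx : ‖x - addressCenter s p σ k‖ < s k) :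
    piGreedyResidual b s x k = x - addressCenter s p σ k := by
  rw [pi_norm_lt_iff (hs.pos k)] at hx
  ext i
  have hi := hx i
  rw [Pi.sub_apply, addressCenter_apply] at hi ⊢
  exact greedyResidual_eq (hb i) hs (h.mem_range i) (h.abs_eq_one · i) hi

lemma IsAddress.piGreedyResidual_succ_eq (h : IsAddress b p σ)
    (hb : ∀ i, IsNearestNodeMap (b i)) (hs : IsCantorScale s)
    (hx : ‖x - addressCenter s p σ (k + 1)‖ < s k / 2) :
    piGreedyResidual b s x (k + 1) = x - addressCenter s p σ (k + 1) := by
  have hres := h.piGreedyResidual_eq hb hs (norm_sub_addressCenter_lt_of_succ hs h.norm_le_one hx)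
  rw [pi_norm_lt_iff (hs.half_pos k)] at hx
  ext i
  have hi := hx i
  have hres_i := congrFun hres i
  rw [Pi.sub_apply, addressCenter_apply] at hi hres_i ⊢
  exact greedyResidual_succ_eq (h.abs_eq_one k i) hres_i hi

/-- The residual determines the centre on the open balls, which are therefore disjoint when the
centres differ. -/
lemma IsAddress.le_norm_addressCenter_sub {p' : ι → ℝ} {σ' : ℕ → ι → ℝ} (h : IsAddress b p σ)
    (h' : IsAddress b p' σ') (hb : ∀ i, IsNearestNodeMap (b i)) (hs : IsCantorScale s)
    (hne : addressCenter s p σ (k + 1) ≠ addressCenter s p' σ' (k + 1)) :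
    s k ≤ ‖addressCenter s p σ (k + 1) - addressCenter s p' σ' (k + 1)‖ := by
  have hdisj : Disjoint (Metric.ball (addressCenter s p σ (k + 1)) (s k / 2))
      (Metric.ball (addressCenter s p' σ' (k + 1)) (s k / 2)) := by
    refine disjoint_left.2 fun y hy hy' => hne ?_
    rw [mem_ball_iff_norm] at hy hy'
    exact sub_right_injective
      ((h.piGreedyResidual_succ_eq hb hs hy).symm.trans (h'.piGreedyResidual_succ_eq hb hs hy'))
  rw [disjoint_ball_ball_iff (hs.half_pos k) (hs.half_pos k), dist_eq_norm] at hdisj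
  linarith

end PiGreedyResidual

/-! ### The map between two Cantor-type sets -/

section CantorMap

variable {ι : Type*} [Fintype ι] {b : ι → ℝ → ℝ} {s s' : ℕ → ℝ} {x : ι → ℝ} {k : ℕ}

/-- The Cantor-type set with scale `s` based at the nodes `∏ i, range (b i)`, described through
greedy addresses. -/
def nodeCantorSet (b : ι → ℝ → ℝ) (s : ℕ → ℝ) : Set (ι → ℝ) :=
  {x | ∀ k, ‖piGreedyResidual b s x k‖ ≤ s k}

/-- The radial correction in the cells of level `k + 1`, which turns the homothety of a level-`k`
cell of `s` onto the corresponding cell of `s'` into a map that takes the cells of level `k + 1` to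
each other. -/
def cantorCorrection (b : ι → ℝ → ℝ) (s s' : ℕ → ℝ) (k : ℕ) (x : ι → ℝ) : ι → ℝ :=
  shellCorrection (s k / 2) (s (k + 1)) (s' k / 2) (s' (k + 1)) (piGreedyResidual b s x (k + 1))

/-- The Lipschitz constant of `cantorCorrection b s s' k`. -/
def cantorDistortion (s s' : ℕ → ℝ) (k : ℕ) : ℝ :=
  shellDistortion (s k / 2) (s (k + 1)) (s' k / 2) (s' (k + 1))

/-- The map that sends the cells of `s` of levels at most `k` to those of `s'` and is a homothety
on each cell of level `k`. -/
def cantorPartialMap (b : ι → ℝ → ℝ) (s s' : ℕ → ℝ) (k : ℕ) (x : ι → ℝ) : ι → ℝ :=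
  x + ∑ j ∈ Finset.range k, cantorCorrection b s s' j x

/-- The map that sends the cells of `s` of all levels to those of `s'` with the same addresses. -/
def cantorMap (b : ι → ℝ → ℝ) (s s' : ℕ → ℝ) (x : ι → ℝ) : ι → ℝ :=
  x + ∑' k, cantorCorrection b s s' k x

lemma cantorDistortion_nonneg (hs : IsCantorScale s) (s' : ℕ → ℝ) (k : ℕ) :
    0 ≤ cantorDistortion s s' k :=
  shellDistortion_nonneg (hs.pos _)

lemma cantorCorrection_eq_zero (hs : IsCantorScale s) (s' : ℕ → ℝ)
    (h : s k ≤ ‖piGreedyResidual b s x k‖) : cantorCorrection b s s' k x = 0 :=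
  shellCorrection_eq_zero (hs.succ_lt_half k)
    (le_of_not_gt fun hlt => h.not_gt (norm_piGreedyResidual_lt_of_succ hs hlt))

lemma norm_cantorCorrection_le_half_pow (hs : IsCantorScale s) (hs' : IsCantorScale s') (k : ℕ)
    (x : ι → ℝ) : ‖cantorCorrection b s s' k x‖ ≤ (1 / 2) ^ k :=
  calc ‖cantorCorrection b s s' k x‖ ≤ s' k / 2 :=
        norm_shellCorrection_le_radius (hs.pos _) (hs.succ_lt_half k) (hs'.pos _)
          (hs'.succ_lt_half k) _
    _ ≤ (1 / 2) ^ k := (half_le_self (hs'.pos k).le).trans (hs'.le_half_pow k)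

/-- The segment between points of different cells crosses the boundaries of both. -/
lemma IsAddress.max_sub_norm_add_max_sub_norm_le {p q : ι → ℝ} {σ τ : ℕ → ι → ℝ}
    (h : IsAddress b p σ) (h' : IsAddress b q τ) (hb : ∀ i, IsNearestNodeMap (b i))
    (hs : IsCantorScale s) {y : ι → ℝ}
    (hx : piGreedyResidual b s x (k + 1) = x - addressCenter s p σ (k + 1))
    (hy : piGreedyResidual b s y (k + 1) = y - addressCenter s q τ (k + 1))
    (hne : addressCenter s p σ (k + 1) ≠ addressCenter s q τ (k + 1)) :
    max (s k / 2 - ‖piGreedyResidual b s x (k + 1)‖) 0 +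
      max (s k / 2 - ‖piGreedyResidual b s y (k + 1)‖) 0 ≤ ‖x - y‖ := by
  have hxy := norm_piGreedyResidual_le_add hb s x y (k + 1)
  have hyx := norm_piGreedyResidual_le_add hb s y x (k + 1)
  rw [norm_sub_rev y x] at hyx
  have hsep := h.le_norm_addressCenter_sub h' hb hs hne
  have htri : ‖addressCenter s p σ (k + 1) - addressCenter s q τ (k + 1)‖ ≤
      ‖x - y‖ + ‖piGreedyResidual b s x (k + 1)‖ + ‖piGreedyResidual b s y (k + 1)‖ := by
    have hsplit : addressCenter s p σ (k + 1) - addressCenter s q τ (k + 1) =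
        x - y - piGreedyResidual b s x (k + 1) + piGreedyResidual b s y (k + 1) := by
      rw [hx, hy]
      abel
    rw [hsplit]
    exact (norm_add_le _ _).trans (by gcongr; exact norm_sub_le _ _)
  rcases max_cases (s k / 2 - ‖piGreedyResidual b s x (k + 1)‖) 0 with hmax | hmax <;>
  rcases max_cases (s k / 2 - ‖piGreedyResidual b s y (k + 1)‖) 0 with hmax' | hmax' <;>
  linarith [norm_nonneg (x - y)]

/-- For points in different cells both corrections are controlled by the distance to the boundary
of the cell. -/
lemma norm_cantorCorrection_sub_le (hb : ∀ i, IsNearestNodeMap (b i)) (hs : IsCantorScale s)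
    (s' : ℕ → ℝ) (k : ℕ) (x y : ι → ℝ) :
    ‖cantorCorrection b s s' k x - cantorCorrection b s s' k y‖ ≤
      cantorDistortion s s' k * ‖x - y‖ := by
  obtain ⟨p, σ, hpσ, hx⟩ := exists_isAddress_piGreedyResidual b s x
  obtain ⟨q, τ, hqτ, hy⟩ := exists_isAddress_piGreedyResidual b s y
  have hr := hs.pos (k + 1)
  have hrR := hs.succ_lt_half k
  by_cases hc : addressCenter s p σ (k + 1) = addressCenter s q τ (k + 1)
  · have hsub : piGreedyResidual b s x (k + 1) - piGreedyResidual b s y (k + 1) = x - y := by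
      rw [hx, hy, hc, sub_sub_sub_cancel_right]
    rw [← hsub]
    exact norm_shellCorrection_sub_le hr hrR _ _
  calc ‖cantorCorrection b s s' k x - cantorCorrection b s s' k y‖
      ≤ ‖cantorCorrection b s s' k x‖ + ‖cantorCorrection b s s' k y‖ := norm_sub_le _ _
    _ ≤ cantorDistortion s s' k * max (s k / 2 - ‖piGreedyResidual b s x (k + 1)‖) 0 +
        cantorDistortion s s' k * max (s k / 2 - ‖piGreedyResidual b s y (k + 1)‖) 0 :=
      add_le_add (norm_shellCorrection_le hr hrR _) (norm_shellCorrection_le hr hrR _)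
    _ ≤ cantorDistortion s s' k * ‖x - y‖ := by
      rw [← mul_add]
      exact mul_le_mul_of_nonneg_left
        (hpσ.max_sub_norm_add_max_sub_norm_le hqτ hb hs (hx _) (hy _) hc)
        (cantorDistortion_nonneg hs s' k)

lemma lipschitzWith_cantorCorrection (hb : ∀ i, IsNearestNodeMap (b i)) (hs : IsCantorScale s)
    (s' : ℕ → ℝ) (k : ℕ) :
    LipschitzWith (cantorDistortion s s' k).toNNReal (cantorCorrection b s s' k) :=
  LipschitzWith.of_dist_le' fun x y => by
    simpa only [dist_eq_norm] using norm_cantorCorrection_sub_le hb hs s' k x y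

lemma summable_cantorCorrection (hs : IsCantorScale s) (hs' : IsCantorScale s') (x : ι → ℝ) :
    Summable fun k => cantorCorrection b s s' k x :=
  .of_norm_bounded summable_geometric_two (norm_cantorCorrection_le_half_pow hs hs' · x)

lemma continuous_cantorMap (hb : ∀ i, IsNearestNodeMap (b i)) (hs : IsCantorScale s)
    (hs' : IsCantorScale s') : Continuous (cantorMap b s s') :=
  continuous_id.add <|
    continuous_tsum (fun k => (lipschitzWith_cantorCorrection hb hs s' k).continuous)
      summable_geometric_two (norm_cantorCorrection_le_half_pow hs hs')

lemma tendsto_cantorPartialMap (hs : IsCantorScale s) (hs' : IsCantorScale s') (x : ι → ℝ) :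
    Tendsto (fun k => cantorPartialMap b s s' k x) atTop (nhds (cantorMap b s s' x)) :=
  tendsto_const_nhds.add (summable_cantorCorrection hs hs' x).hasSum.tendsto_sum_nat

lemma cantorMap_eq_cantorPartialMap (hs : IsCantorScale s) (s' : ℕ → ℝ)
    (h : s k ≤ ‖piGreedyResidual b s x k‖) : cantorMap b s s' x = cantorPartialMap b s s' k x := by
  rw [cantorMap, cantorPartialMap, tsum_eq_sum fun j hj => cantorCorrection_eq_zero hs s'
    (le_norm_piGreedyResidual_of_le hs h (not_lt.1 (Finset.mem_range.not.1 hj)))]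

@[simp]
lemma cantorPartialMap_zero : cantorPartialMap b s s' 0 x = x := by simp [cantorPartialMap]

lemma cantorPartialMap_succ (b : ι → ℝ → ℝ) (s s' : ℕ → ℝ) (k : ℕ) (x : ι → ℝ) :
    cantorPartialMap b s s' (k + 1) x =
      cantorPartialMap b s s' k x + cantorCorrection b s s' k x := by
  rw [cantorPartialMap, Finset.sum_range_succ, ← add_assoc, cantorPartialMap]

lemma exists_lipschitzWith_cantorPartialMap (hb : ∀ i, IsNearestNodeMap (b i))
    (hs : IsCantorScale s) (s' : ℕ → ℝ) (k : ℕ) :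
    ∃ L, LipschitzWith L (cantorPartialMap b s s' k) := by
  induction k with
  | zero =>
    have hid : cantorPartialMap b s s' 0 = id := funext fun _ => cantorPartialMap_zero
    exact ⟨1, hid ▸ LipschitzWith.id⟩
  | succ k ih =>
    obtain ⟨L, hL⟩ := ih
    refine ⟨L + (cantorDistortion s s' k).toNNReal, ?_⟩
    rw [funext (cantorPartialMap_succ b s s' k)]
    exact hL.add (lipschitzWith_cantorCorrection hb hs s' k)

lemma norm_cantorMap_sub_cantorPartialMap_sub_le (hb : ∀ i, IsNearestNodeMap (b i))
    (hs : IsCantorScale s) (hs' : IsCantorScale s') (hd : Summable (cantorDistortion s s'))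
    (k : ℕ) (x y : ι → ℝ) :
    ‖(cantorMap b s s' x - cantorPartialMap b s s' k x) -
      (cantorMap b s s' y - cantorPartialMap b s s' k y)‖ ≤
      (∑' j, cantorDistortion s s' (j + k)) * ‖x - y‖ := by
  have htail : ∀ z, cantorMap b s s' z - cantorPartialMap b s s' k z =
      ∑' j, cantorCorrection b s s' (j + k) z := fun z => by
    rw [cantorMap, cantorPartialMap, add_sub_add_left_eq_sub, sub_eq_iff_eq_add',
      (summable_cantorCorrection hs hs' z).sum_add_tsum_nat_add]
  have hsum : ∀ z, Summable fun j => cantorCorrection b s s' (j + k) z := fun z =>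
    (summable_nat_add_iff k).2 (summable_cantorCorrection hs hs' z)
  rw [htail, htail, ← (hsum x).tsum_sub (hsum y)]
  exact tsum_of_norm_bounded (((summable_nat_add_iff k).2 hd).hasSum.mul_right _)
    fun j => norm_cantorCorrection_sub_le hb hs s' (j + k) x y

lemma lipschitzWith_cantorMap (hb : ∀ i, IsNearestNodeMap (b i)) (hs : IsCantorScale s)
    (hs' : IsCantorScale s') (hd : Summable (cantorDistortion s s')) :
    LipschitzWith (1 + ∑' k, cantorDistortion s s' k).toNNReal (cantorMap b s s') := by
  refine LipschitzWith.of_dist_le' fun x y => ?_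
  have htail := norm_cantorMap_sub_cantorPartialMap_sub_le hb hs hs' hd 0 x y
  simp only [cantorPartialMap_zero, add_zero] at htail
  rw [dist_eq_norm, dist_eq_norm, add_mul, one_mul]
  calc ‖cantorMap b s s' x - cantorMap b s s' y‖
      = ‖(x - y) + ((cantorMap b s s' x - x) - (cantorMap b s s' y - y))‖ := by
        congr 1
        abel
    _ ≤ ‖x - y‖ + (∑' k, cantorDistortion s s' k) * ‖x - y‖ :=
        (norm_add_le _ _).trans (by gcongr)

variable {p : ι → ℝ} {σ : ℕ → ι → ℝ}

lemma IsAddress.cantorPartialMap_succ_eq (h : IsAddress b p σ) (hb : ∀ i, IsNearestNodeMap (b i))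
    (hs : IsCantorScale s)
    (hk : cantorPartialMap b s s' k x =
      addressCenter s' p σ k + (s' k / s k) • (x - addressCenter s p σ k))
    (hx : ‖x - addressCenter s p σ (k + 1)‖ < s k / 2) :
    cantorPartialMap b s s' (k + 1) x = addressCenter s' p σ (k + 1) +
      shellFactor (s k / 2) (s (k + 1)) (s' k / 2) (s' (k + 1))
        ‖x - addressCenter s p σ (k + 1)‖ • (x - addressCenter s p σ (k + 1)) := by
  have hratio : s' k / 2 / (s k / 2) = s' k / s k := by field_simp
  have hcancel : s' k / 2 = s' k / s k * (s k / 2) := by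
    have := (hs.pos k).ne'
    field_simp
  rw [cantorPartialMap_succ, hk, cantorCorrection, shellCorrection,
    h.piGreedyResidual_succ_eq hb hs hx, hratio, addressCenter_succ (s := s'), hcancel, mul_smul,
    addressCenter_succ (s := s)]
  module

lemma IsAddress.cantorPartialMap_eq (h : IsAddress b p σ) (hb : ∀ i, IsNearestNodeMap (b i))
    (hs : IsCantorScale s) (hs' : IsCantorScale s') (hx : ‖x - addressCenter s p σ k‖ < s k) :
    cantorPartialMap b s s' k x =
      addressCenter s' p σ k + (s' k / s k) • (x - addressCenter s p σ k) := by
  induction k with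
  | zero => simp [hs.zero_eq_one, hs'.zero_eq_one]
  | succ k ih =>
    have hlt := hx.trans (hs.succ_lt_half k)
    rw [h.cantorPartialMap_succ_eq hb hs
      (ih (norm_sub_addressCenter_lt_of_succ hs h.norm_le_one hlt)) hlt,
      shellFactor_of_le (hs.succ_lt_half k) hx.le]

lemma IsAddress.cantorMap_eq_of_mem_shell (h : IsAddress b p σ) (hb : ∀ i, IsNearestNodeMap (b i))
    (hs : IsCantorScale s) (hs' : IsCantorScale s')
    (hx : ‖x - addressCenter s p σ (k + 1)‖ ∈ Icc (s (k + 1)) (s k / 2)) :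
    cantorMap b s s' x = addressCenter s' p σ (k + 1) +
      shellFactor (s k / 2) (s (k + 1)) (s' k / 2) (s' (k + 1))
        ‖x - addressCenter s p σ (k + 1)‖ • (x - addressCenter s p σ (k + 1)) := by
  have hxball : x ∈ Metric.closedBall (addressCenter s p σ (k + 1)) (s k / 2) :=
    mem_closedBall_iff_norm.2 hx.2
  have hsub : Continuous fun y : ι → ℝ => y - addressCenter s p σ (k + 1) :=
    continuous_id.sub continuous_const
  have hres : ‖piGreedyResidual b s x (k + 1)‖ = ‖x - addressCenter s p σ (k + 1)‖ :=
    eqOn_closedBall_of_eqOn_ball (continuous_norm_piGreedyResidual hb s (k + 1)) hsub.norm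
      (hs.half_pos k).ne'
      (fun y hy => congrArg norm (h.piGreedyResidual_succ_eq hb hs (mem_ball_iff_norm.1 hy))) hxball
  obtain ⟨L, hL⟩ := exists_lipschitzWith_cantorPartialMap hb hs s' (k + 1)
  have hcell := continuous_shellFactor_norm_smul (E := ι → ℝ) (R' := s' k / 2) (r' := s' (k + 1))
    (hs.pos (k + 1)) (hs.succ_lt_half k)
  rw [cantorMap_eq_cantorPartialMap hs s' (hx.1.trans_eq hres.symm)]
  refine eqOn_closedBall_of_eqOn_ball hL.continuous (continuous_const.add (hcell.comp hsub))
    (hs.half_pos k).ne' (fun y hy => ?_) hxball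
  have hylt := mem_ball_iff_norm.1 hy
  exact h.cantorPartialMap_succ_eq hb hs
    (h.cantorPartialMap_eq hb hs hs' (norm_sub_addressCenter_lt_of_succ hs h.norm_le_one hylt)) hylt

lemma IsAddress.norm_sub_addressCenter_lt (h : IsAddress b p σ) (hs : IsCantorScale s)
    (hx : ∀ k, ‖x - addressCenter s p σ k‖ ≤ s k) (k : ℕ) : ‖x - addressCenter s p σ k‖ < s k :=
  norm_sub_addressCenter_lt_of_succ hs h.norm_le_one ((hx (k + 1)).trans_lt (hs.succ_lt_half k))

lemma mem_nodeCantorSet_iff (hb : ∀ i, IsNearestNodeMap (b i)) (hs : IsCantorScale s) :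
    x ∈ nodeCantorSet b s ↔
      ∃ p σ, IsAddress b p σ ∧ ∀ k, ‖x - addressCenter s p σ k‖ ≤ s k := by
  constructor
  · intro hx
    obtain ⟨p, σ, h, hres⟩ := exists_isAddress_piGreedyResidual b s x
    exact ⟨p, σ, h, fun k => hres k ▸ hx k⟩
  · rintro ⟨p, σ, h, hx⟩ k
    rw [h.piGreedyResidual_eq hb hs (h.norm_sub_addressCenter_lt hs hx k)]
    exact hx k

lemma IsAddress.tendsto_addressCenter (hb : ∀ i, IsNearestNodeMap (b i)) (hs : IsCantorScale s)
    (hs' : IsCantorScale s') (h : IsAddress b p σ)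
    (hx : ∀ k, ‖x - addressCenter s p σ k‖ ≤ s k) :
    Tendsto (addressCenter s' p σ) atTop (nhds (cantorMap b s s' x)) := by
  have hdist : ∀ k, ‖cantorPartialMap b s s' k x - addressCenter s' p σ k‖ ≤ s' k := fun k => by
    rw [h.cantorPartialMap_eq hb hs hs' (h.norm_sub_addressCenter_lt hs hx k),
      add_sub_cancel_left, norm_smul,
      Real.norm_of_nonneg (div_nonneg (hs'.pos k).le (hs.pos k).le), div_mul_eq_mul_div,
      div_le_iff₀ (hs.pos k)]
    exact mul_le_mul_of_nonneg_left (hx k) (hs'.pos k).le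
  simpa using (tendsto_cantorPartialMap (b := b) hs hs' x).sub
    (squeeze_zero_norm hdist hs'.tendsto_zero)

lemma IsAddress.norm_cantorMap_sub_le (h : IsAddress b p σ) (hb : ∀ i, IsNearestNodeMap (b i))
    (hs : IsCantorScale s) (hs' : IsCantorScale s')
    (hx : ∀ k, ‖x - addressCenter s p σ k‖ ≤ s k) (k : ℕ) :
    ‖cantorMap b s s' x - addressCenter s' p σ k‖ ≤ s' k := by
  have hlim := ((tendsto_add_atTop_iff_nat k).2 (h.tendsto_addressCenter hb hs hs' hx)).sub_const
    (addressCenter s' p σ k)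
  refine le_of_tendsto hlim.norm (.of_forall fun n => ?_)
  rw [add_comm n k]
  linarith [norm_addressCenter_add_sub_le (p := p) hs' h.norm_le_one k n, hs'.pos (k + n)]

lemma cantorMap_eq_self (hs : IsCantorScale s) (s' : ℕ → ℝ)
    (hx : 1 ≤ ‖piGreedyResidual b s x 0‖) : cantorMap b s s' x = x := by
  rw [cantorMap_eq_cantorPartialMap hs s' (hs.zero_eq_one.trans_le hx), cantorPartialMap_zero]

lemma mem_nodeCantorSet_or_exists_mem_shell (hs : IsCantorScale s) (x : ι → ℝ) :
    x ∈ nodeCantorSet b s ∨ 1 ≤ ‖piGreedyResidual b s x 0‖ ∨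
      ∃ k, ‖piGreedyResidual b s x (k + 1)‖ ∈ Icc (s (k + 1)) (s k / 2) := by
  classical
  by_cases hx : ∃ k, s k < ‖piGreedyResidual b s x k‖
  · right
    have hfind := Nat.find_spec hx
    rcases hk : Nat.find hx with _ | k
    · rw [hk, hs.zero_eq_one] at hfind
      exact Or.inl hfind.le
    · rw [hk] at hfind
      have hmin : ‖piGreedyResidual b s x k‖ ≤ s k := not_lt.1 (Nat.find_min hx (by lia))
      exact Or.inr ⟨k, hfind.le, norm_piGreedyResidual_succ_le hs hmin⟩
  · exact Or.inl fun k => not_lt.1 (not_exists.1 hx k)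

lemma cantorMap_mem_nodeCantorSet (hb : ∀ i, IsNearestNodeMap (b i)) (hs : IsCantorScale s)
    (hs' : IsCantorScale s') (hx : x ∈ nodeCantorSet b s) :
    cantorMap b s s' x ∈ nodeCantorSet b s' := by
  obtain ⟨p, σ, h, hx⟩ := (mem_nodeCantorSet_iff hb hs).1 hx
  exact (mem_nodeCantorSet_iff hb hs').2 ⟨p, σ, h, h.norm_cantorMap_sub_le hb hs hs' hx⟩

lemma cantorMap_swap_of_mem (hb : ∀ i, IsNearestNodeMap (b i)) (hs : IsCantorScale s)
    (hs' : IsCantorScale s') (hx : x ∈ nodeCantorSet b s) :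
    cantorMap b s' s (cantorMap b s s' x) = x := by
  obtain ⟨p, σ, h, hx⟩ := (mem_nodeCantorSet_iff hb hs).1 hx
  have hlim : Tendsto (addressCenter s p σ) atTop (nhds x) := by
    refine tendsto_iff_norm_sub_tendsto_zero.2 (squeeze_zero (fun _ => norm_nonneg _) (fun k => ?_)
      hs.tendsto_zero)
    rw [norm_sub_rev]
    exact hx k
  exact tendsto_nhds_unique
    (h.tendsto_addressCenter hb hs' hs (h.norm_cantorMap_sub_le hb hs hs' hx)) hlim

lemma IsAddress.cantorMap_swap_of_mem_shell (h : IsAddress b p σ)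
    (hb : ∀ i, IsNearestNodeMap (b i)) (hs : IsCantorScale s) (hs' : IsCantorScale s')
    (hx : ‖x - addressCenter s p σ (k + 1)‖ ∈ Icc (s (k + 1)) (s k / 2)) :
    cantorMap b s' s (cantorMap b s s' x) = x := by
  have hr := hs.pos (k + 1)
  have hrR := hs.succ_lt_half k
  have hr' := hs'.pos (k + 1)
  have hrR' := hs'.succ_lt_half k
  have hsub := sub_eq_of_eq_add' (h.cantorMap_eq_of_mem_shell hb hs hs' hx)
  have hnorm := congrArg norm hsub
  rw [norm_shellFactor_smul hr hrR hr' hrR' hx] at hnorm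
  have hmem := shellRadius_mem_Icc hrR hrR' hx
  rw [← hnorm] at hmem
  rw [h.cantorMap_eq_of_mem_shell hb hs' hs hmem, hnorm, hsub, smul_smul,
    shellFactor_swap_mul hr hrR hr' hrR' hx, one_smul, add_sub_cancel]

lemma cantorMap_swap (hb : ∀ i, IsNearestNodeMap (b i)) (hs : IsCantorScale s)
    (hs' : IsCantorScale s') (x : ι → ℝ) : cantorMap b s' s (cantorMap b s s' x) = x := by
  rcases mem_nodeCantorSet_or_exists_mem_shell hs x with hx | hx | ⟨k, hx⟩
  · exact cantorMap_swap_of_mem hb hs hs' hx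
  · rw [cantorMap_eq_self hs s' hx, cantorMap_eq_self hs' s hx]
  · obtain ⟨p, σ, h, hres⟩ := exists_isAddress_piGreedyResidual b s x
    exact h.cantorMap_swap_of_mem_shell hb hs hs' (hres (k + 1) ▸ hx)

/-- `cantorMap` as a homeomorphism, whose inverse exchanges the two scales. -/
def cantorHomeomorph (hb : ∀ i, IsNearestNodeMap (b i)) (hs : IsCantorScale s)
    (hs' : IsCantorScale s') : (ι → ℝ) ≃ₜ (ι → ℝ) where
  toFun := cantorMap b s s'
  invFun := cantorMap b s' s
  left_inv := cantorMap_swap hb hs hs'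
  right_inv := cantorMap_swap hb hs' hs
  continuous_toFun := continuous_cantorMap hb hs hs'
  continuous_invFun := continuous_cantorMap hb hs' hs

lemma cantorMap_mem_nodeCantorSet_iff (hb : ∀ i, IsNearestNodeMap (b i)) (hs : IsCantorScale s)
    (hs' : IsCantorScale s') : cantorMap b s s' x ∈ nodeCantorSet b s' ↔ x ∈ nodeCantorSet b s :=
  ⟨fun hx => cantorMap_swap hb hs hs' x ▸ cantorMap_mem_nodeCantorSet hb hs' hs hx,
    cantorMap_mem_nodeCantorSet hb hs hs'⟩

lemma mapsTo_cantorMap (hb : ∀ i, IsNearestNodeMap (b i)) (hs : IsCantorScale s)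
    (hs' : IsCantorScale s') {B : Set (ι → ℝ)}
    (hB : {x | ‖piGreedyResidual b s x 0‖ < 1} ⊆ B) : MapsTo (cantorMap b s s') B B := by
  intro x hx
  by_cases hout : 1 ≤ ‖piGreedyResidual b s (cantorMap b s s' x) 0‖
  · have hfix : cantorMap b s s' x = x :=
      (cantorHomeomorph hb hs hs').injective (cantorMap_eq_self hs s' hout)
    rwa [hfix]
  · exact hB (not_le.1 hout)

lemma locallyLipschitzOn_cantorMap (hb : ∀ i, IsNearestNodeMap (b i)) (hs : IsCantorScale s)
    (s' : ℕ → ℝ) : LocallyLipschitzOn (nodeCantorSet b s)ᶜ (cantorMap b s s') := by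
  intro x hx
  obtain ⟨k, hk⟩ : ∃ k, s k < ‖piGreedyResidual b s x k‖ := by
    simpa [nodeCantorSet] using hx
  obtain ⟨L, hL⟩ := exists_lipschitzWith_cantorPartialMap hb hs s' k
  have hnhds : {y | s k < ‖piGreedyResidual b s y k‖} ∈ nhds x :=
    (isOpen_lt continuous_const (continuous_norm_piGreedyResidual hb s k)).mem_nhds hk
  refine ⟨L, _, mem_nhdsWithin_of_mem_nhds hnhds, fun y hy z hz => ?_⟩
  rw [cantorMap_eq_cantorPartialMap hs s' hy.le, cantorMap_eq_cantorPartialMap hs s' hz.le]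
  exact hL y z

/-- Near a point of the Cantor-type set, the `k`-th partial map is a homothety of ratio `s' k / s k`
and the remaining corrections are Lipschitz with constant the `k`-th tail of the distortions. -/
lemma hasFDerivAt_cantorMap (hb : ∀ i, IsNearestNodeMap (b i)) (hs : IsCantorScale s)
    (hs' : IsCantorScale s') (hd : Summable (cantorDistortion s s'))
    (hratio : Tendsto (fun k => s' k / s k) atTop (nhds 0)) (hx : x ∈ nodeCantorSet b s) :
    HasFDerivAt (cantorMap b s s') (0 : (ι → ℝ) →L[ℝ] (ι → ℝ)) x := by
  obtain ⟨p, σ, h, hx⟩ := (mem_nodeCantorSet_iff hb hs).1 hx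
  refine .of_isLittleO (Asymptotics.isLittleO_iff.2 fun c hc => ?_)
  have hsmall : Tendsto (fun k => s' k / s k + ∑' j, cantorDistortion s s' (j + k)) atTop
      (nhds 0) := by
    simpa using hratio.add (tendsto_sum_nat_add (cantorDistortion s s'))
  obtain ⟨k, hk⟩ := (hsmall.eventually_lt_const hc).exists
  have hnear : ∀ᶠ y in nhds x, ‖y - addressCenter s p σ k‖ < s k :=
    (isOpen_lt (continuous_id.sub continuous_const).norm continuous_const).mem_nhds
      (h.norm_sub_addressCenter_lt hs hx k)
  filter_upwards [hnear] with y hy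
  have hpartial : cantorPartialMap b s s' k y - cantorPartialMap b s s' k x =
      (s' k / s k) • (y - x) := by
    rw [h.cantorPartialMap_eq hb hs hs' hy,
      h.cantorPartialMap_eq hb hs hs' (h.norm_sub_addressCenter_lt hs hx k)]
    module
  have htail := norm_cantorMap_sub_cantorPartialMap_sub_le hb hs hs' hd k y x
  have hratio_nonneg : 0 ≤ s' k / s k := div_nonneg (hs'.pos k).le (hs.pos k).le
  rw [zero_apply, sub_zero]
  calc ‖cantorMap b s s' y - cantorMap b s s' x‖
      = ‖(s' k / s k) • (y - x) + ((cantorMap b s s' y - cantorPartialMap b s s' k y) -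
          (cantorMap b s s' x - cantorPartialMap b s s' k x))‖ := by
        rw [← hpartial]
        congr 1
        abel
    _ ≤ s' k / s k * ‖y - x‖ + (∑' j, cantorDistortion s s' (j + k)) * ‖y - x‖ := by
        refine (norm_add_le _ _).trans (add_le_add ?_ htail)
        rw [norm_smul, Real.norm_of_nonneg hratio_nonneg]
    _ ≤ c * ‖y - x‖ := by
        rw [← add_mul]
        gcongr

end CantorMap

/-! ### Stretching away from the unit cube -/

section Stretch

/-- The nearest-point projection of the line onto `[-1, 1]`. -/
def clampUnit (t : ℝ) : ℝ := max (-1) (min t 1)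

/-- The map of the line that fixes `[-1, 1]` and is affine of slope `a` on either side of it. -/
def stretch (a t : ℝ) : ℝ := clampUnit t + a * (t - clampUnit t)

variable {a t c : ℝ}

lemma clampUnit_of_le (h : t ≤ -1) : clampUnit t = -1 :=
  max_eq_left ((min_le_left t 1).trans h)

lemma clampUnit_of_abs_le (h : |t| ≤ 1) : clampUnit t = t := by
  obtain ⟨hlow, hupp⟩ := abs_le.1 h
  rw [clampUnit, min_eq_left hupp, max_eq_right hlow]

lemma clampUnit_of_ge (h : 1 ≤ t) : clampUnit t = 1 := by
  rw [clampUnit, min_eq_right h, max_eq_right (by norm_num)]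

lemma lipschitzWith_clampUnit : LipschitzWith 1 clampUnit :=
  (LipschitzWith.id.min_const 1).const_max (-1)

lemma le_neg_one_or_abs_le_one_or_one_le (t : ℝ) : t ≤ -1 ∨ |t| ≤ 1 ∨ 1 ≤ t := by
  rcases le_total t (-1) with hlow | hlow
  · exact Or.inl hlow
  · exact Or.inr ((le_total t 1).imp_left fun hupp => abs_le.2 ⟨hlow, hupp⟩)

lemma stretch_of_le (a : ℝ) (h : t ≤ -1) : stretch a t = -1 + a * (t + 1) := by
  rw [stretch, clampUnit_of_le h, sub_neg_eq_add]

lemma stretch_of_abs_le (a : ℝ) (h : |t| ≤ 1) : stretch a t = t := by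
  rw [stretch, clampUnit_of_abs_le h, sub_self, mul_zero, add_zero]

lemma stretch_of_ge (a : ℝ) (h : 1 ≤ t) : stretch a t = 1 + a * (t - 1) := by
  rw [stretch, clampUnit_of_ge h]

@[simp]
lemma stretch_one : stretch 1 t = t := by rw [stretch, one_mul, add_sub_cancel]

lemma stretch_inv_stretch (ha : 0 < a) (t : ℝ) : stretch a⁻¹ (stretch a t) = t := by
  rcases le_neg_one_or_abs_le_one_or_one_le t with h | h | h
  · have hle : -1 + a * (t + 1) ≤ -1 := by nlinarith
    rw [stretch_of_le a h, stretch_of_le _ hle]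
    field_simp
    ring
  · rw [stretch_of_abs_le a h, stretch_of_abs_le _ h]
  · have hge : 1 ≤ 1 + a * (t - 1) := by nlinarith
    rw [stretch_of_ge a h, stretch_of_ge _ hge]
    field_simp
    ring

lemma abs_stretch_le (ha : 0 ≤ a) (hc : 0 ≤ c) (h : |t| ≤ 1 + c) : |stretch a t| ≤ 1 + a * c := by
  have hac := mul_nonneg ha hc
  obtain ⟨hlow, hupp⟩ := abs_le.1 h
  rw [abs_le]
  rcases le_neg_one_or_abs_le_one_or_one_le t with ht | ht | ht
  · rw [stretch_of_le a ht]
    constructor <;> nlinarith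
  · obtain ⟨hlow', hupp'⟩ := abs_le.1 ht
    rw [stretch_of_abs_le a ht]
    constructor <;> linarith
  · rw [stretch_of_ge a ht]
    constructor <;> nlinarith

lemma lipschitzWith_stretch (a : ℝ) : LipschitzWith (1 + 2 * ‖a‖₊) (stretch a) := by
  refine LipschitzWith.of_dist_le_mul fun t u => ?_
  have hclamp : |clampUnit t - clampUnit u| ≤ |t - u| := by
    simpa [Real.dist_eq] using lipschitzWith_clampUnit.dist_le_mul t u
  have hsplit : stretch a t - stretch a u =
      (clampUnit t - clampUnit u) + a * ((t - u) - (clampUnit t - clampUnit u)) := by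
    unfold stretch
    ring
  push_cast
  rw [Real.dist_eq, Real.dist_eq, Real.norm_eq_abs, hsplit]
  calc |(clampUnit t - clampUnit u) + a * ((t - u) - (clampUnit t - clampUnit u))|
      ≤ |clampUnit t - clampUnit u| + |a| * (|t - u| + |clampUnit t - clampUnit u|) := by
        refine (abs_add_le _ _).trans ?_
        rw [abs_mul]
        gcongr
        exact abs_sub _ _
    _ ≤ |t - u| + |a| * (|t - u| + |t - u|) := by gcongr
    _ = (1 + 2 * |a|) * |t - u| := by ring

variable {ι : Type*}

/-- The coordinatewise product of the maps `stretch (a i)`. -/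
def piStretch (a : ι → ℝ) (x : ι → ℝ) : ι → ℝ := fun i => stretch (a i) (x i)

lemma piStretch_mem_box_iff {a c : ι → ℝ} (ha : ∀ i, 0 < a i) (hc : ∀ i, 0 ≤ c i) {x : ι → ℝ} :
    (∀ i, |piStretch a x i| ≤ 1 + a i * c i) ↔ ∀ i, |x i| ≤ 1 + c i := by
  refine ⟨fun h i => ?_, fun h i => abs_stretch_le (ha i).le (hc i) (h i)⟩
  have hinv := abs_stretch_le (inv_nonneg.2 (ha i).le) (mul_nonneg (ha i).le (hc i)) (h i)
  rwa [piStretch, stretch_inv_stretch (ha i), inv_mul_cancel_left₀ (ha i).ne'] at hinv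

lemma lipschitzWith_piStretch [Fintype ι] (a : ι → ℝ) :
    LipschitzWith (1 + 2 * ‖a‖₊) (piStretch a) :=
  LipschitzWith.of_dist_le_mul fun x y => (dist_pi_le_iff (by positivity)).2 fun i =>
    ((lipschitzWith_stretch (a i)).dist_le_mul _ _).trans <| by
      gcongr
      exacts [nnnorm_le_pi_nnnorm a i, dist_le_pi_dist x y i]

/-- `piStretch a` as a homeomorphism. -/
def piStretchHomeomorph [Fintype ι] {a : ι → ℝ} (ha : ∀ i, 0 < a i) : (ι → ℝ) ≃ₜ (ι → ℝ) where
  toFun := piStretch a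
  invFun := piStretch a⁻¹
  left_inv x := funext fun i => stretch_inv_stretch (ha i) (x i)
  right_inv x := funext fun i => by
    simpa [piStretch] using stretch_inv_stretch (inv_pos.2 (ha i)) (x i)
  continuous_toFun := (lipschitzWith_piStretch a).continuous
  continuous_invFun := (lipschitzWith_piStretch a⁻¹).continuous

end Stretch

/-! ### Local Lipschitz maps -/

section LocallyLipschitz

variable {X Y Z : Type*} [PseudoEMetricSpace X] [PseudoEMetricSpace Y] [PseudoEMetricSpace Z]

lemma locallyLipschitzOn_comp {g : Y → Z} {f : X → Y} {S : Set X} {T : Set Y}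
    (hg : LocallyLipschitzOn T g) (hf : LocallyLipschitzOn S f) (hST : MapsTo f S T) :
    LocallyLipschitzOn S (g ∘ f) := by
  intro x hx
  obtain ⟨L, U, hU, hfU⟩ := hf hx
  obtain ⟨M, V, hV, hgV⟩ := hg (hST hx)
  have hpre : f ⁻¹' V ∈ nhdsWithin x S := (hf.continuousOn x hx).tendsto_nhdsWithin hST hV
  exact ⟨M * L, U ∩ f ⁻¹' V, inter_mem hU hpre,
    hgV.comp (hfU.mono inter_subset_left) fun _ hy => hy.2⟩

lemma locallyBiLipschitzOn_of_leftInvOn {f g : E4 → E4} {S T : Set E4}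
    (hf : LocallyLipschitzOn S f) (hg : LocallyLipschitzOn T g) (hST : MapsTo f S T)
    (hgf : LeftInvOn g f S) : LocallyBiLipschitzOn f S := by
  intro x hx
  obtain ⟨L, U, hU, hfU⟩ := hf hx
  obtain ⟨M, V, hV, hgV⟩ := hg (hST hx)
  have hpre : f ⁻¹' V ∈ nhdsWithin x S := (hf.continuousOn x hx).tendsto_nhdsWithin hST hV
  obtain ⟨W, hWopen, hxW, hW⟩ := mem_nhdsWithin.1 (inter_mem hU hpre)
  refine ⟨W, hWopen, hxW, L + M + 1, by positivity, fun y hy z hz => ⟨?_, ?_⟩⟩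
  · have hdist := hgV.dist_le_mul (f y) (hW hy).2 (f z) (hW hz).2
    rw [hgf hy.2, hgf hz.2] at hdist
    rw [inv_mul_le_iff₀ (by positivity)]
    refine hdist.trans (mul_le_mul_of_nonneg_right ?_ dist_nonneg)
    linarith [L.coe_nonneg]
  · refine (hfU.dist_le_mul y (hW hy).1 z (hW hz).1).trans
      (mul_le_mul_of_nonneg_right ?_ dist_nonneg)
    linarith [M.coe_nonneg]

end LocallyLipschitz

lemma hasFDerivAt_zero_comp_of_lipschitzWith {𝕜 E F G : Type*} [NontriviallyNormedField 𝕜]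
    [NormedAddCommGroup E] [NormedSpace 𝕜 E] [NormedAddCommGroup F] [NormedSpace 𝕜 F]
    [NormedAddCommGroup G] [NormedSpace 𝕜 G] {f : E → F} {g : F → G} {x : E} {L : ℝ≥0}
    (hg : LipschitzWith L g) (hf : HasFDerivAt f (0 : E →L[𝕜] F) x) :
    HasFDerivAt (g ∘ f) (0 : E →L[𝕜] G) x := by
  have hO : (fun y => (g ∘ f) y - (g ∘ f) x) =O[nhds x] fun y => f y - f x :=
    .of_bound L (.of_forall fun y => by
      simpa only [dist_eq_norm, Function.comp_apply] using hg.dist_le_mul (f y) (f x))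
  have hlittle := hf.isLittleO
  simp only [zero_apply, sub_zero] at hlittle
  refine .of_isLittleO ?_
  simpa only [zero_apply, sub_zero] using hO.trans_isLittleO hlittle

/-! ### The squeezing homeomorphism -/

section Squeeze

variable {ι : Type*} [Fintype ι] {b : ι → ℝ → ℝ} {s s' : ℕ → ℝ} {a c : ι → ℝ}

lemma cantorMap_mem_box_iff (hb : ∀ i, IsNearestNodeMap (b i)) (hs : IsCantorScale s)
    (hs' : IsCantorScale s') (hbc : ∀ i t, |b i t| ≤ c i) {x : ι → ℝ} :
    (∀ i, |cantorMap b s s' x i| ≤ 1 + c i) ↔ ∀ i, |x i| ≤ 1 + c i := by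
  have hB : ∀ r, {x | ‖piGreedyResidual b r x 0‖ < 1} ⊆ {x | ∀ i, |x i| ≤ 1 + c i} :=
    fun r x hx i => by
      have hres : |x i - b i (x i)| < 1 := (norm_le_pi_norm _ i).trans_lt hx
      linarith [abs_sub_abs_le_abs_sub (x i) (b i (x i)), hbc i (x i)]
  refine ⟨fun h => ?_, fun h => mapsTo_cantorMap hb hs hs' (hB s') h⟩
  have hinv := mapsTo_cantorMap hb hs' hs (hB s) h
  rwa [cantorMap_swap hb hs hs'] at hinv

lemma piStretch_eq_self (hab : ∀ i, a i = 1 ∨ ∀ t, b i t = 0) (hs : IsCantorScale s) {x : ι → ℝ}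
    (hx : x ∈ nodeCantorSet b s) : piStretch a x = x := by
  funext i
  rcases hab i with ha | hb
  · rw [piStretch, ha, stretch_one]
  · have hres : |x i - b i (x i)| ≤ s 0 := (norm_le_pi_norm _ i).trans (hx 0)
    rw [hb, sub_zero, hs.zero_eq_one] at hres
    exact stretch_of_abs_le _ hres

lemma piStretch_mem_nodeCantorSet_iff (ha : ∀ i, 0 < a i) (hab : ∀ i, a i = 1 ∨ ∀ t, b i t = 0)
    (hs : IsCantorScale s) {x : ι → ℝ} :
    piStretch a x ∈ nodeCantorSet b s ↔ x ∈ nodeCantorSet b s := by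
  refine ⟨fun h => ?_, fun h => (piStretch_eq_self hab hs h).symm ▸ h⟩
  have hfix : piStretch a x = x := (piStretchHomeomorph ha).injective (piStretch_eq_self hab hs h)
  rwa [hfix] at h

/-- `cantorMap` followed by `piStretch`, on Euclidean space. -/
def squeezeHomeomorph (hb : ∀ i, IsNearestNodeMap (b i)) (hs : IsCantorScale s)
    (hs' : IsCantorScale s') (ha : ∀ i, 0 < a i) : EuclideanSpace ℝ ι ≃ₜ EuclideanSpace ℝ ι :=
  (PiLp.homeomorph 2 fun _ => ℝ).trans <| (cantorHomeomorph hb hs hs').trans <|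
    (piStretchHomeomorph ha).trans (PiLp.homeomorph 2 fun _ => ℝ).symm

section Properties

variable (hb : ∀ i, IsNearestNodeMap (b i)) (hs : IsCantorScale s) (hs' : IsCantorScale s')
  (ha : ∀ i, 0 < a i)

lemma squeezeHomeomorph_mem_box_iff (hc : ∀ i, 0 ≤ c i) (hbc : ∀ i t, |b i t| ≤ c i)
    {x : EuclideanSpace ℝ ι} :
    (∀ i, |squeezeHomeomorph hb hs hs' ha x i| ≤ 1 + a i * c i) ↔ ∀ i, |x i| ≤ 1 + c i :=
  (piStretch_mem_box_iff ha hc).trans (cantorMap_mem_box_iff hb hs hs' hbc)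

lemma squeezeHomeomorph_mem_nodeCantorSet_iff (hab : ∀ i, a i = 1 ∨ ∀ t, b i t = 0)
    {x : EuclideanSpace ℝ ι} :
    (squeezeHomeomorph hb hs hs' ha x).ofLp ∈ nodeCantorSet b s' ↔ x.ofLp ∈ nodeCantorSet b s :=
  (piStretch_mem_nodeCantorSet_iff ha hab hs').trans (cantorMap_mem_nodeCantorSet_iff hb hs hs')

lemma coe_squeezeHomeomorph : ⇑(squeezeHomeomorph hb hs hs' ha) =
    (WithLp.toLp 2 ∘ piStretch a) ∘ (cantorMap b s s' ∘ WithLp.ofLp) := rfl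

lemma coe_squeezeHomeomorph_symm : ⇑(squeezeHomeomorph hb hs hs' ha).symm =
    (WithLp.toLp 2 ∘ cantorMap b s' s) ∘ (piStretch a⁻¹ ∘ WithLp.ofLp) := rfl

lemma lipschitzWith_squeezeHomeomorph (hd : Summable (cantorDistortion s s')) :
    LipschitzWith (NNReal.sqrt (Fintype.card ι) *
      ((1 + 2 * ‖a‖₊) * (1 + ∑' k, cantorDistortion s s' k).toNNReal))
      (squeezeHomeomorph hb hs hs' ha) := by
  have hlip := (PiLp.lipschitzWith_toLp 2 fun _ : ι => ℝ).comp <|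
    (lipschitzWith_piStretch a).comp <| (lipschitzWith_cantorMap hb hs hs' hd).comp
      (PiLp.lipschitzWith_ofLp 2 fun _ : ι => ℝ)
  simpa [NNReal.sqrt_eq_rpow, coe_squeezeHomeomorph, Function.comp_assoc] using hlip

lemma locallyLipschitzOn_squeezeHomeomorph : LocallyLipschitzOn
    (WithLp.ofLp ⁻¹' nodeCantorSet b s)ᶜ (squeezeHomeomorph hb hs hs' ha) := by
  have hofLp := (PiLp.lipschitzWith_ofLp 2 fun _ : ι => ℝ).locallyLipschitz
  have hpost := ((PiLp.lipschitzWith_toLp 2 fun _ : ι => ℝ).comp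
    (lipschitzWith_piStretch a)).locallyLipschitz
  rw [coe_squeezeHomeomorph]
  exact locallyLipschitzOn_comp hpost.locallyLipschitzOn
    (locallyLipschitzOn_comp (locallyLipschitzOn_cantorMap hb hs s') hofLp.locallyLipschitzOn
      fun _ hx => hx) (mapsTo_univ _ _)

lemma locallyLipschitzOn_squeezeHomeomorph_symm (hab : ∀ i, a i = 1 ∨ ∀ t, b i t = 0) :
    LocallyLipschitzOn (WithLp.ofLp ⁻¹' nodeCantorSet b s')ᶜ
      (squeezeHomeomorph hb hs hs' ha).symm := by
  have htoLp := (PiLp.lipschitzWith_toLp 2 fun _ : ι => ℝ).locallyLipschitz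
  have hpre := ((lipschitzWith_piStretch a⁻¹).comp
    (PiLp.lipschitzWith_ofLp 2 fun _ : ι => ℝ)).locallyLipschitz
  have hmaps : MapsTo (piStretch a⁻¹ ∘ WithLp.ofLp)
      (WithLp.ofLp ⁻¹' nodeCantorSet b s' : Set (EuclideanSpace ℝ ι))ᶜ (nodeCantorSet b s')ᶜ :=
    fun x hx => (piStretch_mem_nodeCantorSet_iff (fun i => inv_pos.2 (ha i))
      (fun i => (hab i).imp_left fun h => by rw [h, inv_one]) hs').not.2 hx
  rw [coe_squeezeHomeomorph_symm]
  exact locallyLipschitzOn_comp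
    (locallyLipschitzOn_comp htoLp.locallyLipschitzOn (locallyLipschitzOn_cantorMap hb hs' s)
      (mapsTo_univ _ _)) hpre.locallyLipschitzOn hmaps

lemma hasFDerivAt_squeezeHomeomorph (hd : Summable (cantorDistortion s s'))
    (hratio : Tendsto (fun k => s' k / s k) atTop (nhds 0)) {x : EuclideanSpace ℝ ι}
    (hx : x.ofLp ∈ nodeCantorSet b s) :
    HasFDerivAt (squeezeHomeomorph hb hs hs' ha)
      (0 : EuclideanSpace ℝ ι →L[ℝ] EuclideanSpace ℝ ι) x := by
  have hcantor := (hasFDerivAt_cantorMap hb hs hs' hd hratio hx).comp x (PiLp.hasFDerivAt_ofLp 2 x)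
  rw [ContinuousLinearMap.zero_comp] at hcantor
  rw [coe_squeezeHomeomorph]
  exact hasFDerivAt_zero_comp_of_lipschitzWith
    ((PiLp.lipschitzWith_toLp 2 fun _ : ι => ℝ).comp (lipschitzWith_piStretch a)) hcantor

end Properties

end Squeeze

/-! ### Cantor plates -/

section CantorPlate

/-- The even integer of absolute value at most `2 * m` nearest to `t`, where ties are broken as in
`round`. -/
def nearestEven (m : ℕ) (t : ℝ) : ℝ := 2 * (max (-m) (min m (round (t / 2))) : ℤ)

/-- Coordinatewise nearest-point maps onto the nodes `(2n₁, 2n₂, 2n₃, 0)` of the `m`-Cantor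
plates. -/
def plateNodes (m : ℕ) (i : Fin 4) : ℝ → ℝ := nearestEven (![m, m, m, 0] i)

variable {m : ℕ} {s : ℕ → ℝ}

lemma abs_max_neg_min_le (m : ℕ) (n : ℤ) : |max (-m : ℤ) (min m n)| ≤ m := by
  rw [abs_le]
  lia

lemma max_neg_min_eq_self {n : ℤ} (hn : |n| ≤ m) : max (-m : ℤ) (min m n) = n := by
  rw [abs_le] at hn
  lia

lemma abs_sub_max_neg_min_round_le (t : ℝ) {n : ℤ} (hn : |n| ≤ m) :
    |t - (max (-m) (min m (round t)) : ℤ)| ≤ |t - n| := by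
  have hround := abs_le.1 (abs_sub_round t)
  obtain ⟨hlow, hupp⟩ := abs_le.1 hn
  rcases lt_or_ge (m : ℤ) (round t) with h | h
  · have hclamp : max (-m : ℤ) (min m (round t)) = m := by lia
    have hcast : (m : ℝ) + 1 ≤ round t := by exact_mod_cast h
    have hn' : (n : ℝ) ≤ m := by exact_mod_cast hupp
    rw [hclamp, Int.cast_natCast, abs_of_nonneg (by linarith), abs_of_nonneg (by linarith)]
    linarith
  rcases lt_or_ge (round t) (-m : ℤ) with h' | h'
  · have hclamp : max (-m : ℤ) (min m (round t)) = -m := by lia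
    have hcast : (round t : ℝ) + 1 ≤ -m := by exact_mod_cast h'
    have hn' : -(m : ℝ) ≤ n := by exact_mod_cast hlow
    rw [hclamp, Int.cast_neg, Int.cast_natCast, abs_of_nonpos (by linarith),
      abs_of_nonpos (by linarith)]
    linarith
  · rw [max_neg_min_eq_self (abs_le.2 ⟨h', h⟩)]
    exact round_le t n

lemma mem_range_nearestEven {p : ℝ} :
    p ∈ range (nearestEven m) ↔ ∃ n : ℤ, |n| ≤ m ∧ p = 2 * n := by
  constructor
  · rintro ⟨t, rfl⟩
    exact ⟨_, abs_max_neg_min_le m _, rfl⟩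
  · rintro ⟨n, hn, rfl⟩
    refine ⟨2 * n, ?_⟩
    rw [nearestEven, mul_div_cancel_left₀ _ two_ne_zero, round_intCast, max_neg_min_eq_self hn]

lemma isNearestNodeMap_nearestEven (m : ℕ) : IsNearestNodeMap (nearestEven m) where
  two_le_abs_sub t u hne := by
    unfold nearestEven at hne ⊢
    rw [← mul_sub, abs_mul, abs_two]
    have hint : (1 : ℝ) ≤ |((max (-m) (min m (round (t / 2))) : ℤ) : ℝ) -
        (max (-m) (min m (round (u / 2))) : ℤ)| := by
      exact_mod_cast Int.one_le_abs (sub_ne_zero.2 fun h => hne (by rw [h]))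
    linarith
  abs_sub_le_abs_sub t u := by
    have hhalf : ∀ r : ℝ, |t - 2 * r| = 2 * |t / 2 - r| := fun r => by
      rw [← abs_two, ← abs_mul, abs_two]
      ring_nf
    unfold nearestEven
    rw [hhalf, hhalf]
    exact mul_le_mul_of_nonneg_left
      (abs_sub_max_neg_min_round_le _ (abs_max_neg_min_le m _)) zero_le_two

lemma abs_nearestEven_le (m : ℕ) (t : ℝ) : |nearestEven m t| ≤ 2 * m := by
  rw [nearestEven, abs_mul, abs_two]
  gcongr
  exact_mod_cast abs_max_neg_min_le m _

lemma nearestEven_zero (t : ℝ) : nearestEven 0 t = 0 := by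
  simpa using abs_nearestEven_le 0 t

lemma isNearestNodeMap_plateNodes (m : ℕ) (i : Fin 4) : IsNearestNodeMap (plateNodes m i) :=
  isNearestNodeMap_nearestEven _

lemma sub_mem_cantorU1_iff {t p : ℝ} {k : ℕ} : t - p ∈ cantorU1 s k ↔
    ∃ σ : ℕ → ℝ, (∀ j, |σ j| = 1) ∧ |t - addressCenter s p σ k| < s k := by
  have hsum : ∀ σ : ℕ → ℝ, t - p - 2⁻¹ * ∑ j : Fin k, s j * σ j = t - addressCenter s p σ k :=
    fun σ => by
      rw [addressCenter, Finset.sum_range, sub_sub, Finset.mul_sum]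
      simp only [smul_eq_mul, div_eq_inv_mul, mul_assoc]
  simp only [cantorU1, mem_iUnion₂, mem_ofPred_eq, exists_prop]
  constructor
  · rintro ⟨w, hw, h⟩
    refine ⟨fun j => if hj : j < k then w ⟨j, hj⟩ else 1, fun j => ?_, ?_⟩
    · beta_reduce
      split_ifs
      exacts [(abs_eq zero_le_one).2 (hw _), abs_one]
    · rw [← hsum]
      simpa only [Fin.is_lt, dite_true] using h
  · rintro ⟨σ, hσ, h⟩
    exact ⟨fun j => σ j, fun j => (abs_eq zero_le_one).1 (hσ j), by rwa [hsum]⟩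

lemma exists_sub_mem_cantorTypeSet1_iff {b : ℝ → ℝ} (hb : IsNearestNodeMap b)
    (hs : IsCantorScale s) {t : ℝ} :
    (∃ p ∈ range b, t - p ∈ cantorTypeSet1 s) ↔ ∀ k, |greedyResidual b s t k| ≤ s k := by
  constructor
  · rintro ⟨p, hp, h⟩ k
    obtain ⟨σ, hσ, hlt⟩ := sub_mem_cantorU1_iff.1 (mem_iInter₂.1 h (k + 1) (Nat.le_add_left 1 k))
    rw [← greedyResidual_eq hb hs hp hσ hlt] at hlt
    exact (abs_greedyResidual_lt_of_succ (hlt.trans (hs.succ_lt_half k))).le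
  · intro h
    refine ⟨b t, mem_range_self t, mem_iInter₂.2 fun k _ => sub_mem_cantorU1_iff.2
      ⟨_, fun j => abs_nonnegSign (greedyResidual b s t j), ?_⟩⟩
    rw [← greedyResidual_eq_sub_addressCenter]
    exact abs_greedyResidual_lt_of_succ ((h (k + 1)).trans_lt (hs.succ_lt_half k))

lemma mem_nodeCantorSet_iff_forall_exists {ι : Type*} [Fintype ι] {b : ι → ℝ → ℝ}
    (hb : ∀ i, IsNearestNodeMap (b i)) (hs : IsCantorScale s) {x : ι → ℝ} :
    x ∈ nodeCantorSet b s ↔ ∀ i, ∃ p ∈ range (b i), x i - p ∈ cantorTypeSet1 s := by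
  simp only [exists_sub_mem_cantorTypeSet1_iff (hb _) hs, nodeCantorSet, mem_ofPred_eq,
    pi_norm_le_iff_of_nonneg (hs.pos _).le, piGreedyResidual, Real.norm_eq_abs]
  exact forall_comm

lemma mem_cantorPlate_iff (hs : IsCantorScale s) {x : E4} :
    x ∈ cantorPlate s m ↔ x.ofLp ∈ nodeCantorSet (plateNodes m) s := by
  have htr : ∀ n₁ n₂ n₃ : ℤ, (tr n₁ n₂ n₃).ofLp = ![2 * (n₁ : ℝ), 2 * n₂, 2 * n₃, 0] := by
    intro n₁ n₂ n₃
    ext i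
    fin_cases i <;> simp [tr]
  have hnode : ∀ t : ℝ, (∃ p ∈ range (nearestEven m), t - p ∈ cantorTypeSet1 s) ↔
      ∃ n : ℤ, |n| ≤ m ∧ t - 2 * n ∈ cantorTypeSet1 s := by
    simp only [mem_range_nearestEven]
    exact fun t => ⟨fun ⟨_, ⟨n, hn, hp⟩, h⟩ => ⟨n, hn, hp ▸ h⟩,
      fun ⟨n, hn, h⟩ => ⟨_, ⟨n, hn, rfl⟩, h⟩⟩
  have hzero : ∀ t : ℝ, (∃ p ∈ range (nearestEven 0), t - p ∈ cantorTypeSet1 s) ↔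
      t - 0 ∈ cantorTypeSet1 s := by
    simp only [exists_range_iff, nearestEven_zero, exists_const, implies_true]
  rw [mem_nodeCantorSet_iff_forall_exists (isNearestNodeMap_plateNodes m) hs]
  simp only [Fin.forall_fin_succ, cantorPlate, plateNodes, mem_ofPred_eq, PiLp.sub_apply, htr]
  simp only [Matrix.cons_val_zero, Matrix.cons_val_succ, hnode, hzero, IsEmpty.forall_iff,
    and_true]
  constructor
  · rintro ⟨n₁, n₂, n₃, h₁, h₂, h₃, h⟩
    exact ⟨⟨n₁, h₁, h.1⟩, ⟨n₂, h₂, h.2.1⟩, ⟨n₃, h₃, h.2.2.1⟩, h.2.2.2⟩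
  · rintro ⟨⟨n₁, h₁, hx₁⟩, ⟨n₂, h₂, hx₂⟩, ⟨n₃, h₃, hx₃⟩, hx₄⟩
    exact ⟨n₁, n₂, n₃, h₁, h₂, h₃, hx₁, hx₂, hx₃, hx₄⟩

lemma cantorPlate_eq_preimage (hs : IsCantorScale s) :
    cantorPlate s m = WithLp.ofLp ⁻¹' nodeCantorSet (plateNodes m) s :=
  ext fun _ => mem_cantorPlate_iff hs

end CantorPlate

/-! ### The scales `rA` and `rB` -/

section Scales

variable {α β : ℝ}

lemma rB_eq (β : ℝ) (k : ℕ) : rB β k = ((2 : ℝ) ^ (-β)) ^ k * (1 / 2) ^ k := by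
  rw [rB, Real.rpow_mul_natCast zero_le_two, neg_add, Real.rpow_add two_pos, Real.rpow_neg_one,
    mul_pow, one_div]

lemma two_rpow_neg_lt_one (hβ : 0 < β) : (2 : ℝ) ^ (-β) < 1 :=
  Real.rpow_lt_one_of_one_lt_of_neg one_lt_two (neg_neg_of_pos hβ)

lemma isCantorScale_rB (hβ : 0 < β) : IsCantorScale (rB β) where
  pos k := Real.rpow_pos_of_pos two_pos _
  zero_eq_one := by simp [rB]
  two_mul_succ_lt k := by
    have hlt := two_rpow_neg_lt_one hβ
    have hpos : 0 < ((2 : ℝ) ^ (-β)) ^ k * (1 / 2) ^ k := by positivity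
    rw [rB_eq, rB_eq, pow_succ, pow_succ]
    nlinarith

lemma mul_rpow_neg_le_rpow_neg_sub {x : ℝ} (hx : 0 < x) (hα : 0 ≤ α) :
    α * (x + 1) ^ (-(α + 1)) ≤ x ^ (-α) - (x + 1) ^ (-α) := by
  have hx1 : 0 < x + 1 := by linarith
  have hlog : Real.log (x / (x + 1)) ≤ -(x + 1)⁻¹ :=
    (Real.log_le_sub_one_of_pos (by positivity)).trans_eq (by field_simp; ring)
  have hbernoulli : 1 + α * (x + 1)⁻¹ ≤ (x / (x + 1)) ^ (-α) := by
    rw [Real.rpow_def_of_pos (by positivity)]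
    nlinarith [Real.add_one_le_exp (Real.log (x / (x + 1)) * -α)]
  calc α * (x + 1) ^ (-(α + 1))
      = (x + 1) ^ (-α) * (1 + α * (x + 1)⁻¹) - (x + 1) ^ (-α) := by
        rw [neg_add, Real.rpow_add hx1, Real.rpow_neg_one]
        ring
    _ ≤ (x + 1) ^ (-α) * (x / (x + 1)) ^ (-α) - (x + 1) ^ (-α) := by gcongr
    _ = x ^ (-α) - (x + 1) ^ (-α) := by
        rw [← Real.mul_rpow hx1.le (by positivity), mul_div_cancel₀ _ hx1.ne']

lemma natCast_add_one_rpow_neg_le_one (hα : 0 ≤ α) (K : ℕ) : ((K : ℝ) + 1) ^ (-α) ≤ 1 :=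
  Real.rpow_le_one_of_one_le_of_nonpos (by simp) (by simpa using hα)

lemma half_pow_mul_le_rA_sub (hα : 0 ≤ α) (K k : ℕ) :
    (1 / 2 : ℝ) ^ k * (α * ((K : ℝ) + k + 2) ^ (-(α + 1))) / 2 ≤
      rA α K k - 2 * rA α K (k + 1) := by
  have hgap := mul_rpow_neg_le_rpow_neg_sub (x := (K : ℝ) + k + 1) (by positivity) hα
  have hgap' := (mul_nonneg hα (by positivity)).trans hgap
  have hone := natCast_add_one_rpow_neg_le_one hα K
  calc (1 / 2 : ℝ) ^ k * (α * ((K : ℝ) + k + 2) ^ (-(α + 1))) / 2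
      ≤ (1 / 2) ^ k * (((K : ℝ) + k + 1) ^ (-α) - ((K : ℝ) + k + 1 + 1) ^ (-α)) /
          (1 + ((K : ℝ) + 1) ^ (-α)) := by
        rw [show (K : ℝ) + k + 2 = K + k + 1 + 1 by ring]
        gcongr
        linarith
    _ = rA α K k - 2 * rA α K (k + 1) := by
        rw [rA, rA, pow_succ, one_div, inv_pow, Nat.cast_succ, ← add_assoc (K : ℝ)]
        field_simp
        ring

lemma half_pow_div_two_le_rA (hα : 0 ≤ α) (K k : ℕ) : (1 / 2 : ℝ) ^ k / 2 ≤ rA α K k := by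
  have hone := natCast_add_one_rpow_neg_le_one hα K
  have hk : 0 ≤ ((K : ℝ) + k + 1) ^ (-α) := by positivity
  rw [rA, one_div, inv_pow]
  gcongr
  · exact le_mul_of_one_le_right (by positivity) (by linarith)
  · linarith

lemma isCantorScale_rA (hα : 0 < α) (K : ℕ) : IsCantorScale (rA α K) where
  pos k := lt_of_lt_of_le (by positivity) (half_pow_div_two_le_rA hα.le K k)
  zero_eq_one := by
    have : 1 + ((K : ℝ) + 1) ^ (-α) ≠ 0 := by positivity
    simp [rA, this]
  two_mul_succ_lt k := by
    have hpos : 0 < (1 / 2 : ℝ) ^ k * (α * ((K : ℝ) + k + 2) ^ (-(α + 1))) / 2 := by positivity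
    linarith [half_pow_mul_le_rA_sub hα.le K k]

lemma tendsto_rB_div_rA (hα : 0 < α) (hβ : 0 < β) (K : ℕ) :
    Tendsto (fun k => rB β k / rA α K k) atTop (nhds 0) := by
  have hrA := (isCantorScale_rA hα K).pos
  have hlim : Tendsto (fun k : ℕ => 2 * ((2 : ℝ) ^ (-β)) ^ k) atTop (nhds 0) := by
    simpa using (tendsto_pow_atTop_nhds_zero_of_lt_one (by positivity)
      (two_rpow_neg_lt_one hβ)).const_mul 2
  refine squeeze_zero (fun k => (div_pos ((isCantorScale_rB hβ).pos k) (hrA k)).le)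
    (fun k => (div_le_iff₀ (hrA k)).2 ?_) hlim
  calc rB β k = 2 * ((2 : ℝ) ^ (-β)) ^ k * ((1 / 2) ^ k / 2) := by
        rw [rB_eq]
        ring
    _ ≤ 2 * ((2 : ℝ) ^ (-β)) ^ k * rA α K k := by
        gcongr
        exact half_pow_div_two_le_rA hα.le K k

/-- A summable majorant of the distortions between the scales `rA α K` and `rB β`, uniform in the
exponents `β ≥ β₀`. -/
def distortionBound (β₀ : ℝ) (K : ℕ) (α : ℝ) (k : ℕ) : ℝ :=
  8 / α * (((2 : ℝ) ^ (-β₀)) ^ k * ((K : ℝ) + k + 2) ^ (α + 1))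

lemma summable_pow_mul_add_rpow {θ : ℝ} (hθ : 0 < θ) (hθ' : θ < 1) (n : ℕ) (p : ℝ) :
    Summable fun k : ℕ => θ ^ k * ((k + n + 1 : ℕ) : ℝ) ^ p := by
  have hpow : Summable fun k : ℕ => (k : ℝ) ^ ⌈p⌉₊ * θ ^ k :=
    summable_pow_mul_geometric_of_norm_lt_one _ (by rwa [Real.norm_of_nonneg hθ.le])
  have hshift := ((summable_nat_add_iff (n + 1)).2 hpow).mul_left (θ ^ (n + 1))⁻¹
  refine Summable.of_nonneg_of_le (fun k => by positivity) (fun k => ?_) hshift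
  calc θ ^ k * ((k + n + 1 : ℕ) : ℝ) ^ p
      ≤ θ ^ k * ((k + n + 1 : ℕ) : ℝ) ^ (⌈p⌉₊ : ℝ) := by
        gcongr
        · exact_mod_cast Nat.le_add_left 1 (k + n)
        · exact Nat.le_ceil p
    _ = (θ ^ (n + 1))⁻¹ * (((k + (n + 1) : ℕ) : ℝ) ^ ⌈p⌉₊ * θ ^ (k + (n + 1))) := by
        rw [Real.rpow_natCast, pow_add θ k, ← add_assoc k]
        field_simp

lemma summable_distortionBound {β₀ : ℝ} (hβ₀ : 0 < β₀) (K : ℕ) (α : ℝ) :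
    Summable (distortionBound β₀ K α) := by
  refine ((summable_pow_mul_add_rpow (by positivity) (two_rpow_neg_lt_one hβ₀) (K + 1)
    (α + 1)).mul_left (8 / α)).congr fun k => ?_
  rw [distortionBound]
  push_cast
  ring_nf

lemma cantorDistortion_rA_rB_le {β₀ : ℝ} (hα : 0 < α) (hβ : 0 < β) (hβ₀ : β₀ ≤ β) (K k : ℕ) :
    cantorDistortion (rA α K) (rB β) k ≤ distortionBound β₀ K α k := by
  have hA := isCantorScale_rA hα K
  have hB := isCantorScale_rB hβ
  have hquarter : rA α K k / 2 ≤ 2 * rA α K (k + 1) := by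
    have hlow := half_pow_div_two_le_rA hα.le K (k + 1)
    rw [pow_succ] at hlow
    linarith [hA.le_half_pow k]
  have hgap : (1 / 2 : ℝ) ^ k * (α * ((K : ℝ) + k + 2) ^ (-(α + 1))) / 4 ≤
      rA α K k / 2 - rA α K (k + 1) := by
    linarith [half_pow_mul_le_rA_sub hα.le K k]
  calc cantorDistortion (rA α K) (rB β) k
      ≤ 4 * (rB β k / 2) / (rA α K k / 2 - rA α K (k + 1)) :=
        shellDistortion_le (hA.pos _) (hA.succ_lt_half k) hquarter (hB.pos _) (hB.succ_lt_half k)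
    _ ≤ 4 * (((2 : ℝ) ^ (-β₀)) ^ k * (1 / 2) ^ k / 2) /
          ((1 / 2 : ℝ) ^ k * (α * ((K : ℝ) + k + 2) ^ (-(α + 1))) / 4) := by
        rw [rB_eq]
        gcongr
        exact one_le_two
    _ = distortionBound β₀ K α k := by
        rw [distortionBound, Real.rpow_neg (x := (K : ℝ) + k + 2) (by positivity)]
        field_simp
        norm_num

lemma summable_cantorDistortion_rA_rB (hα : 0 < α) (hβ : 0 < β) (K : ℕ) :
    Summable (cantorDistortion (rA α K) (rB β)) :=
  Summable.of_nonneg_of_le (cantorDistortion_nonneg (isCantorScale_rA hα K) _)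
    (cantorDistortion_rA_rB_le hα hβ le_rfl K) (summable_distortionBound hβ K α)

lemma tsum_cantorDistortion_rA_rB_le {β₀ : ℝ} (hα : 0 < α) (hβ₀ : 0 < β₀) (hβ : β₀ ≤ β) (K : ℕ) :
    ∑' k, cantorDistortion (rA α K) (rB β) k ≤ ∑' k, distortionBound β₀ K α k :=
  (summable_cantorDistortion_rA_rB hα (hβ₀.trans_le hβ) K).tsum_le_tsum
    (cantorDistortion_rA_rB_le hα (hβ₀.trans_le hβ) hβ K) (summable_distortionBound hβ₀ K α)

end Scales

/-! ### Squeezing a box around a Cantor plate -/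

section PlateSqueeze

/-- The half-widths of `Rbox m t` beyond the central cube `[-1, 1]⁴`. -/
def boxMargin (m : ℕ) (t : ℝ) : Fin 4 → ℝ := ![2 * m + 4, 2 * m + 4, 2 * m + 4, t]

/-- The coordinatewise ratios between the margins of `Rbox m η` and those of `Rbox m τ`. -/
def boxRatio (η τ : ℝ) : Fin 4 → ℝ := ![1, 1, 1, τ / η]

variable {m : ℕ} {s s' : ℕ → ℝ} {η τ : ℝ} {x : E4}

lemma mem_Rbox_iff : x ∈ Rbox m η ↔ ∀ i, |x i| ≤ 1 + boxMargin m η i := by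
  have h : 1 + (2 * (m : ℝ) + 4) = 2 * m + 5 := by ring
  simp [Rbox, boxMargin, Fin.forall_fin_succ, h]

lemma boxMargin_nonneg (m : ℕ) (hη : 0 ≤ η) (i : Fin 4) : 0 ≤ boxMargin m η i := by
  have h : 0 ≤ 2 * (m : ℝ) + 4 := by positivity
  fin_cases i <;> simp [boxMargin, h, hη]

lemma boxRatio_pos (hη : 0 < η) (hτ : 0 < τ) (i : Fin 4) : 0 < boxRatio η τ i := by
  fin_cases i <;> simp [boxRatio, hη, hτ]

lemma boxRatio_mul_boxMargin (m : ℕ) (hη : η ≠ 0) (i : Fin 4) :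
    boxRatio η τ i * boxMargin m η i = boxMargin m τ i := by
  fin_cases i <;> simp [boxRatio, boxMargin, hη]

lemma abs_plateNodes_le_boxMargin (m : ℕ) (hη : 0 ≤ η) (i : Fin 4) (t : ℝ) :
    |plateNodes m i t| ≤ boxMargin m η i := by
  have h : |nearestEven m t| ≤ 2 * m + 4 := (abs_nearestEven_le m t).trans (by linarith)
  fin_cases i <;> simp [plateNodes, boxMargin, nearestEven_zero, h, hη]

lemma boxRatio_eq_one_or_plateNodes_eq_zero (m : ℕ) (η τ : ℝ) (i : Fin 4) :
    boxRatio η τ i = 1 ∨ ∀ t, plateNodes m i t = 0 := by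
  fin_cases i <;> simp [boxRatio, plateNodes, nearestEven_zero]

/-- The homeomorphism of `ℝ⁴` carrying the `m`-Cantor plate of scale `s` onto that of scale `s'`
and `Rbox m η` onto `Rbox m τ`: the squeezing map, whose inverse is the stretching map. -/
def plateSqueeze (m : ℕ) (hs : IsCantorScale s) (hs' : IsCantorScale s') (hη : 0 < η)
    (hτ : 0 < τ) : E4 ≃ₜ E4 :=
  squeezeHomeomorph (isNearestNodeMap_plateNodes m) hs hs' (boxRatio_pos hη hτ)

variable (hs : IsCantorScale s) (hs' : IsCantorScale s') (hη : 0 < η) (hτ : 0 < τ)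

lemma bijOn_plateSqueeze_Rbox :
    BijOn (plateSqueeze m hs hs' hη hτ) (Rbox m η) (Rbox m τ) :=
  (plateSqueeze m hs hs' hη hτ).toEquiv.bijOn fun x => by
    simp only [mem_Rbox_iff, ← boxRatio_mul_boxMargin (τ := τ) m hη.ne']
    exact squeezeHomeomorph_mem_box_iff _ hs hs' _ (boxMargin_nonneg m hη.le)
      (abs_plateNodes_le_boxMargin m hη.le)

lemma bijOn_plateSqueeze_cantorPlate :
    BijOn (plateSqueeze m hs hs' hη hτ) (cantorPlate s m) (cantorPlate s' m) :=
  (plateSqueeze m hs hs' hη hτ).toEquiv.bijOn fun x => by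
    rw [mem_cantorPlate_iff hs, mem_cantorPlate_iff hs']
    exact squeezeHomeomorph_mem_nodeCantorSet_iff _ hs hs' _
      (boxRatio_eq_one_or_plateNodes_eq_zero m η τ)

lemma locallyLipschitzOn_plateSqueeze :
    LocallyLipschitzOn (cantorPlate s m)ᶜ (plateSqueeze m hs hs' hη hτ) := by
  rw [cantorPlate_eq_preimage hs]
  exact locallyLipschitzOn_squeezeHomeomorph _ hs hs' _

lemma locallyLipschitzOn_plateSqueeze_symm :
    LocallyLipschitzOn (cantorPlate s' m)ᶜ (plateSqueeze m hs hs' hη hτ).symm := by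
  rw [cantorPlate_eq_preimage hs']
  exact locallyLipschitzOn_squeezeHomeomorph_symm _ hs hs' _
    (boxRatio_eq_one_or_plateNodes_eq_zero m η τ)

lemma locallyBiLipschitzOn_plateSqueeze :
    LocallyBiLipschitzOn (plateSqueeze m hs hs' hη hτ) (cantorPlate s m)ᶜ :=
  locallyBiLipschitzOn_of_leftInvOn (locallyLipschitzOn_plateSqueeze hs hs' hη hτ)
    (locallyLipschitzOn_plateSqueeze_symm hs hs' hη hτ)
    ((bijOn_plateSqueeze_cantorPlate hs hs' hη hτ).compl (Homeomorph.bijective _)).mapsTo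
    fun x _ => Homeomorph.symm_apply_apply _ x

lemma locallyBiLipschitzOn_plateSqueeze_symm :
    LocallyBiLipschitzOn (plateSqueeze m hs hs' hη hτ).symm (cantorPlate s' m)ᶜ :=
  locallyBiLipschitzOn_of_leftInvOn (locallyLipschitzOn_plateSqueeze_symm hs hs' hη hτ)
    (locallyLipschitzOn_plateSqueeze hs hs' hη hτ)
    ((bijOn_plateSqueeze_cantorPlate hs hs' hη hτ).equiv_symm.compl
      (Equiv.bijective _)).mapsTo
    fun x _ => Homeomorph.apply_symm_apply _ x

lemma lipschitzWith_plateSqueeze (hd : Summable (cantorDistortion s s')) {D : ℝ}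
    (hD : ∑' k, cantorDistortion s s' k ≤ D) :
    LipschitzWith (NNReal.sqrt 4 * ((1 + 2 * ‖boxRatio η τ‖₊) * (1 + D).toNNReal))
      (plateSqueeze m hs hs' hη hτ) := by
  refine (lipschitzWith_squeezeHomeomorph _ hs hs' _ hd).weaken ?_
  rw [Fintype.card_fin]
  gcongr
  norm_num

lemma hasFDerivAt_plateSqueeze (hd : Summable (cantorDistortion s s'))
    (hratio : Tendsto (fun k => s' k / s k) atTop (nhds 0)) (hx : x ∈ cantorPlate s m) :
    HasFDerivAt (plateSqueeze m hs hs' hη hτ) (0 : E4 →L[ℝ] E4) x :=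
  hasFDerivAt_squeezeHomeomorph _ hs hs' _ hd hratio ((mem_cantorPlate_iff hs).1 hx)

end PlateSqueeze

lemma LocallyBiLipschitzOn.mono {f : E4 → E4} {S T : Set E4} (hf : LocallyBiLipschitzOn f T)
    (hST : S ⊆ T) : LocallyBiLipschitzOn f S := fun x hx =>
  let ⟨U, hU, hxU, L, hL, h⟩ := hf x (hST hx)
  ⟨U, hU, hxU, L, hL, fun y hy z hz => h y ⟨hy.1, hST hy.2⟩ z ⟨hz.1, hST hz.2⟩⟩

theorem exists_squeeze_and_stretch_general {β₀ τ : ℝ} (hβ₀ : 0 < β₀) (hτ : 0 < τ) :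
    ∃ Lfun : ℕ → ℝ → ℝ → ℝ≥0, ∀ β : ℝ, β₀ ≤ β → ∀ α : ℝ, 0 < α → ∀ (K m : ℕ) (η : ℝ), 0 < η →
      ∃ F : E4 ≃ₜ E4,
        BijOn F (Rbox m η) (Rbox m τ) ∧
        BijOn F (cantorPlate (rA α K) m) (cantorPlate (rB β) m) ∧
        LocallyBiLipschitzOn F (cantorPlate (rA α K) m)ᶜ ∧
        LocallyBiLipschitzOn F.symm (cantorPlate (rB β) m)ᶜ ∧
        LipschitzWith (Lfun K α η) F ∧
        ∀ x ∈ cantorPlate (rA α K) m, HasFDerivAt F (0 : E4 →L[ℝ] E4) x := by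
  refine ⟨fun K α η => NNReal.sqrt 4 * ((1 + 2 * ‖boxRatio η τ‖₊) *
    (1 + ∑' k, distortionBound β₀ K α k).toNNReal), fun β hβ α hα K m η hη => ?_⟩
  have hβ' : 0 < β := hβ₀.trans_le hβ
  have hA := isCantorScale_rA hα K
  have hB := isCantorScale_rB hβ'
  have hd := summable_cantorDistortion_rA_rB hα hβ' K
  exact ⟨plateSqueeze m hA hB hη hτ,
    bijOn_plateSqueeze_Rbox hA hB hη hτ,
    bijOn_plateSqueeze_cantorPlate hA hB hη hτ,
    locallyBiLipschitzOn_plateSqueeze hA hB hη hτ,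
    locallyBiLipschitzOn_plateSqueeze_symm hA hB hη hτ,
    lipschitzWith_plateSqueeze hA hB hη hτ hd (tsum_cantorDistortion_rA_rB_le hα hβ₀ hβ K),
    fun _ => hasFDerivAt_plateSqueeze hA hB hη hτ hd (tendsto_rB_div_rA hα hβ' K)⟩

/-- Existence of the squeezing map `G̃ = G̃_{K,N,m,η} : R_{m,η} → R_{m,13}` and the
stretching map `G = G_{K,N,m,η} : R_{m,13} → R_{m,η}` (homeomorphisms, as continuous
bijections of compact sets) exchanging the Cantor plates `C_{A,K,m}` and `C_{B,m}`,
with `G ∘ G̃ = id` on `∂R_{m,η}` and on `C_{A,K,m}`, locally bi-Lipschitz off the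
plates, `G̃` Lipschitz with constant depending only on `K`, `α`, `η`, and `G̃`
having vanishing differential on `C_{A,K,m}`. -/
theorem exists_squeeze_and_stretch :
    ∃ β₀ : ℝ, 2 < β₀ ∧ ∃ Lfun : ℕ → ℝ → ℝ → ℝ≥0,
      ∀ β : ℝ, β₀ < β → ∀ α : ℝ, 0 < α → ∀ (K N m : ℕ) (η : ℝ), 0 < η →
        ∃ Gt G : E4 → E4,
          Set.BijOn Gt (Rbox m η) (Rbox m 13) ∧ ContinuousOn Gt (Rbox m η) ∧
          Set.BijOn G (Rbox m 13) (Rbox m η) ∧ ContinuousOn G (Rbox m 13) ∧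
          Gt '' cantorPlate (rA α K) m = cantorPlate (rB β) m ∧
          G '' cantorPlate (rB β) m = cantorPlate (rA α K) m ∧
          (∀ x ∈ Rbox m η \ interior (Rbox m η), G (Gt x) = x) ∧
          (∀ x ∈ cantorPlate (rA α K) m, G (Gt x) = x) ∧
          LocallyBiLipschitzOn Gt (Rbox m η \ cantorPlate (rA α K) m) ∧
          LocallyBiLipschitzOn G (Rbox m 13 \ cantorPlate (rB β) m) ∧
          LipschitzOnWith (Lfun K α η) Gt (Rbox m η) ∧
          (∀ x ∈ cantorPlate (rA α K) m, HasFDerivAt Gt (0 : E4 →L[ℝ] E4) x) := by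
  obtain ⟨Lfun, h⟩ := exists_squeeze_and_stretch_general (β₀ := 3) (τ := 13) (by norm_num)
    (by norm_num)
  refine ⟨3, by norm_num, Lfun, fun β hβ α hα K _ m η hη => ?_⟩
  obtain ⟨F, hbox, hplate, hF, hFsymm, hLip, hderiv⟩ := h β hβ.le α hα K m η hη
  exact ⟨F, F.symm, hbox, F.continuous.continuousOn, hbox.equiv_symm,
    F.symm.continuous.continuousOn, hplate.image_eq, hplate.equiv_symm.image_eq,
    fun x _ => F.symm_apply_apply x, fun x _ => F.symm_apply_apply x,
    hF.mono (sdiff_subset_compl _ _), hFsymm.mono (sdiff_subset_compl _ _),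
    hLip.lipschitzOnWith, hderiv⟩
end
end
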